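/- arXiv:1307.5009 — 2 statements merged into one kernel-verified Lean document; each statement's English description precedes it below -/
import Mathlib

section
/- Let ζ_α^{sim}(s;r) = ∑_{i ∈ Σ* : |log p_i / log r_i − α| ≤ r} r_i^s. Then for every α ∈ ℝ, the limit as r ↘ 0 of the abscissa of convergence σ_abs(ζ_α^{sim}(·;r)) exists and equals both the Hausdorff multifractal spectrum f_μ(α) and the coarse multifractal spectrum f_μ^{c}(α), i.e. lim_{r↘0} σ_abs(ζ_α^{sim}(·;r)) = f_μ(α) = f_μ^{c}(α). -/
open MeasureTheory Filter Topology Metric Set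
open scoped ENNReal NNReal Classical

namespace Multifractal

/-- Infinite strings over `{1,…,N}`. -/
abbrev Seq (N : ℕ) := ℕ → Fin N

/-- Finite strings over `{1,…,N}` (the empty string is excluded where appropriate). -/
abbrev Word (N : ℕ) := List (Fin N)

variable {N : ℕ}

/-- The shift map on `Σ^ℕ`. -/
def shift : Seq N → Seq N := fun x n => x (n + 1)

/-- The cylinder `[w]` generated by a finite string `w`. -/
def cylinder (w : Word N) : Set (Seq N) :=
  {x : Seq N | ∀ (k : ℕ) (h : k < w.length), x k = w.get ⟨k, h⟩}

/-- Birkhoff sum `∑_{k<n} φ(S^k x)`. -/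
noncomputable def birkhoff (φ : Seq N → ℝ) (n : ℕ) (x : Seq N) : ℝ :=
  ∑ k ∈ Finset.range n, φ (shift^[k] x)

/-- `s_w = sup_{x ∈ [w]} exp (∑_{k<|w|} Λ(S^k x))`. -/
noncomputable def sWord (Λ : Seq N → ℝ) (w : Word N) : ℝ :=
  sSup ((fun x => Real.exp (birkhoff Λ w.length x)) '' cylinder w)

/-- Bounded distortion (condition (C3)): `exp(S_nΛ(i))/exp(S_nΛ(j)) ∈ [1/c, c]`
whenever `i|n = j|n`.  (By symmetry in `i,j` the one-sided bound suffices.) -/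
def BddDistortion (Λ : Seq N → ℝ) (c : ℝ) : Prop :=
  ∀ (n : ℕ) (i j : Seq N), (∀ k < n, i k = j k) →
    Real.exp (birkhoff Λ n i) ≤ c * Real.exp (birkhoff Λ n j)

/-- The empirical measure `L_n x = (1/n) ∑_{k<n} δ_{S^k x}` (junk value `δ_x` for `n = 0`). -/
noncomputable def emp (n : ℕ) (x : Seq N) : ProbabilityMeasure (Seq N) :=
  if h : n = 0 then ⟨Measure.dirac x, inferInstance⟩
  else
    ⟨(n : ℝ≥0∞)⁻¹ • ∑ k ∈ Finset.range n, Measure.dirac (shift^[k] x), by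
      constructor
      simp only [Measure.smul_apply, Measure.coe_finset_sum, Finset.sum_apply, measure_univ,
        Finset.sum_const, Finset.card_range, nsmul_eq_mul, mul_one, smul_eq_mul]
      exact ENNReal.inv_mul_cancel (Nat.cast_ne_zero.mpr h) (ENNReal.natCast_ne_top n)⟩

/-- Shift invariance of a probability measure. -/
def Invariant (μ : ProbabilityMeasure (Seq N)) : Prop :=
  μ.toMeasure.map shift = μ.toMeasure

/-- `n`-th partition entropy `-∑_{|w|=n} μ[w] log μ[w]`. -/
noncomputable def entropyAux (μ : ProbabilityMeasure (Seq N)) (n : ℕ) : ℝ :=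
  -∑ w : Fin n → Fin N,
      (μ (cylinder (List.ofFn w)) : ℝ) * Real.log (μ (cylinder (List.ofFn w)) : ℝ)

/-- The Kolmogorov–Sinai entropy of a (shift-invariant) measure on the full shift,
via the generating partition into cylinders. -/
noncomputable def entropy (μ : ProbabilityMeasure (Seq N)) : ℝ :=
  Filter.atTop.liminf fun n => entropyAux μ n / n

/-- Abscissa of convergence of the "zeta-function" `s ↦ ∑ a_w^s`, the sum ranging over the
nonempty finite strings satisfying `P`; values in `EReal` (so `⊤` if never summable and `⊥`
if always summable, e.g. for an empty index set). -/
noncomputable def sigmaAbs (a : Word N → ℝ) (P : Word N → Prop) : EReal :=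
  sInf ((fun t : ℝ => (t : EReal)) ''
    {t : ℝ | Summable fun w : {w : Word N // w ≠ [] ∧ P w} => a w.1 ^ t})

variable {X : Type*}

/-- `U(L_{|w|}[w]) ⊆ B`. -/
def inTarget (U : ProbabilityMeasure (Seq N) → X) (B : Set X) (w : Word N) : Prop :=
  ∀ x ∈ cylinder w, U (emp w.length x) ∈ B

/-- The closed `r`-neighbourhood `B(C,r)` of a set. -/
def cball [MetricSpace X] (C : Set X) (r : ℝ) : Set X := {x | infDist x C ≤ r}

/-- The counting function `N_δ^{U,Λ}(C,r)`: number of strings `w` with `s_w ≈ δ` and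
`U(L_{|w|}[w]) ⊆ B(C,r)`. -/
noncomputable def Ncount [MetricSpace X] (Λ : Seq N → ℝ) (U : ProbabilityMeasure (Seq N) → X)
    (C : Set X) (r δ : ℝ) : ℕ :=
  Set.ncard {w : Word N | w ≠ [] ∧ sWord Λ w ≤ δ ∧ δ < sWord Λ w.dropLast ∧
    inTarget U (cball C r) w}

/-- `log m / (-log δ)`, read as `-∞` when `m = 0`. -/
noncomputable def ratioE (m : ℕ) (δ : ℝ) : EReal :=
  if m = 0 then ⊥ else (((Real.log m) / (-Real.log δ) : ℝ) : EReal)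

/-- The `r`-approximate lower coarse multifractal spectrum `f̲^{U,Λ}(C,r)`. -/
noncomputable def coarseLowerR [MetricSpace X] (Λ : Seq N → ℝ)
    (U : ProbabilityMeasure (Seq N) → X) (C : Set X) (r : ℝ) : EReal :=
  Filter.liminf (fun δ : ℝ => ratioE (Ncount Λ U C r δ) δ) (𝓝[>] (0 : ℝ))

/-- The lower coarse multifractal spectrum `f̲^{U,Λ}(C) = lim_{r↘0} f̲^{U,Λ}(C,r)`;
since `f̲^{U,Λ}(C,r)` is nondecreasing in `r`, the limit is the infimum over `r > 0`. -/
noncomputable def coarseLower [MetricSpace X] (Λ : Seq N → ℝ)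
    (U : ProbabilityMeasure (Seq N) → X) (C : Set X) : EReal :=
  ⨅ (r : ℝ) (_ : 0 < r), coarseLowerR Λ U C r

/-- The variational quantity `sup { -h(μ)/∫Λ dμ : μ shift-invariant, Uμ ∈ C }`. -/
noncomputable def varSup (Λ : Seq N → ℝ) (U : ProbabilityMeasure (Seq N) → X)
    (C : Set X) : EReal :=
  sSup {x : EReal | ∃ μ : ProbabilityMeasure (Seq N), Invariant μ ∧ U μ ∈ C ∧
    x = ((-(entropy μ) / ∫ y, Λ y ∂μ.toMeasure : ℝ) : EReal)}

end Multifractal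

namespace Multifractal

/-- Euclidean space `ℝ^d`. -/
abbrev Euc (d : ℕ) := EuclideanSpace ℝ (Fin d)

/-- The topological support of a measure: points all of whose neighbourhoods have
positive measure. -/
noncomputable def suppSet {d : ℕ} (μ : ProbabilityMeasure (Euc d)) : Set (Euc d) :=
  {x | ∀ ε : ℝ, 0 < ε → 0 < μ (Metric.ball x ε)}

/-- `log μ(B(x,ρ)) / log ρ`. -/
noncomputable def localDimAt {d : ℕ} (μ : ProbabilityMeasure (Euc d)) (x : Euc d) (ρ : ℝ) : ℝ :=
  Real.log (μ (Metric.closedBall x ρ) : ℝ) / Real.log ρ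

/-- Hausdorff dimension with the convention `dim_H ∅ = -∞`. -/
noncomputable def dimHE {α : Type*} [EMetricSpace α] (E : Set α) : EReal :=
  if E = ∅ then ⊥ else ((dimH E : ℝ≥0∞) : EReal)

/-- The Hausdorff multifractal spectrum
`f_μ(α) = dim_H {x ∈ supp μ : lim_{ρ↘0} log μ(B(x,ρ))/log ρ = α}` (with `dim_H ∅ = -∞`). -/
noncomputable def fHaus {d : ℕ} (μ : ProbabilityMeasure (Euc d)) (α : ℝ) : EReal :=
  dimHE {x | x ∈ suppSet μ ∧
    Filter.Tendsto (localDimAt μ x) (nhdsWithin 0 (Set.Ioi 0)) (nhds α)}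

/-- The packing-counting function `N_{μ,δ}(α;r)`: the largest cardinality of a finite family
of pairwise disjoint balls `B(x_j,δ)` centred in `supp μ` with
`α - r ≤ log μ(B(x_j,δ))/log δ ≤ α + r`. -/
noncomputable def packCount {d : ℕ} (μ : ProbabilityMeasure (Euc d)) (α r δ : ℝ) : ℕ :=
  sSup {n : ℕ | ∃ cf : Fin n → Euc d, (∀ j, cf j ∈ suppSet μ) ∧
    (∀ j k, j ≠ k → Disjoint (Metric.closedBall (cf j) δ) (Metric.closedBall (cf k) δ)) ∧
    (∀ j, α - r ≤ localDimAt μ (cf j) δ ∧ localDimAt μ (cf j) δ ≤ α + r)}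

/-- The coarse multifractal spectrum
`f_μ^c(α) = lim_{r↘0} liminf_{δ↘0} log N_{μ,δ}(α;r)/(-log δ)`; since the inner quantity is
nondecreasing in `r`, the limit is the infimum over `r > 0`. -/
noncomputable def fCoarse {d : ℕ} (μ : ProbabilityMeasure (Euc d)) (α : ℝ) : EReal :=
  ⨅ (r : ℝ) (_ : 0 < r),
    Filter.liminf (fun δ : ℝ => ratioE (packCount μ α r δ) δ) (nhdsWithin 0 (Set.Ioi 0))

end Multifractal

/-!
For `t, θ : ℝ` put `F(θ, t) = ∑ᵢ pᵢ ^ θ * rᵢ ^ (t - α * θ)`.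

If `F(θ, t) < 1` for some `θ`, then `∑_w p_w ^ θ * r_w ^ (t - α * θ)` converges. Since
`p_w ^ θ * r_w ^ (-α * θ) ≥ r_w ^ (|θ| * ε)` when `|log p_w / log r_w - α| ≤ ε`, this bounds the
abscissa of convergence by `t` in the limit, and likewise `f_μ^c(α) ≤ t`, because every ball
counted there contains the cylinder of a word of comparable measure and diameter.

Otherwise, minimising `F(·, t)` produces Gibbs weights, and hence a probability vector `q` with
`∑ qᵢ (-log pᵢ) = α ∑ qᵢ (-log rᵢ)` and `t ∑ qᵢ (-log rᵢ) ≤ ∑ qᵢ (-log qᵢ)`. Words that are typical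
for the Bernoulli measure of `q` make the zeta series diverge below `t`. Moreover `t ≤ f_μ(α)` by
the mass distribution principle: in a typical sequence write at every square position a marker, a
word `u` with the largest possible number of neighbouring cylinders. By maximality, a ball around
the resulting point at the scale of a marked position meets only one cylinder, and since the marked
positions have density zero and `(k + 1) ^ 2 / k ^ 2 → 1`, all averages are unaffected.

As `f_μ ≤ f_μ^c`, this dichotomy over all real `t` identifies the three quantities.
-/

namespace Multifractal

section Words

variable {ι X : Type*}

/-- The word `j₀ ⋯ jₙ₋₁` formed by the first `n` letters of a sequence. -/
def prefixWord (j : ℕ → ι) (n : ℕ) : List ι := (List.range n).map j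

/-- The multiplicative weight `a_w = a_{w₁} ⋯ a_{wₙ}` of a word. -/
def wordProd (a : ι → ℝ) (w : List ι) : ℝ := (w.map a).prod

/-- The composition `S_w = S_{w₁} ∘ ⋯ ∘ S_{wₙ}` along a word. -/
def wordMap (S : ι → X → X) (w : List ι) (x : X) : X := w.foldr S x

@[simp] lemma wordMap_nil (S : ι → X → X) (x : X) : wordMap S [] x = x := rfl

@[simp] lemma wordMap_cons (S : ι → X → X) (i : ι) (w : List ι) (x : X) :
    wordMap S (i :: w) x = S i (wordMap S w x) := rfl

lemma wordMap_append (S : ι → X → X) (v w : List ι) (x : X) :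
    wordMap S (v ++ w) x = wordMap S v (wordMap S w x) := List.foldr_append

@[simp] lemma wordProd_nil (a : ι → ℝ) : wordProd a [] = 1 := rfl

@[simp] lemma wordProd_cons (a : ι → ℝ) (i : ι) (w : List ι) :
    wordProd a (i :: w) = a i * wordProd a w := by simp [wordProd]

lemma wordProd_append (a : ι → ℝ) (v w : List ι) :
    wordProd a (v ++ w) = wordProd a v * wordProd a w := by simp [wordProd]

lemma wordProd_nonneg {a : ι → ℝ} (ha : ∀ i, 0 ≤ a i) (w : List ι) : 0 ≤ wordProd a w :=
  List.prod_nonneg (by simpa using fun i _ => ha i)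

lemma wordProd_pos {a : ι → ℝ} (ha : ∀ i, 0 < a i) (w : List ι) : 0 < wordProd a w :=
  List.prod_pos (by simpa using fun i _ => ha i)

lemma wordProd_mul_rpow {a b : ι → ℝ} (ha : ∀ i, 0 ≤ a i) (hb : ∀ i, 0 ≤ b i) (s t : ℝ)
    (w : List ι) :
    wordProd (fun i => a i ^ s * b i ^ t) w = wordProd a w ^ s * wordProd b w ^ t := by
  induction w with
  | nil => simp
  | cons i w ih =>
    rw [wordProd_cons, wordProd_cons, wordProd_cons, ih,
      Real.mul_rpow (ha i) (wordProd_nonneg ha w), Real.mul_rpow (hb i) (wordProd_nonneg hb w)]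
    ring

@[simp] lemma length_prefixWord (j : ℕ → ι) (n : ℕ) : (prefixWord j n).length = n := by
  simp [prefixWord]

@[simp] lemma prefixWord_zero (j : ℕ → ι) : prefixWord j 0 = [] := rfl

lemma prefixWord_succ (j : ℕ → ι) (n : ℕ) : prefixWord j (n + 1) = prefixWord j n ++ [j n] := by
  simp [prefixWord, List.range_succ]

lemma prefixWord_add (j : ℕ → ι) (n m : ℕ) :
    prefixWord j (n + m) = prefixWord j n ++ prefixWord (fun k => j (n + k)) m := by
  simp [prefixWord, List.range_add, Function.comp_def]

lemma prefixWord_eq_iff {i j : ℕ → ι} {n : ℕ} :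
    prefixWord i n = prefixWord j n ↔ ∀ k < n, i k = j k := by
  simp [prefixWord]

lemma prefixWord_eq_ofFn (j : ℕ → ι) (n : ℕ) : prefixWord j n = List.ofFn fun k : Fin n => j k :=
  List.ext_getElem (by simp) fun k _ _ => by simp [prefixWord]

lemma exists_prefixWord_eq [Nonempty ι] (w : List ι) : ∃ j, prefixWord j w.length = w :=
  ⟨fun n => w.getD n (Classical.arbitrary ι), by simp [prefixWord_eq_ofFn]⟩

lemma prefixWord_eq_of_prefix {j : ℕ → ι} {w : List ι} {n : ℕ} (h : w <+: prefixWord j n) :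
    prefixWord j w.length = w := by
  obtain ⟨m, rfl⟩ := Nat.exists_eq_add_of_le (by simpa using h.length_le : w.length ≤ n)
  rw [prefixWord_add] at h
  exact ((List.prefix_of_prefix_length_le h (List.prefix_append _ _) (by simp)).eq_of_length
    (by simp)).symm

lemma log_wordProd {a : ι → ℝ} {w : List ι} (ha : ∀ i ∈ w, a i ≠ 0) :
    Real.log (wordProd a w) = (w.map fun i => Real.log (a i)).sum := by
  rw [wordProd, Real.log_list_prod (by simpa using ha), List.map_map, Function.comp_def]

end Words

section Similarities

variable {ι X : Type*}

section Metric

variable [MetricSpace X] {S : ι → X → X} {r : ι → ℝ}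

lemma dist_wordMap (hS : ∀ i x y, dist (S i x) (S i y) = r i * dist x y) (w : List ι) (x y : X) :
    dist (wordMap S w x) (wordMap S w y) = wordProd r w * dist x y := by
  induction w with
  | nil => simp
  | cons i w ih => simp [hS, ih, mul_assoc]

lemma injective_of_dist_eq_mul {f : X → X} {c : ℝ} (hc : c ≠ 0)
    (hf : ∀ x y, dist (f x) (f y) = c * dist x y) : Function.Injective f := fun x y h =>
  dist_eq_zero.1 <| (mul_eq_zero.1 <| by rw [← hf, h, dist_self]).resolve_left hc

end Metric

lemma wordMap_mem {S : ι → X → X} {O : Set X} (hO : ∀ i, S i '' O ⊆ O) (w : List ι) {x : X}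
    (hx : x ∈ O) : wordMap S w x ∈ O := by
  induction w with
  | nil => exact hx
  | cons i w ih => exact hO i ⟨_, ih, rfl⟩

lemma wordMap_ne {S : ι → X → X} {O : Set X} (hinj : ∀ i, Function.Injective (S i))
    (hO : ∀ i, S i '' O ⊆ O) (hdisj : ∀ i j, i ≠ j → Disjoint (S i '' O) (S j '' O)) {x y : X}
    (hx : x ∈ O) (hy : y ∈ O) {v w : List ι} (hvw : ¬ v <+: w) (hwv : ¬ w <+: v) :
    wordMap S v x ≠ wordMap S w y := by
  induction v generalizing w with
  | nil => simp at hvw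
  | cons i v ih =>
    cases w with
    | nil => simp at hwv
    | cons j w =>
      intro h
      obtain rfl | hij := eq_or_ne i j
      · exact ih (by simpa using hvw) (by simpa using hwv) (hinj i h)
      · exact Set.disjoint_left.1 (hdisj i j hij) ⟨_, wordMap_mem hO v hx, rfl⟩
          ⟨_, wordMap_mem hO w hy, h.symm⟩

section Normed

variable {E : Type*} [NormedAddCommGroup E] [NormedSpace ℝ E]

lemma surjective_of_dist_eq_mul [StrictConvexSpace ℝ E] [FiniteDimensional ℝ E] {f : E → E} {c : ℝ}
    (hc : 0 < c) (hf : ∀ x y, dist (f x) (f y) = c * dist x y) : Function.Surjective f := by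
  have hiso : Isometry fun x => c⁻¹ • f x := Isometry.of_dist_eq fun x y => by
    rw [dist_smul₀, hf, Real.norm_of_nonneg (inv_nonneg.2 hc.le), inv_mul_cancel_left₀ hc.ne']
  intro y
  have : Inhabited E := ⟨0⟩
  obtain ⟨x, hx⟩ :=
    (hiso.affineIsometryOfStrictConvexSpace.toAffineIsometryEquiv rfl).surjective (c⁻¹ • y)
  exact ⟨x, smul_right_injective _ (inv_ne_zero hc.ne') hx⟩

lemma exists_card_le_of_separated [ProperSpace E] {c : ℝ} (hc : 0 < c) (C : ℝ) :
    ∃ M : ℕ, ∀ {ι : Type*} (s : Finset ι) (f : ι → E) (x : E) (δ : ℝ), 0 < δ →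
      (∀ i ∈ s, dist (f i) x ≤ C * δ) →
      (∀ i ∈ s, ∀ j ∈ s, i ≠ j → c * δ ≤ dist (f i) (f j)) → s.card ≤ M := by
  obtain ⟨t, htfin, hcover⟩ := Metric.totallyBounded_iff.1
    (isCompact_closedBall (0 : E) C).totallyBounded (c / 2) (half_pos hc)
  refine ⟨htfin.toFinset.card, fun {ι} s f x δ hδ hclose hsep => ?_⟩
  have hnear : ∀ i ∈ s, ∃ y ∈ t, dist (δ⁻¹ • (f i - x)) y < c / 2 := by
    intro i hi
    have hmem : δ⁻¹ • (f i - x) ∈ closedBall (0 : E) C := by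
      rw [mem_closedBall_zero_iff, norm_smul, Real.norm_of_nonneg (by positivity),
        ← dist_eq_norm, inv_mul_le_iff₀ hδ, mul_comm]
      exact hclose i hi
    simpa using hcover hmem
  choose! g hg hgdist using hnear
  refine Finset.card_le_card_of_injOn g (fun i hi => by simpa using hg i hi) ?_
  intro i hi j hj hij
  by_contra hne
  have hlt : dist (δ⁻¹ • (f i - x)) (δ⁻¹ • (f j - x)) < c := by
    calc dist (δ⁻¹ • (f i - x)) (δ⁻¹ • (f j - x))
        ≤ dist (δ⁻¹ • (f i - x)) (g i) + dist (δ⁻¹ • (f j - x)) (g j) :=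
          hij ▸ dist_triangle_right _ _ _
      _ < c / 2 + c / 2 := add_lt_add (hgdist i hi) (hgdist j hj)
      _ = c := add_halves c
  rw [dist_smul₀, dist_sub_right, Real.norm_of_nonneg (by positivity), inv_mul_lt_iff₀ hδ,
    mul_comm] at hlt
  exact (hsep i hi j hj hne).not_gt hlt

end Normed

end Similarities

/-- A system of contracting similarities `S i` of ratio `r i` together with the constants through
which the open set condition is used: a base point whose images under incomparable words are
separated proportionally to the contraction ratio, and a closed ball around it mapped into
itself. -/
structure SeparatedIFS {ι X : Type*} [MetricSpace X] (S : ι → X → X) (r : ι → ℝ) where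
  base : X
  radius : ℝ
  gap : ℝ
  minRatio : ℝ
  maxRatio : ℝ
  dist_map : ∀ i x y, dist (S i x) (S i y) = r i * dist x y
  minRatio_pos : 0 < minRatio
  minRatio_le : ∀ i, minRatio ≤ r i
  le_maxRatio : ∀ i, r i ≤ maxRatio
  maxRatio_lt_one : maxRatio < 1
  one_le_radius : 1 ≤ radius
  dist_map_base_le : ∀ i, dist (S i base) base + maxRatio * radius ≤ radius
  gap_pos : 0 < gap
  gap_mul_wordProd_le : ∀ v w : List ι, ¬ v <+: w → ¬ w <+: v →
    gap * wordProd r v ≤ dist (wordMap S v base) (wordMap S w base)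

lemma gap_mul_wordProd_le_dist {ι E : Type*} [NormedAddCommGroup E] [NormedSpace ℝ E]
    [StrictConvexSpace ℝ E] [FiniteDimensional ℝ E] {S : ι → E → E} {r : ι → ℝ}
    (hr : ∀ i, 0 < r i) (hS : ∀ i x y, dist (S i x) (S i y) = r i * dist x y) {O : Set E}
    (hsub : ∀ i, S i '' O ⊆ O) (hdisj : ∀ i j, i ≠ j → Disjoint (S i '' O) (S j '' O)) {a : E}
    {c : ℝ} (hc : 0 < c) (hball : ball a c ⊆ O) {v w : List ι} (hvw : ¬ v <+: w)
    (hwv : ¬ w <+: v) : c * wordProd r v ≤ dist (wordMap S v a) (wordMap S w a) := by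
  by_contra! hlt
  have hinj i : Function.Injective (S i) := injective_of_dist_eq_mul (hr i).ne' (hS i)
  obtain ⟨y, hy⟩ := surjective_of_dist_eq_mul (wordProd_pos hr v) (dist_wordMap hS v)
    (wordMap S w a)
  have hyO : y ∈ O := by
    rw [← hy, dist_wordMap hS, mul_comm] at hlt
    exact hball (mem_ball'.2 (lt_of_mul_lt_mul_right hlt (wordProd_pos hr v).le))
  exact wordMap_ne hinj hsub hdisj hyO (hball (mem_ball_self hc)) hvw hwv hy

lemma nonempty_separatedIFS {ι E : Type*} [Finite ι] [Nonempty ι] [NormedAddCommGroup E]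
    [NormedSpace ℝ E] [StrictConvexSpace ℝ E] [FiniteDimensional ℝ E] {S : ι → E → E} {r : ι → ℝ}
    (hr : ∀ i, r i ∈ Set.Ioo (0 : ℝ) 1) (hS : ∀ i x y, dist (S i x) (S i y) = r i * dist x y)
    {O : Set E} (hO : IsOpen O) (hne : O.Nonempty) (hsub : ∀ i, S i '' O ⊆ O)
    (hdisj : ∀ i j, i ≠ j → Disjoint (S i '' O) (S j '' O)) : Nonempty (SeparatedIFS S r) := by
  obtain ⟨a, ha⟩ := hne
  obtain ⟨c, hc, hball⟩ := Metric.isOpen_iff.1 hO a ha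
  obtain ⟨iMin, hMin⟩ := Finite.exists_min r
  obtain ⟨iMax, hMax⟩ := Finite.exists_max r
  obtain ⟨iFar, hFar⟩ := Finite.exists_max fun i => dist (S i a) a
  refine ⟨⟨a, max 1 (dist (S iFar a) a / (1 - r iMax)), c, r iMin, r iMax, hS, (hr iMin).1, hMin,
    hMax, (hr iMax).2, le_max_left _ _, fun i => ?_, hc, fun v w hvw hwv =>
    gap_mul_wordProd_le_dist (fun i => (hr i).1) hS hsub hdisj hc hball hvw hwv⟩⟩
  have hR := le_max_right 1 (dist (S iFar a) a / (1 - r iMax))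
  rw [div_le_iff₀ (sub_pos.2 (hr iMax).2)] at hR
  linarith [hFar i]

/-- The cut set of words at scale `δ`: those whose contraction ratio first drops to `δ` or below
with their last letter. -/
def stoppingWords {ι : Type*} (r : ι → ℝ) (δ : ℝ) : Set (List ι) :=
  {v | v ≠ [] ∧ wordProd r v ≤ δ ∧ δ < wordProd r v.dropLast}

namespace SeparatedIFS

variable {ι X : Type*} [MetricSpace X] {S : ι → X → X} {r : ι → ℝ} (h : SeparatedIFS S r)
include h

section Ratios

lemma ratio_pos (i : ι) : 0 < r i := h.minRatio_pos.trans_le (h.minRatio_le i)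

lemma ratio_lt_one (i : ι) : r i < 1 := (h.le_maxRatio i).trans_lt h.maxRatio_lt_one

lemma minRatio_le_one [Nonempty ι] : h.minRatio ≤ 1 :=
  (h.minRatio_le (Classical.arbitrary ι)).trans (h.ratio_lt_one _).le

lemma radius_pos : 0 < h.radius := one_pos.trans_le h.one_le_radius

lemma maxRatio_pos [Nonempty ι] : 0 < h.maxRatio :=
  (h.ratio_pos (Classical.arbitrary ι)).trans_le (h.le_maxRatio _)

lemma wordProd_ratio_pos (w : List ι) : 0 < wordProd r w := wordProd_pos h.ratio_pos w

lemma wordProd_ratio_le_pow [Nonempty ι] (w : List ι) :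
    wordProd r w ≤ h.maxRatio ^ w.length := by
  induction w with
  | nil => simp
  | cons i w ih =>
    rw [wordProd_cons, List.length_cons, pow_succ']
    exact mul_le_mul (h.le_maxRatio i) ih (h.wordProd_ratio_pos w).le h.maxRatio_pos.le

lemma wordProd_ratio_le_one (w : List ι) : wordProd r w ≤ 1 := by
  induction w with
  | nil => simp
  | cons i w ih =>
    rw [wordProd_cons]
    exact mul_le_one₀ (h.ratio_lt_one i).le (h.wordProd_ratio_pos w).le ih

lemma wordProd_ratio_lt_one {w : List ι} (hw : w ≠ []) : wordProd r w < 1 := by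
  cases w with
  | nil => exact absurd rfl hw
  | cons i w =>
    rw [wordProd_cons]
    exact (mul_le_of_le_one_right (h.ratio_pos i).le (h.wordProd_ratio_le_one w)).trans_lt
      (h.ratio_lt_one i)

lemma tendsto_maxRatio_pow [Nonempty ι] : Tendsto (fun n : ℕ => h.maxRatio ^ n) atTop (𝓝 0) :=
  tendsto_pow_atTop_nhds_zero_of_lt_one h.maxRatio_pos.le h.maxRatio_lt_one

end Ratios

section StoppingWords

variable {δ : ℝ} {v w : List ι}

lemma exists_prefixWord_mem_stoppingWords (j : ℕ → ι) (hδ : 0 < δ) (hδ1 : δ < 1) :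
    ∃ n, prefixWord j n ∈ stoppingWords r δ := by
  have : Nonempty ι := ⟨j 0⟩
  have hex : ∃ n, wordProd r (prefixWord j n) ≤ δ := by
    obtain ⟨n, hn⟩ := (h.tendsto_maxRatio_pow.eventually (gt_mem_nhds hδ)).exists
    exact ⟨n, (h.wordProd_ratio_le_pow _).trans (by simpa using hn.le)⟩
  obtain ⟨m, hm⟩ : ∃ m, Nat.find hex = m + 1 := by
    refine Nat.exists_eq_succ_of_ne_zero fun h0 => ?_
    have hspec := Nat.find_spec hex
    rw [h0, prefixWord_zero, wordProd_nil] at hspec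
    exact hspec.not_gt hδ1
  refine ⟨m + 1, by simp [prefixWord_succ], hm ▸ Nat.find_spec hex, ?_⟩
  rw [prefixWord_succ, List.dropLast_concat]
  exact not_le.1 (Nat.find_min hex (m := m) (by omega))

lemma minRatio_mul_le_wordProd (hv : v ∈ stoppingWords r δ) :
    h.minRatio * δ ≤ wordProd r v := by
  obtain ⟨hne, hle, hlt⟩ := hv
  conv_rhs => rw [← List.dropLast_append_getLast hne, wordProd_append, wordProd_cons,
    wordProd_nil, mul_one, mul_comm]
  exact mul_le_mul (h.minRatio_le _) hlt.le ((h.wordProd_ratio_pos v).le.trans hle)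
    (h.ratio_pos _).le

lemma not_prefix_of_mem_stoppingWords (hv : v ∈ stoppingWords r δ) (hw : w ∈ stoppingWords r δ)
    (hvw : v ≠ w) : ¬ v <+: w := by
  rintro ⟨s, rfl⟩
  have hs : s ≠ [] := by
    rintro rfl
    simp at hvw
  have hlt := hw.2.2
  rw [List.dropLast_append_of_ne_nil hs, wordProd_append] at hlt
  have hle := mul_le_of_le_one_right (h.wordProd_ratio_pos v).le
    (h.wordProd_ratio_le_one s.dropLast)
  linarith [hv.2.1]

lemma mul_le_dist_of_mem_stoppingWords (hv : v ∈ stoppingWords r δ) (hw : w ∈ stoppingWords r δ)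
    (hvw : v ≠ w) : h.gap * h.minRatio * δ ≤ dist (wordMap S v h.base) (wordMap S w h.base) :=
  calc h.gap * h.minRatio * δ = h.gap * (h.minRatio * δ) := mul_assoc _ _ _
    _ ≤ h.gap * wordProd r v :=
      mul_le_mul_of_nonneg_left (h.minRatio_mul_le_wordProd hv) h.gap_pos.le
    _ ≤ dist (wordMap S v h.base) (wordMap S w h.base) :=
      h.gap_mul_wordProd_le v w (h.not_prefix_of_mem_stoppingWords hv hw hvw)
        (h.not_prefix_of_mem_stoppingWords hw hv hvw.symm)

end StoppingWords

section Code

lemma dist_map_le_radius (i : ι) {x : X} (hx : dist x h.base ≤ h.radius) :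
    dist (S i x) h.base ≤ h.radius :=
  calc dist (S i x) h.base ≤ dist (S i x) (S i h.base) + dist (S i h.base) h.base :=
        dist_triangle _ _ _
    _ ≤ h.maxRatio * h.radius + dist (S i h.base) h.base := by
        rw [h.dist_map]
        gcongr
        · exact (h.ratio_pos i).le.trans (h.le_maxRatio i)
        · exact h.le_maxRatio i
    _ ≤ h.radius := by linarith [h.dist_map_base_le i]

lemma dist_wordMap_base_le (w : List ι) : dist (wordMap S w h.base) h.base ≤ h.radius := by
  induction w with
  | nil => simpa using h.radius_pos.le
  | cons i w ih => exact h.dist_map_le_radius i ih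

lemma dist_wordMap_prefixWord_le (j : ℕ → ι) {n m : ℕ} (hnm : n ≤ m) :
    dist (wordMap S (prefixWord j m) h.base) (wordMap S (prefixWord j n) h.base) ≤
      h.radius * wordProd r (prefixWord j n) := by
  obtain ⟨k, rfl⟩ := Nat.exists_eq_add_of_le hnm
  rw [prefixWord_add, wordMap_append, dist_wordMap h.dist_map, mul_comm]
  exact mul_le_mul_of_nonneg_right (h.dist_wordMap_base_le _) (h.wordProd_ratio_pos _).le

omit h in
/-- The code map of the system: the limit of `S_{j₀} ∘ ⋯ ∘ S_{jₙ₋₁}` at the base point. -/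
noncomputable def code (h : SeparatedIFS S r) (j : ℕ → ι) : X :=
  haveI : Nonempty X := ⟨h.base⟩
  limUnder atTop fun n => wordMap S (prefixWord j n) h.base

variable [CompleteSpace X]

lemma tendsto_code (j : ℕ → ι) :
    Tendsto (fun n => wordMap S (prefixWord j n) h.base) atTop (𝓝 (h.code j)) := by
  have : Nonempty ι := ⟨j 0⟩
  have hcauchy : CauchySeq fun n => wordMap S (prefixWord j n) h.base := by
    refine cauchySeq_of_le_tendsto_0' (fun n => h.radius * h.maxRatio ^ n) (fun n m hnm => ?_)
      (by simpa using h.tendsto_maxRatio_pow.const_mul h.radius)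
    calc dist (wordMap S (prefixWord j n) h.base) (wordMap S (prefixWord j m) h.base)
        ≤ h.radius * wordProd r (prefixWord j n) := by
          rw [dist_comm]
          exact h.dist_wordMap_prefixWord_le j hnm
      _ ≤ h.radius * h.maxRatio ^ n := by
          have := h.wordProd_ratio_le_pow (prefixWord j n)
          rw [length_prefixWord] at this
          exact mul_le_mul_of_nonneg_left this h.radius_pos.le
  exact hcauchy.tendsto_limUnder

lemma dist_code_le (j : ℕ → ι) (n : ℕ) :
    dist (h.code j) (wordMap S (prefixWord j n) h.base) ≤
      h.radius * wordProd r (prefixWord j n) :=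
  le_of_tendsto ((h.tendsto_code j).dist tendsto_const_nhds)
    (eventually_atTop.2 ⟨n, fun _ hm => h.dist_wordMap_prefixWord_le j hm⟩)

end Code

section Marker

omit h in
/-- The words of the cut set at the scale `r_u` whose cylinders may meet the ball of radius `r_u`
around a point of the cylinder of `u`. -/
def neighbours (h : SeparatedIFS S r) (u : List ι) : Set (List ι) :=
  {v | v ∈ stoppingWords r (wordProd r u) ∧
    dist (wordMap S v h.base) (wordMap S u h.base) ≤ (2 * h.radius + 1) * wordProd r u}

lemma append_mem_neighbours (w : List ι) {u v : List ι} (hv : v ∈ h.neighbours u) :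
    w ++ v ∈ h.neighbours (w ++ u) := by
  obtain ⟨⟨hne, hle, hlt⟩, hdist⟩ := hv
  have hw := h.wordProd_ratio_pos w
  refine ⟨⟨by simp [hne], ?_, ?_⟩, ?_⟩
  · rw [wordProd_append, wordProd_append]
    exact mul_le_mul_of_nonneg_left hle hw.le
  · rw [wordProd_append, List.dropLast_append_of_ne_nil hne, wordProd_append]
    exact mul_lt_mul_of_pos_left hlt hw
  · rw [wordMap_append, wordMap_append, dist_wordMap h.dist_map, wordProd_append, mul_left_comm]
    exact mul_le_mul_of_nonneg_left hdist hw.le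

lemma prefixWord_mem_neighbours [CompleteSpace X] {y z : ℕ → ι} {m n : ℕ}
    (hz : prefixWord z m ∈ stoppingWords r (wordProd r (prefixWord y n)))
    (hdist : dist (h.code z) (h.code y) ≤ wordProd r (prefixWord y n)) :
    prefixWord z m ∈ h.neighbours (prefixWord y n) := by
  refine ⟨hz, ?_⟩
  have hzm := h.dist_code_le z m
  rw [dist_comm] at hzm
  linarith [h.dist_code_le y n, mul_le_mul_of_nonneg_left hz.2.1 h.radius_pos.le,
    dist_triangle4 (wordMap S (prefixWord z m) h.base) (h.code z) (h.code y)
      (wordMap S (prefixWord y n) h.base)]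

omit h in
/-- A word is a marker if a point whose code reads `u` after its first `n` letters sees, at the
scale of the cylinder of its first `n + |u|` letters, only the cylinder of its first `n` letters. -/
def IsMarker (h : SeparatedIFS S r) (u : List ι) : Prop :=
  ∀ (y z : ℕ → ι) (n : ℕ), prefixWord y (n + u.length) = prefixWord y n ++ u →
    dist (h.code z) (h.code y) ≤ wordProd r (prefixWord y n) * wordProd r u →
    prefixWord z n = prefixWord y n

end Marker

end SeparatedIFS

namespace SeparatedIFS

variable {ι E : Type*} [NormedAddCommGroup E] [NormedSpace ℝ E] [ProperSpace E]
  {S : ι → E → E} {r : ι → ℝ} (h : SeparatedIFS S r)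
include h

lemma exists_encard_stoppingWords_le (C : ℝ) : ∃ M : ℕ, ∀ (δ : ℝ) (x : E), 0 < δ →
    {v | v ∈ stoppingWords r δ ∧ dist (wordMap S v h.base) x ≤ C * δ}.encard ≤ M := by
  obtain ⟨M, hM⟩ := exists_card_le_of_separated (E := E) (mul_pos h.gap_pos h.minRatio_pos) C
  refine ⟨M, fun δ x hδ => ?_⟩
  by_contra! hlt
  obtain ⟨t, ht, hcard⟩ := Set.exists_subset_encard_eq (Order.add_one_le_of_lt hlt)
  have htfin : t.Finite := Set.finite_of_encard_eq_coe (k := M + 1) (by exact_mod_cast hcard)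
  have hle : htfin.toFinset.card ≤ M :=
    hM htfin.toFinset (fun v => wordMap S v h.base) x δ hδ
      (fun v hv => (ht (by simpa using hv)).2) fun v hv w hw hvw =>
      h.mul_le_dist_of_mem_stoppingWords (ht (by simpa using hv)).1 (ht (by simpa using hw)).1 hvw
  rw [htfin.encard_eq_coe_toFinset_card] at hcard
  have : htfin.toFinset.card = M + 1 := by exact_mod_cast hcard
  omega

lemma exists_ncard_neighbours_max [Nonempty ι] : ∃ u : List ι, u ≠ [] ∧ ∀ w, w ≠ [] →
    (h.neighbours w).Finite ∧ (h.neighbours w).ncard ≤ (h.neighbours u).ncard := by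
  obtain ⟨M, hM⟩ := h.exists_encard_stoppingWords_le (2 * h.radius + 1)
  have hle w : (h.neighbours w).encard ≤ M := hM _ _ (h.wordProd_ratio_pos w)
  have hfin w : (h.neighbours w).Finite := Set.finite_of_encard_le_coe (hle w)
  have hbdd : BddAbove ((fun u => (h.neighbours u).ncard) '' {u | u ≠ []}) := by
    refine ⟨M, ?_⟩
    rintro _ ⟨u, -, rfl⟩
    exact_mod_cast (hfin u).cast_ncard_eq.trans_le (hle u)
  obtain ⟨u, hu, hmax⟩ := Nat.sSup_mem (s := (fun u => (h.neighbours u).ncard) '' {u | u ≠ []})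
    ⟨_, [Classical.arbitrary ι], by simp, rfl⟩ hbdd
  exact ⟨u, hu, fun w hw => ⟨hfin w, (le_csSup hbdd ⟨w, hw, rfl⟩).trans_eq hmax.symm⟩⟩

-- If `u` has the largest number of neighbours, then every neighbour of `w ++ u` is of the form
-- `w ++ v` with `v` a neighbour of `u`, and so begins with `w`.
lemma exists_isMarker [Nonempty ι] : ∃ u, h.IsMarker u := by
  obtain ⟨u, hu, hmax⟩ := h.exists_ncard_neighbours_max
  have himage w : (w ++ ·) '' h.neighbours u = h.neighbours (w ++ u) := by
    obtain ⟨hfin, hle⟩ := hmax (w ++ u) (by simp [hu])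
    refine Set.eq_of_subset_of_ncard_le
      (Set.image_subset_iff.2 fun v hv => h.append_mem_neighbours w hv) ?_ hfin
    rwa [Set.ncard_image_of_injective _ (List.append_right_injective w)]
  refine ⟨u, fun y z n hy hdist => ?_⟩
  rw [← wordProd_append, ← hy] at hdist
  obtain ⟨m, hm⟩ := h.exists_prefixWord_mem_stoppingWords z
    (h.wordProd_ratio_pos (prefixWord y (n + u.length)))
    (h.wordProd_ratio_lt_one (by simp [hy, hu]))
  have hmem := h.prefixWord_mem_neighbours hm hdist
  rw [hy, ← himage] at hmem
  obtain ⟨v, -, hv⟩ := hmem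
  simpa using prefixWord_eq_of_prefix (j := z) (w := prefixWord y n) (n := m) ⟨v, hv⟩

end SeparatedIFS

section Bernoulli

variable {ι : Type*} [Fintype ι]

lemma nonempty_of_stdSimplex (q : stdSimplex ℝ ι) : Nonempty ι := by
  by_contra hempty
  have := not_nonempty_iff.1 hempty
  simpa using stdSimplex.sum_eq_one q

variable [MeasurableSpace ι]

/-- The probability measure on letters with weights `q`. -/
noncomputable def letterMeasure (q : stdSimplex ℝ ι) : Measure ι :=
  ∑ i, ENNReal.ofReal (q i) • Measure.dirac i

instance (q : stdSimplex ℝ ι) : IsProbabilityMeasure (letterMeasure q) := by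
  constructor
  simp only [letterMeasure, Measure.coe_finsetSum, Finset.sum_apply, Measure.smul_apply,
    smul_eq_mul, measure_univ, mul_one]
  rw [← ENNReal.ofReal_sum_of_nonneg fun i _ => stdSimplex.zero_le q i, stdSimplex.sum_eq_one,
    ENNReal.ofReal_one]

/-- The Bernoulli measure on sequences: the letters are independent with weights `q`. -/
noncomputable def bernoulliMeasure (q : stdSimplex ℝ ι) : Measure (ℕ → ι) :=
  Measure.infinitePi fun _ => letterMeasure q

instance (q : stdSimplex ℝ ι) : IsProbabilityMeasure (bernoulliMeasure q) :=
  inferInstanceAs (IsProbabilityMeasure (Measure.infinitePi fun _ => letterMeasure q))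

lemma measurePreserving_eval_bernoulliMeasure (q : stdSimplex ℝ ι) (k : ℕ) :
    MeasurePreserving (fun j : ℕ → ι => j k) (bernoulliMeasure q) (letterMeasure q) :=
  measurePreserving_eval_infinitePi _ k

variable [MeasurableSingletonClass ι]

lemma letterMeasure_singleton (q : stdSimplex ℝ ι) (i : ι) :
    letterMeasure q {i} = ENNReal.ofReal (q i) := by
  simp only [letterMeasure, Measure.coe_finsetSum, Finset.sum_apply, Measure.smul_apply,
    smul_eq_mul, Measure.dirac_apply]
  rw [Finset.sum_eq_single i (fun k _ hk => by simp [hk]) (by simp)]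
  simp

lemma integral_letterMeasure (q : stdSimplex ℝ ι) (f : ι → ℝ) :
    ∫ i, f i ∂letterMeasure q = ∑ i, q i * f i := by
  rw [integral_fintype Integrable.of_finite]
  refine Finset.sum_congr rfl fun i _ => ?_
  rw [Measure.real, letterMeasure_singleton, ENNReal.toReal_ofReal (stdSimplex.zero_le q i),
    smul_eq_mul]

lemma bernoulliMeasure_box (q : stdSimplex ℝ ι) (s : Finset ℕ) (i : ℕ → ι) :
    bernoulliMeasure q {j | ∀ n ∈ s, j n = i n} = ∏ n ∈ s, ENNReal.ofReal (q (i n)) := by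
  have hbox : {j : ℕ → ι | ∀ n ∈ s, j n = i n} = Set.pi (s : Set ℕ) fun n => {i n} := by
    ext j
    simp [Set.mem_pi]
  rw [hbox, bernoulliMeasure, Measure.infinitePi_pi _ fun n _ => measurableSet_singleton _]
  simp only [letterMeasure_singleton]

lemma bernoulliMeasure_word (q : stdSimplex ℝ ι) (w : List ι) :
    bernoulliMeasure q {j | prefixWord j w.length = w} = ENNReal.ofReal (wordProd q w) := by
  have := nonempty_of_stdSimplex q
  obtain ⟨i, hi⟩ := exists_prefixWord_eq w
  have hbox : {j | prefixWord j w.length = w} = {j | ∀ k ∈ Finset.range w.length, j k = i k} := by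
    ext j
    rw [Set.mem_ofPred_eq, Set.mem_ofPred_eq, ← hi, length_prefixWord, prefixWord_eq_iff]
    simp only [Finset.mem_range]
  have hprod n : wordProd q (prefixWord i n) = ∏ k ∈ Finset.range n, q (i k) := by
    rw [prefixWord_eq_ofFn, wordProd, List.map_ofFn, List.prod_ofFn, Finset.prod_range,
      Function.comp_def]
  rw [hbox, bernoulliMeasure_box,
    ← ENNReal.ofReal_prod_of_nonneg fun k _ => stdSimplex.zero_le q (i k), ← hprod, hi]

omit [Fintype ι] in
lemma measurable_comp_prefixWord [Countable ι] {α : Type*} [MeasurableSpace α]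
    (g : List ι → α) (n : ℕ) : Measurable fun j => g (prefixWord j n) := by
  simp only [prefixWord_eq_ofFn]
  have hrestrict : Measurable fun (j : ℕ → ι) (k : Fin n) => j k := by fun_prop
  exact (Measurable.of_discrete (f := fun w : Fin n → ι => g (List.ofFn w))).comp hrestrict

lemma lintegral_comp_prefixWord (q : stdSimplex ℝ ι) (g : List ι → ℝ≥0∞) (n : ℕ) :
    ∫⁻ j, g (prefixWord j n) ∂bernoulliMeasure q =
      ∑ w : Fin n → ι, ENNReal.ofReal (wordProd q (List.ofFn w)) * g (List.ofFn w) := by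
  have hrestrict : Measurable fun (j : ℕ → ι) (k : Fin n) => j k := by fun_prop
  simp only [prefixWord_eq_ofFn]
  rw [← lintegral_map (f := fun w : Fin n → ι => g (List.ofFn w)) Measurable.of_discrete hrestrict,
    lintegral_fintype]
  refine Finset.sum_congr rfl fun w _ => ?_
  rw [mul_comm, ← bernoulliMeasure_word, Measure.map_apply hrestrict (measurableSet_singleton w)]
  congr 2
  ext j
  simp [prefixWord_eq_ofFn]

lemma ae_tendsto_average (q : stdSimplex ℝ ι) (f : ι → ℝ) :
    ∀ᵐ j ∂bernoulliMeasure q,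
      Tendsto (fun n : ℕ => (∑ k ∈ Finset.range n, f (j k)) / n) atTop (𝓝 (∑ i, q i * f i)) := by
  have hf : Measurable f := measurable_of_finite f
  have heval := measurePreserving_eval_bernoulliMeasure q
  have hmean : ∫ j, f (j 0) ∂bernoulliMeasure q = ∑ i, q i * f i := by
    rw [← integral_letterMeasure, ← (heval 0).map_eq,
      integral_map (heval 0).measurable.aemeasurable hf.aestronglyMeasurable]
  rw [← hmean]
  refine ProbabilityTheory.strong_law_ae_real (fun (k : ℕ) (j : ℕ → ι) => f (j k))
    (((heval 0).integrable_comp hf.aestronglyMeasurable).2 Integrable.of_finite)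
    (fun k l hkl => ?_) (fun k => ?_)
  · exact (ProbabilityTheory.iIndepFun_infinitePi (P := fun _ : ℕ => letterMeasure q)
      (X := fun _ => f) fun _ => hf).indepFun hkl
  · refine ⟨(hf.comp (heval k).measurable).aemeasurable,
      (hf.comp (heval 0).measurable).aemeasurable, ?_⟩
    rw [← Function.comp_def f, ← Measure.map_map hf (heval k).measurable, (heval k).map_eq,
      ← Function.comp_def f, ← Measure.map_map hf (heval 0).measurable, (heval 0).map_eq]

lemma ae_forall_pos (q : stdSimplex ℝ ι) : ∀ᵐ j ∂bernoulliMeasure q, ∀ k, 0 < q (j k) := by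
  have heval := measurePreserving_eval_bernoulliMeasure q
  refine ae_all_iff.2 fun k => (heval k).quasiMeasurePreserving.ae (p := fun i => 0 < q i) ?_
  rw [ae_iff_of_countable]
  intro i hi
  rw [letterMeasure_singleton, Ne, ENNReal.ofReal_eq_zero, not_le] at hi
  exact hi

end Bernoulli

section SelfSimilar

variable {ι X : Type*} [Fintype ι] [MeasurableSpace X]

/-- The self-similarity equation `μ = ∑ pᵢ μ ∘ Sᵢ⁻¹`. -/
def IsSelfSimilar (S : ι → X → X) (p : ι → ℝ) (μ : Measure X) : Prop :=
  μ = ∑ i, ENNReal.ofReal (p i) • μ.map (S i)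

lemma IsSelfSimilar.measure_eq_sum_words {S : ι → X → X} {p : ι → ℝ} {μ : Measure X}
    (hμ : IsSelfSimilar S p μ) (hS : ∀ i, Measurable (S i)) (hp : ∀ i, 0 ≤ p i) (n : ℕ) {A : Set X}
    (hA : MeasurableSet A) : μ A = ∑ w : Fin n → ι,
      ENNReal.ofReal (wordProd p (List.ofFn w)) * μ (wordMap S (List.ofFn w) ⁻¹' A) := by
  induction n generalizing A with
  | zero => simp [show wordMap S [] = id from rfl]
  | succ n ih =>
    have hstep : μ A = ∑ i, ENNReal.ofReal (p i) * μ (S i ⁻¹' A) := by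
      conv_lhs => rw [hμ]
      simp [Measure.map_apply (hS _) hA]
    rw [hstep, ← (Fin.consEquiv fun _ => ι).sum_comp, Fintype.sum_prod_type]
    refine Finset.sum_congr rfl fun i _ => ?_
    rw [ih (hS i hA), Finset.mul_sum]
    refine Finset.sum_congr rfl fun w _ => ?_
    have hcons : List.ofFn (Fin.consEquiv (fun _ => ι) (i, w)) = i :: List.ofFn w :=
      List.ofFn_cons i w
    rw [hcons, wordProd_cons, ENNReal.ofReal_mul (hp i), mul_assoc]
    rfl

namespace SeparatedIFS

variable [MetricSpace X] {S : ι → X → X} {r : ι → ℝ} (h : SeparatedIFS S r)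
include h

omit [Fintype ι] [MeasurableSpace X] in
lemma tendsto_wordMap_prefixWord [CompleteSpace X] (j : ℕ → ι) (x : X) :
    Tendsto (fun n => wordMap S (prefixWord j n) x) atTop (𝓝 (h.code j)) := by
  have : Nonempty ι := ⟨j 0⟩
  refine (h.tendsto_code j).congr_dist
    (squeeze_zero (fun _ => dist_nonneg) (fun n => ?_)
      (by simpa using h.tendsto_maxRatio_pow.mul_const (dist h.base x)))
  rw [dist_wordMap h.dist_map]
  gcongr
  simpa using h.wordProd_ratio_le_pow (prefixWord j n)

variable [BorelSpace X]

omit [Fintype ι] in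
lemma measurable_map (i : ι) : Measurable (S i) :=
  (LipschitzWith.of_dist_le_mul (K := ⟨r i, (h.ratio_pos i).le⟩)
    fun x y => (h.dist_map i x y).le).continuous.measurable

omit [Fintype ι] in
lemma measurable_wordMap (w : List ι) : Measurable (wordMap S w) := by
  induction w with
  | nil => exact measurable_id
  | cons i w ih => exact (h.measurable_map i).comp ih

variable [CompleteSpace X] [MeasurableSpace ι] [MeasurableSingletonClass ι]

omit [Fintype ι] in
lemma measurable_code [Countable ι] : Measurable h.code :=
  measurable_of_tendsto_metrizable
    (fun n => measurable_comp_prefixWord (fun w => wordMap S w h.base) n)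
    (tendsto_pi_nhds.2 h.tendsto_code)

omit h in
/-- The self-similar measure with weights `q`, realised as the law of the code of a Bernoulli
sequence. -/
noncomputable def selfSimilarMeasure (h : SeparatedIFS S r) (q : stdSimplex ℝ ι) :
    ProbabilityMeasure X :=
  ProbabilityMeasure.map ⟨bernoulliMeasure q, inferInstance⟩ h.measurable_code.aemeasurable

lemma selfSimilarMeasure_apply (q : stdSimplex ℝ ι) {A : Set X} (hA : MeasurableSet A) :
    (h.selfSimilarMeasure q).toMeasure A = bernoulliMeasure q (h.code ⁻¹' A) :=
  Measure.map_apply h.measurable_code hA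

-- Under `μ` and the Bernoulli measure, `S_{j₀} ∘ ⋯ ∘ S_{jₙ₋₁} (x)` has law `μ` for every `n`,
-- while it converges to the code of `j` for every `x`.
lemma bernoulliMeasure_preimage_code_le {q : stdSimplex ℝ ι} {μ : Measure X}
    [IsProbabilityMeasure μ] (hμ : IsSelfSimilar S q μ) {G : Set X} (hG : IsOpen G) :
    bernoulliMeasure q (h.code ⁻¹' G) ≤ μ G := by
  set g : List ι → ℝ≥0∞ := fun w => μ (wordMap S w ⁻¹' G)
  have hlaw n : ∫⁻ j, g (prefixWord j n) ∂bernoulliMeasure q = μ G := by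
    rw [lintegral_comp_prefixWord, ← hμ.measure_eq_sum_words h.measurable_map
      (stdSimplex.zero_le q) n hG.measurableSet]
  have hlim (j : ℕ → ι) (hj : h.code j ∈ G) :
      Tendsto (fun n => g (prefixWord j n)) atTop (𝓝 1) := by
    rw [← measure_univ (μ := μ)]
    refine tendsto_measure_of_tendsto_indicator atTop
      (fun n => h.measurable_wordMap _ hG.measurableSet) MeasurableSet.univ (measure_ne_top μ _)
      (Eventually.of_forall fun _ => subset_univ _) fun x => ?_
    filter_upwards [(h.tendsto_wordMap_prefixWord j x).eventually_mem (hG.mem_nhds hj)] with n hn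
    simpa using hn
  calc bernoulliMeasure q (h.code ⁻¹' G)
      = ∫⁻ j, (h.code ⁻¹' G).indicator 1 j ∂bernoulliMeasure q :=
        (lintegral_indicator_one (h.measurable_code hG.measurableSet)).symm
    _ ≤ ∫⁻ j, liminf (fun n => g (prefixWord j n)) atTop ∂bernoulliMeasure q :=
        lintegral_mono fun j => Set.indicator_le' (fun j hj => (hlim j hj).liminf_eq.ge)
          (fun _ _ => zero_le) j
    _ ≤ liminf (fun n => ∫⁻ j, g (prefixWord j n) ∂bernoulliMeasure q) atTop :=
        lintegral_liminf_le fun n => measurable_comp_prefixWord g n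
    _ = μ G := by simp only [hlaw, liminf_const]

lemma eq_selfSimilarMeasure {q : stdSimplex ℝ ι} {μ : ProbabilityMeasure X}
    (hμ : IsSelfSimilar S q μ.toMeasure) : μ = h.selfSimilarMeasure q := by
  refine tendsto_nhds_unique (f := fun _ : ℕ => μ) (l := atTop) tendsto_const_nhds
    (tendsto_of_forall_isOpen_le_liminf fun G hG => ?_)
  rw [liminf_const, ← ENNReal.coe_le_coe, ProbabilityMeasure.ennreal_coeFn_eq_coeFn_toMeasure,
    ProbabilityMeasure.ennreal_coeFn_eq_coeFn_toMeasure,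
    h.selfSimilarMeasure_apply q hG.measurableSet]
  exact h.bernoulliMeasure_preimage_code_le hμ hG

lemma wordProd_le_selfSimilarMeasure (q : stdSimplex ℝ ι) (w : List ι) {x : X} {ρ : ℝ}
    (hx : dist x (wordMap S w h.base) + h.radius * wordProd r w ≤ ρ) :
    wordProd q w ≤ h.selfSimilarMeasure q (closedBall x ρ) := by
  rw [← ENNReal.ofReal_le_ofReal_iff (by positivity), ENNReal.ofReal_coe_nnreal,
    ProbabilityMeasure.ennreal_coeFn_eq_coeFn_toMeasure,
    h.selfSimilarMeasure_apply q measurableSet_closedBall, ← bernoulliMeasure_word]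
  refine measure_mono fun j hj => ?_
  have hdist := h.dist_code_le j w.length
  rw [hj] at hdist
  exact mem_closedBall.2 (by linarith [dist_triangle_right (h.code j) x (wordMap S w h.base)])

end SeparatedIFS

end SelfSimilar

section Gibbs

variable {ι : Type*} [Fintype ι]

/-- The cross entropy `-∑ q_i log b_i`. It is the Shannon entropy of `q` when `b = q`, and the
Lyapunov exponent of the `q`-Bernoulli process when `b` lists the contraction ratios. -/
noncomputable def crossEntropy (q b : ι → ℝ) : ℝ :=
  ∑ i, q i * -Real.log (b i)

lemma exists_stdSimplex_of_one_le_sum {g y l : ι → ℝ} {t θ : ℝ} (hg : ∀ i, 0 ≤ g i)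
    (hlog : ∀ i, g i ≠ 0 → -Real.log (g i) = θ * y i + t * l i) (hsum : 1 ≤ ∑ i, g i)
    (hy : ∑ i, g i * y i = 0) :
    ∃ q : stdSimplex ℝ ι, ∑ i, q i * y i = 0 ∧ t * ∑ i, q i * l i ≤ crossEntropy q q := by
  set G := ∑ i, g i
  have hG0 : 0 < G := one_pos.trans_le hsum
  have hmass : ∑ i, g i / G = 1 := by rw [← Finset.sum_div, div_self hG0.ne']
  have hcentred : ∑ i, g i / G * y i = 0 := by
    simp only [div_mul_eq_mul_div, ← Finset.sum_div, hy, zero_div]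
  refine ⟨⟨fun i => g i / G, fun i => div_nonneg (hg i) hG0.le, hmass⟩, hcentred, ?_⟩
  have hterm (i : ι) : g i / G * -Real.log (g i / G)
      = θ * (g i / G * y i) + t * (g i / G * l i) + Real.log G * (g i / G) := by
    rcases eq_or_ne (g i) 0 with h0 | h0
    · simp [h0]
    · rw [Real.log_div h0 hG0.ne', neg_sub', hlog i h0]
      ring
  calc t * ∑ i, g i / G * l i
      ≤ t * ∑ i, g i / G * l i + Real.log G := le_add_of_nonneg_right (Real.log_nonneg hsum)
    _ = ∑ i, g i / G * -Real.log (g i / G) := by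
        simp only [hterm, Finset.sum_add_distrib, ← Finset.mul_sum, hcentred, hmass]
        ring

lemma tendsto_sum_exp_of_nonneg {y l : ι → ℝ} (hy : ∀ i, 0 ≤ y i) (t : ℝ) :
    Tendsto (fun θ : ℝ => ∑ i, Real.exp (-(θ * y i + t * l i))) atTop
      (𝓝 (∑ i, if y i = 0 then Real.exp (-(t * l i)) else 0)) := by
  refine tendsto_finsetSum _ fun i _ => ?_
  split_ifs with h
  · simp [h]
  · refine Real.tendsto_exp_neg_atTop_nhds_zero.comp (tendsto_atTop_add_const_right _ _ ?_)
    exact tendsto_id.atTop_mul_const ((hy i).lt_of_ne' h)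

lemma tendsto_sum_exp_atTop {y : ι → ℝ} {i : ι} (hi : y i < 0) (l : ι → ℝ) (t : ℝ) :
    Tendsto (fun θ : ℝ => ∑ i, Real.exp (-(θ * y i + t * l i))) atTop atTop := by
  refine tendsto_atTop_mono (fun θ => Finset.single_le_sum
    (f := fun i => Real.exp (-(θ * y i + t * l i))) (fun _ _ => (Real.exp_pos _).le)
    (Finset.mem_univ i)) ?_
  refine Real.tendsto_exp_atTop.comp (tendsto_neg_atBot_atTop.comp
    (tendsto_atBot_add_const_right _ _ ?_))
  exact tendsto_id.atTop_mul_const_of_neg hi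

lemma exists_stdSimplex_of_nonneg {y l : ι → ℝ} {t : ℝ} (hy : ∀ i, 0 ≤ y i)
    (h : ∀ θ : ℝ, 1 ≤ ∑ i, Real.exp (-(θ * y i + t * l i))) :
    ∃ q : stdSimplex ℝ ι, ∑ i, q i * y i = 0 ∧ t * ∑ i, q i * l i ≤ crossEntropy q q := by
  refine exists_stdSimplex_of_one_le_sum
    (g := fun i => if y i = 0 then Real.exp (-(t * l i)) else 0) (θ := 0)
    (fun i => ?_) (fun i hi => ?_) (ge_of_tendsto' (tendsto_sum_exp_of_nonneg hy t) h)
    (Finset.sum_eq_zero fun i _ => ?_)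
  · split_ifs <;> positivity
  · simp_all
  · simp +contextual [ite_mul]

lemma exists_forall_sum_exp_le {y : ι → ℝ} {i k : ι} (hi : y i < 0) (hk : 0 < y k) (l : ι → ℝ)
    (t : ℝ) : ∃ θ : ℝ, ∀ θ' : ℝ,
      ∑ i, Real.exp (-(θ * y i + t * l i)) ≤ ∑ i, Real.exp (-(θ' * y i + t * l i)) := by
  have hcont : Continuous fun θ : ℝ => ∑ i, Real.exp (-(θ * y i + t * l i)) := by fun_prop
  have hbot : Tendsto (fun θ : ℝ => ∑ i, Real.exp (-(θ * y i + t * l i))) atBot atTop := by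
    simpa [Function.comp_def] using (tendsto_sum_exp_atTop (y := fun i => -y i)
      (neg_lt_zero.2 hk) l t).comp tendsto_neg_atBot_atTop
  refine hcont.exists_forall_le ?_
  rw [cocompact_eq_atBot_atTop]
  exact hbot.sup (tendsto_sum_exp_atTop hi l t)

lemma sum_exp_mul_eq_zero_of_isMinimum {y l : ι → ℝ} {t θ : ℝ} (h : ∀ θ' : ℝ,
      ∑ i, Real.exp (-(θ * y i + t * l i)) ≤ ∑ i, Real.exp (-(θ' * y i + t * l i))) :
    ∑ i, Real.exp (-(θ * y i + t * l i)) * y i = 0 := by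
  have hderiv : HasDerivAt (fun θ : ℝ => ∑ i, Real.exp (-(θ * y i + t * l i)))
      (∑ i, Real.exp (-(θ * y i + t * l i)) * -(1 * y i)) θ := .fun_sum fun i _ =>
    (((hasDerivAt_id θ).mul_const (y i)).add_const (t * l i)).neg.exp
  have hmin : IsLocalMin (fun θ : ℝ => ∑ i, Real.exp (-(θ * y i + t * l i))) θ := .of_forall h
  simpa using hmin.hasDerivAt_eq_zero hderiv

lemma exists_stdSimplex_of_forall_one_le {y l : ι → ℝ} {t : ℝ}
    (h : ∀ θ : ℝ, 1 ≤ ∑ i, Real.exp (-(θ * y i + t * l i))) :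
    ∃ q : stdSimplex ℝ ι, ∑ i, q i * y i = 0 ∧ t * ∑ i, q i * l i ≤ crossEntropy q q := by
  by_cases! hneg : ∃ i, y i < 0
  · by_cases! hpos : ∃ k, 0 < y k
    · obtain ⟨i, hi⟩ := hneg
      obtain ⟨k, hk⟩ := hpos
      obtain ⟨θ, hθ⟩ := exists_forall_sum_exp_le hi hk l t
      exact exists_stdSimplex_of_one_le_sum (fun i => (Real.exp_pos _).le)
        (fun i _ => by rw [Real.log_exp, neg_neg]) (h θ) (sum_exp_mul_eq_zero_of_isMinimum hθ)
    · simpa using exists_stdSimplex_of_nonneg (y := fun i => -y i) (l := l) (t := t)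
        (fun i => neg_nonneg.2 (hpos i)) fun θ => by simpa using h (-θ)
  · exact exists_stdSimplex_of_nonneg hneg h

/-- The pressure-type sum `∑ p_i^θ r_i^(t - αθ)`; for fixed `t` its minimum over `θ` decides on
which side of the common value of the spectra at `α` the number `t` lies. -/
noncomputable def partitionSum (r p : ι → ℝ) (α θ t : ℝ) : ℝ :=
  ∑ i, p i ^ θ * r i ^ (t - α * θ)

variable {r p : ι → ℝ} (hr : ∀ i, 0 < r i) (hp : ∀ i, 0 < p i)

include hr hp

lemma partitionSum_eq_sum_exp (α θ t : ℝ) : partitionSum r p α θ t =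
    ∑ i, Real.exp (-(θ * (-Real.log (p i) - α * -Real.log (r i)) + t * -Real.log (r i))) := by
  refine Finset.sum_congr rfl fun i _ => ?_
  rw [Real.rpow_def_of_pos (hp i), Real.rpow_def_of_pos (hr i), ← Real.exp_add]
  ring_nf

lemma exists_partitionSum_lt_one_or_exists_stdSimplex (α t : ℝ) :
    (∃ θ, partitionSum r p α θ t < 1) ∨ ∃ q : stdSimplex ℝ ι,
      crossEntropy q p = α * crossEntropy q r ∧ t * crossEntropy q r ≤ crossEntropy q q := by
  by_cases! h : ∃ θ, partitionSum r p α θ t < 1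
  · exact .inl h
  · simp only [partitionSum_eq_sum_exp hr hp] at h
    obtain ⟨q, hy, hl⟩ := exists_stdSimplex_of_forall_one_le h
    refine .inr ⟨q, sub_eq_zero.1 (Eq.trans ?_ hy), hl⟩
    simp only [crossEntropy, mul_sub, Finset.sum_sub_distrib, Finset.mul_sum, mul_left_comm α]

lemma eventually_partitionSum_lt_one {α θ t : ℝ} (h : partitionSum r p α θ t < 1) :
    ∀ᶠ t' in 𝓝 t, partitionSum r p α θ t' < 1 := by
  have hcont : Continuous (partitionSum r p α θ) := by
    simp only [funext (partitionSum_eq_sum_exp hr hp α θ)]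
    fun_prop
  exact hcont.tendsto t |>.eventually_lt_const h

end Gibbs

section Summability

variable {ι : Type*} [Fintype ι]

lemma summable_wordProd {b : ι → ℝ} (hb : ∀ i, 0 ≤ b i) (hb1 : ∑ i, b i < 1) :
    Summable (wordProd b) := by
  rw [← List.equivSigmaTuple.symm.summable_iff,
    summable_sigma_of_nonneg (f := wordProd b ∘ List.equivSigmaTuple.symm)
      fun x => wordProd_nonneg hb _]
  refine ⟨fun n => Summable.of_finite, ?_⟩
  refine (summable_geometric_of_lt_one (Finset.sum_nonneg fun i _ => hb i) hb1).congr fun n => ?_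
  have hword (f : Fin n → ι) : wordProd b (List.ofFn f) = ∏ k, b (f k) := by
    rw [wordProd, List.map_ofFn, List.prod_ofFn]
    rfl
  rw [tsum_fintype, Fintype.sum_pow]
  exact Finset.sum_congr rfl fun f _ => (hword f).symm

lemma summable_of_partitionSum_lt_one {r p : ι → ℝ} (hr : ∀ i, 0 ≤ r i) (hp : ∀ i, 0 ≤ p i)
    {α θ t : ℝ} (h : partitionSum r p α θ t < 1) :
    Summable fun w => wordProd p w ^ θ * wordProd r w ^ (t - α * θ) :=
  (summable_wordProd (fun i => mul_nonneg (Real.rpow_nonneg (hp i) _) (Real.rpow_nonneg (hr i) _))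
    h).congr fun w => wordProd_mul_rpow hp hr _ _ w

lemma rpow_le_of_abs_log_div_log_sub_le {P ρ α ε : ℝ} (hP : 0 < P) (hρ : 0 < ρ) (hρ1 : ρ < 1)
    (h : |Real.log P / Real.log ρ - α| ≤ ε) (θ t : ℝ) :
    ρ ^ t ≤ P ^ θ * ρ ^ (t - |θ| * ε - α * θ) := by
  set e := Real.log P / Real.log ρ - α with he
  have hlogρ := Real.log_neg hρ hρ1
  have hlogP : Real.log P = (α + e) * Real.log ρ := by
    rw [he, add_sub_cancel, div_mul_cancel₀ _ hlogρ.ne]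
  have hθe : θ * e ≤ |θ| * ε := (le_abs_self _).trans (by rw [abs_mul]; gcongr)
  rw [Real.rpow_def_of_pos hP, Real.rpow_def_of_pos hρ, Real.rpow_def_of_pos hρ, ← Real.exp_add,
    Real.exp_le_exp, hlogP]
  nlinarith

end Summability

section ZetaAbscissa

variable {N : ℕ} {r p : Fin N → ℝ}

/-- The abscissa of convergence of `ζ_α^{sim}(·;ε)`, the series of the `r_w ^ s` over the nonempty
words `w` with `|log p_w / log r_w - α| ≤ ε`. -/
noncomputable def zetaAbscissa (r p : Fin N → ℝ) (α ε : ℝ) : EReal :=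
  sigmaAbs (wordProd r) fun w => |Real.log (wordProd p w) / Real.log (wordProd r w) - α| ≤ ε

lemma SeparatedIFS.eventually_zetaAbscissa_le {X : Type*} [MetricSpace X] {S : Fin N → X → X}
    (h : SeparatedIFS S r) (hp : ∀ i, 0 < p i) {α θ t : ℝ} (hlt : partitionSum r p α θ t < 1) :
    ∀ᶠ ε in 𝓝[>] 0, zetaAbscissa r p α ε ≤ t := by
  have hshift : Tendsto (fun ε : ℝ => t - |θ| * ε) (𝓝[>] 0) (𝓝 t) := by
    refine tendsto_nhdsWithin_of_tendsto_nhds ?_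
    exact Continuous.tendsto' (by fun_prop) _ _ (by simp)
  filter_upwards [hshift.eventually (eventually_partitionSum_lt_one h.ratio_pos hp hlt)] with ε hε
  refine sInf_le ⟨t, ?_, rfl⟩
  refine Summable.of_nonneg_of_le (fun w => Real.rpow_nonneg (h.wordProd_ratio_pos _).le _)
    (fun w => ?_) ((summable_of_partitionSum_lt_one (fun i => (h.ratio_pos i).le)
      (fun i => (hp i).le) hε).subtype _)
  exact rpow_le_of_abs_log_div_log_sub_le (wordProd_pos hp _) (h.wordProd_ratio_pos _)
    (h.wordProd_ratio_lt_one w.2.1) w.2.2 θ t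

end ZetaAbscissa

section CoarseCounting

lemma ratioE_le_of_le_rpow {m : ℕ} {K s δ : ℝ} (hK : 0 < K) (hδ : δ ∈ Ioo (0 : ℝ) 1)
    (hm : (m : ℝ) ≤ K * δ ^ (-s)) : ratioE m δ ≤ (s + Real.log K / -Real.log δ : ℝ) := by
  have hlog := Real.log_neg hδ.1 hδ.2
  rw [ratioE]
  split_ifs with h0
  · exact bot_le
  · have hle := Real.log_le_log (by positivity) hm
    rw [Real.log_mul hK.ne' (Real.rpow_pos_of_pos hδ.1 _).ne', Real.log_rpow hδ.1] at hle
    rw [EReal.coe_le_coe_iff, div_le_iff₀ (neg_pos.2 hlog), add_mul,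
      div_mul_cancel₀ _ (neg_ne_zero.2 hlog.ne)]
    linarith

lemma liminf_ratioE_le {m : ℝ → ℕ} {K s : ℝ} (hK : 0 < K)
    (hm : ∀ δ ∈ Ioo (0 : ℝ) 1, (m δ : ℝ) ≤ K * δ ^ (-s)) :
    liminf (fun δ => ratioE (m δ) δ) (𝓝[>] 0) ≤ s := by
  have hlim : Tendsto (fun δ : ℝ => ((s + Real.log K / -Real.log δ : ℝ) : EReal)) (𝓝[>] 0)
      (𝓝 s) := by
    refine continuous_coe_real_ereal.continuousAt.tendsto.comp ?_
    simpa using ((tendsto_neg_atBot_atTop.comp Real.tendsto_log_nhdsGT_zero).const_div_atTop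
      (Real.log K)).const_add s
  rw [← hlim.liminf_eq]
  refine liminf_le_liminf ?_
  filter_upwards [Ioo_mem_nhdsGT one_pos] with δ hδ using ratioE_le_of_le_rpow hK hδ (hm δ hδ)

lemma exists_card_mul_le_tsum {E : Type*} [NormedAddCommGroup E] [NormedSpace ℝ E] [ProperSpace E]
    (C : ℝ) : ∃ M : ℕ, ∀ {κ : Type*} (y : κ → E) {f : κ → ℝ}, (∀ w, 0 ≤ f w) → Summable f →
      ∀ {n : ℕ} {x : Fin n → E} {v : Fin n → κ} {δ b : ℝ}, 0 < δ →
      (∀ i j, i ≠ j → δ ≤ dist (x i) (x j)) → (∀ i, dist (y (v i)) (x i) ≤ C * δ) →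
      (∀ i, b ≤ f (v i)) → 0 ≤ b → n * b ≤ M * ∑' w, f w := by
  obtain ⟨M, hM⟩ := exists_card_le_of_separated (E := E) one_pos C
  refine ⟨M, fun y f hf hsum n x v δ b hδ hsep hdist hb hb0 => ?_⟩
  have hcard : (n : ℝ) ≤ M * (Finset.univ.image v).card := by
    have := Finset.card_le_mul_card_image (f := v) Finset.univ M fun w _ =>
      hM _ x (y w) δ hδ (fun i hi => ?_) fun i _ j _ hij => (one_mul δ).trans_le (hsep i j hij)
    · rw [Finset.card_fin] at this
      exact_mod_cast this
    · rw [← (Finset.mem_filter.1 hi).2, dist_comm]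
      exact hdist i
  have hle : (Finset.univ.image v).card * b ≤ ∑' w, f w := by
    rw [← nsmul_eq_mul]
    refine (Finset.card_nsmul_le_sum _ f b fun w hw => ?_).trans
      (hsum.sum_le_tsum _ fun w _ => hf w)
    obtain ⟨i, -, rfl⟩ := Finset.mem_image.1 hw
    exact hb i
  calc n * b ≤ M * (Finset.univ.image v).card * b := by gcongr
    _ = M * ((Finset.univ.image v).card * b) := mul_assoc _ _ _
    _ ≤ M * ∑' w, f w := by gcongr

lemma rpow_abs_mul_rpow_le {l δ x : ℝ} (hl : 0 < l) (hl1 : l ≤ 1) (hδ : 0 < δ)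
    (h1 : l * δ ≤ x) (h2 : x ≤ δ) (e : ℝ) : l ^ |e| * δ ^ e ≤ x ^ e := by
  have hx : 0 < x := (mul_pos hl hδ).trans_le h1
  rcases le_total 0 e with he | he
  · rw [abs_of_nonneg he, ← Real.mul_rpow hl.le hδ.le]
    exact Real.rpow_le_rpow (by positivity) h1 he
  · calc l ^ |e| * δ ^ e ≤ 1 * δ ^ e := by
          gcongr
          exact Real.rpow_le_one hl.le hl1 (abs_nonneg e)
      _ ≤ x ^ e := by
          rw [one_mul]
          exact Real.rpow_le_rpow_of_nonpos hx h2 he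

end CoarseCounting

section LocalDimension

variable {d : ℕ} {μ : ProbabilityMeasure (Euc d)} {x : Euc d} {δ β : ℝ}

lemma measure_closedBall_pos (hx : x ∈ suppSet μ) (hδ : 0 < δ) : 0 < μ (closedBall x δ) :=
  (hx δ hδ).trans_le (μ.apply_mono ball_subset_closedBall)

lemma rpow_le_measure_of_localDimAt_le (hx : x ∈ suppSet μ) (hδ : δ ∈ Ioo (0 : ℝ) 1)
    (h : localDimAt μ x δ ≤ β) : δ ^ β ≤ μ (closedBall x δ) := by
  have hm : 0 < (μ (closedBall x δ) : ℝ) := measure_closedBall_pos hx hδ.1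
  rw [localDimAt, div_le_iff_of_neg (Real.log_neg hδ.1 hδ.2)] at h
  rwa [← Real.log_le_log_iff (Real.rpow_pos_of_pos hδ.1 _) hm, Real.log_rpow hδ.1]

lemma measure_le_rpow_of_le_localDimAt (hx : x ∈ suppSet μ) (hδ : δ ∈ Ioo (0 : ℝ) 1)
    (h : β ≤ localDimAt μ x δ) : μ (closedBall x δ) ≤ δ ^ β := by
  have hm : 0 < (μ (closedBall x δ) : ℝ) := measure_closedBall_pos hx hδ.1
  rw [localDimAt, le_div_iff_of_neg (Real.log_neg hδ.1 hδ.2)] at h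
  rwa [← Real.log_le_log_iff hm (Real.rpow_pos_of_pos hδ.1 _), Real.log_rpow hδ.1]

end LocalDimension

namespace SeparatedIFS

lemma exists_mem_stoppingWords_dist_code_le {ι X : Type*} [MetricSpace X] [CompleteSpace X]
    {S : ι → X → X} {r : ι → ℝ} (h : SeparatedIFS S r) (j : ℕ → ι) {δ : ℝ}
    (hδ : δ ∈ Ioo (0 : ℝ) 1) :
    ∃ n, prefixWord j n ∈ stoppingWords r δ ∧
      dist (h.code j) (wordMap S (prefixWord j n) h.base) ≤ h.radius * δ := by
  obtain ⟨n, hn⟩ := h.exists_prefixWord_mem_stoppingWords j hδ.1 hδ.2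
  exact ⟨n, hn, (h.dist_code_le j n).trans (mul_le_mul_of_nonneg_left hn.2.1 h.radius_pos.le)⟩

variable {ι : Type*} [Fintype ι] [MeasurableSpace ι] [MeasurableSingletonClass ι] {d : ℕ}
  {S : ι → Euc d → Euc d} {r : ι → ℝ} (h : SeparatedIFS S r) {q : stdSimplex ℝ ι} {x : Euc d}
  {δ : ℝ}

include h

lemma exists_dist_code_le (hx : x ∈ suppSet (h.selfSimilarMeasure q)) (hδ : 0 < δ) :
    ∃ j, dist (h.code j) x ≤ δ := by
  refine nonempty_of_measure_ne_zero (μ := bernoulliMeasure q) (s := h.code ⁻¹' closedBall x δ) ?_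
  rw [← h.selfSimilarMeasure_apply q measurableSet_closedBall,
    ← ProbabilityMeasure.ennreal_coeFn_eq_coeFn_toMeasure]
  exact_mod_cast (measure_closedBall_pos hx hδ).ne'

lemma exists_wordProd_le_measure (hx : x ∈ suppSet (h.selfSimilarMeasure q))
    (hδ : δ ∈ Ioo (0 : ℝ) 1) : ∃ v ∈ stoppingWords r (1 / (4 * h.radius) * δ),
      dist (wordMap S v h.base) x ≤ δ ∧
      wordProd q v ≤ h.selfSimilarMeasure q (closedBall x δ) := by
  have hR := h.radius_pos
  have hκ : 1 / (4 * h.radius) ≤ 1 := by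
    rw [div_le_one (by positivity)]
    linarith [h.one_le_radius]
  obtain ⟨j, hj⟩ := h.exists_dist_code_le hx (δ := δ / 4) (by linarith [hδ.1])
  obtain ⟨n, hn, hdist⟩ := h.exists_mem_stoppingWords_dist_code_le j
    (δ := 1 / (4 * h.radius) * δ) ⟨mul_pos (by positivity) hδ.1, by nlinarith [hδ.1, hδ.2]⟩
  have hscale : h.radius * (1 / (4 * h.radius) * δ) = δ / 4 := by field_simp
  rw [hscale] at hdist
  have hprod := (mul_le_mul_of_nonneg_left hn.2.1 hR.le).trans_eq hscale
  have hx' := dist_triangle_left (wordMap S (prefixWord j n) h.base) x (h.code j)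
  refine ⟨_, hn, by linarith [hδ.1], h.wordProd_le_selfSimilarMeasure q _ ?_⟩
  rw [dist_comm]
  linarith [hδ.1]

lemma selfSimilarMeasure_closedBall_le_sum (q : stdSimplex ℝ ι) (x : Euc d)
    (hδ : δ ∈ Ioo (0 : ℝ) 1) {t : Finset (List ι)} (ht : ∀ v ∈ stoppingWords r δ,
      dist (wordMap S v h.base) x ≤ (h.radius + 1) * δ → v ∈ t) :
    h.selfSimilarMeasure q (closedBall x δ) ≤ ∑ v ∈ t, wordProd q v := by
  have hcover : h.code ⁻¹' closedBall x δ ⊆ ⋃ v ∈ t, {j | prefixWord j v.length = v} := by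
    intro j hj
    obtain ⟨n, hn, hdist⟩ := h.exists_mem_stoppingWords_dist_code_le j hδ
    have hx := dist_triangle_left (wordMap S (prefixWord j n) h.base) x (h.code j)
    exact mem_biUnion (ht _ hn (by linarith [mem_closedBall.1 hj])) (by simp)
  have hnonneg : ∀ v ∈ t, 0 ≤ wordProd q v := fun v _ => wordProd_nonneg (stdSimplex.zero_le q) v
  rw [← ENNReal.ofReal_le_ofReal_iff (Finset.sum_nonneg hnonneg), ENNReal.ofReal_coe_nnreal,
    ProbabilityMeasure.ennreal_coeFn_eq_coeFn_toMeasure,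
    h.selfSimilarMeasure_apply q measurableSet_closedBall, ENNReal.ofReal_sum_of_nonneg hnonneg]
  calc bernoulliMeasure q (h.code ⁻¹' closedBall x δ)
      ≤ ∑ v ∈ t, bernoulliMeasure q {j | prefixWord j v.length = v} :=
        (measure_mono hcover).trans (measure_biUnion_finset_le _ _)
    _ = ∑ v ∈ t, ENNReal.ofReal (wordProd q v) := by simp only [bernoulliMeasure_word]

lemma exists_measure_le_mul_wordProd (q : stdSimplex ℝ ι) : ∃ M : ℝ, 0 < M ∧
    ∀ x ∈ suppSet (h.selfSimilarMeasure q), ∀ δ ∈ Ioo (0 : ℝ) 1, ∃ v ∈ stoppingWords r δ,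
      dist (wordMap S v h.base) x ≤ (h.radius + 1) * δ ∧
      h.selfSimilarMeasure q (closedBall x δ) ≤ M * wordProd q v := by
  obtain ⟨M, hM⟩ := h.exists_encard_stoppingWords_le (h.radius + 1)
  refine ⟨M + 1, by positivity, fun x hx δ hδ => ?_⟩
  have hfin := Set.finite_of_encard_le_coe (hM δ x hδ.1)
  have hle := h.selfSimilarMeasure_closedBall_le_sum q x hδ (t := hfin.toFinset)
    fun v hv hdist => by simpa using ⟨hv, hdist⟩
  have hpos : 0 < (h.selfSimilarMeasure q (closedBall x δ) : ℝ) := measure_closedBall_pos hx hδ.1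
  obtain ⟨v, hv, hmax⟩ := hfin.toFinset.exists_max_image (wordProd q)
    (Finset.nonempty_of_sum_ne_zero (hpos.trans_le hle).ne')
  have hcard : (hfin.toFinset.card : ℝ) ≤ M := by
    exact_mod_cast hfin.encard_eq_coe_toFinset_card.symm.trans_le (hM δ x hδ.1)
  obtain ⟨hvδ, hdist⟩ := hfin.mem_toFinset.1 hv
  refine ⟨v, hvδ, hdist, hle.trans ((Finset.sum_le_card_nsmul _ _ _ hmax).trans ?_)⟩
  rw [nsmul_eq_mul]
  exact mul_le_mul_of_nonneg_right (by linarith) (wordProd_nonneg (stdSimplex.zero_le q) v)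

lemma exists_word_of_localDimAt_le {θ : ℝ} (hθ : 0 ≤ θ) (q : stdSimplex ℝ ι) (β s : ℝ) :
    ∃ C κ : ℝ, 0 < κ ∧ ∀ x ∈ suppSet (h.selfSimilarMeasure q), ∀ δ ∈ Ioo (0 : ℝ) 1,
      localDimAt (h.selfSimilarMeasure q) x δ ≤ β → ∃ v : List ι,
        dist (wordMap S v h.base) x ≤ C * δ ∧
        κ * δ ^ (β * θ + s) ≤ wordProd q v ^ θ * wordProd r v ^ s := by
  obtain ⟨M, hM0, hM⟩ := h.exists_measure_le_mul_wordProd q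
  have hmin := h.minRatio_pos
  have := nonempty_of_stdSimplex q
  refine ⟨h.radius + 1, M⁻¹ ^ θ * h.minRatio ^ |s|, by positivity, fun x hx δ hδ hdim => ?_⟩
  obtain ⟨v, hv, hdist, hm⟩ := hM x hx δ hδ
  have hδ0 := hδ.1
  have hq : M⁻¹ * δ ^ β ≤ wordProd q v :=
    (inv_mul_le_iff₀ hM0).2 ((rpow_le_measure_of_localDimAt_le hx hδ hdim).trans hm)
  refine ⟨v, hdist, ?_⟩
  calc M⁻¹ ^ θ * h.minRatio ^ |s| * δ ^ (β * θ + s)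
      = (M⁻¹ * δ ^ β) ^ θ * (h.minRatio ^ |s| * δ ^ s) := by
        rw [Real.mul_rpow (by positivity) (by positivity), ← Real.rpow_mul hδ0.le,
          Real.rpow_add hδ0]
        ring
    _ ≤ wordProd q v ^ θ * wordProd r v ^ s :=
        mul_le_mul (Real.rpow_le_rpow (by positivity) hq hθ)
          (rpow_abs_mul_rpow_le hmin h.minRatio_le_one hδ0 (h.minRatio_mul_le_wordProd hv)
            hv.2.1 _) (by positivity)
          (Real.rpow_nonneg (wordProd_nonneg (stdSimplex.zero_le q) v) _)

lemma exists_word_of_le_localDimAt {θ : ℝ} (hθ : θ ≤ 0) (hq : ∀ i, 0 < q i) (β s : ℝ) :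
    ∃ C κ : ℝ, 0 < κ ∧ ∀ x ∈ suppSet (h.selfSimilarMeasure q), ∀ δ ∈ Ioo (0 : ℝ) 1,
      β ≤ localDimAt (h.selfSimilarMeasure q) x δ → ∃ v : List ι,
        dist (wordMap S v h.base) x ≤ C * δ ∧
        κ * δ ^ (β * θ + s) ≤ wordProd q v ^ θ * wordProd r v ^ s := by
  have hR := h.radius_pos
  have hmin := h.minRatio_pos
  have := nonempty_of_stdSimplex q
  refine ⟨1, h.minRatio ^ |s| * (1 / (4 * h.radius)) ^ s, by positivity, fun x hx δ hδ hdim => ?_⟩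
  obtain ⟨v, hv, hdist, hm⟩ := h.exists_wordProd_le_measure hx hδ
  have hδ0 := hδ.1
  have hqv := hm.trans (measure_le_rpow_of_le_localDimAt hx hδ hdim)
  refine ⟨v, by rwa [one_mul], ?_⟩
  calc h.minRatio ^ |s| * (1 / (4 * h.radius)) ^ s * δ ^ (β * θ + s)
      = (δ ^ β) ^ θ * (h.minRatio ^ |s| * (1 / (4 * h.radius) * δ) ^ s) := by
        rw [Real.mul_rpow (x := 1 / (4 * h.radius)) (by positivity) (by positivity),
          ← Real.rpow_mul hδ0.le, Real.rpow_add hδ0]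
        ring
    _ ≤ wordProd q v ^ θ * wordProd r v ^ s :=
        mul_le_mul (Real.rpow_le_rpow_of_nonpos (wordProd_pos hq v) hqv hθ)
          (rpow_abs_mul_rpow_le hmin h.minRatio_le_one (by positivity)
            (h.minRatio_mul_le_wordProd hv) hv.2.1 _) (by positivity)
          (Real.rpow_nonneg (wordProd_pos hq v).le _)

lemma exists_word_of_localDimAt (hq : ∀ i, 0 < q i) (α ε θ t : ℝ) :
    ∃ C κ : ℝ, 0 < κ ∧ ∀ x ∈ suppSet (h.selfSimilarMeasure q), ∀ δ ∈ Ioo (0 : ℝ) 1,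
      α - ε ≤ localDimAt (h.selfSimilarMeasure q) x δ →
      localDimAt (h.selfSimilarMeasure q) x δ ≤ α + ε → ∃ v : List ι,
        dist (wordMap S v h.base) x ≤ C * δ ∧
        κ * δ ^ (t + |θ| * ε) ≤ wordProd q v ^ θ * wordProd r v ^ (t - α * θ) := by
  rcases le_total 0 θ with hθ | hθ
  · obtain ⟨C, κ, hκ, hword⟩ := h.exists_word_of_localDimAt_le hθ q (α + ε) (t - α * θ)
    have hexp : (α + ε) * θ + (t - α * θ) = t + |θ| * ε := by rw [abs_of_nonneg hθ]; ring
    exact ⟨C, κ, hκ, fun x hx δ hδ _ hle => hexp ▸ hword x hx δ hδ hle⟩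
  · obtain ⟨C, κ, hκ, hword⟩ := h.exists_word_of_le_localDimAt hθ hq (α - ε) (t - α * θ)
    have hexp : (α - ε) * θ + (t - α * θ) = t + |θ| * ε := by rw [abs_of_nonpos hθ]; ring
    exact ⟨C, κ, hκ, fun x hx δ hδ hge _ => hexp ▸ hword x hx δ hδ hge⟩

lemma exists_packCount_le (hq : ∀ i, 0 < q i) {α θ t : ℝ} (hlt : partitionSum r q α θ t < 1)
    (ε : ℝ) : ∃ K : ℝ, 0 < K ∧ ∀ δ ∈ Ioo (0 : ℝ) 1,
      packCount (h.selfSimilarMeasure q) α ε δ ≤ K * δ ^ (-(t + |θ| * ε)) := by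
  obtain ⟨C, κ, hκ, hword⟩ := h.exists_word_of_localDimAt hq α ε θ t
  obtain ⟨M, hM⟩ := exists_card_mul_le_tsum (E := Euc d) C
  set f : List ι → ℝ := fun w => wordProd q w ^ θ * wordProd r w ^ (t - α * θ)
  have hf w : 0 ≤ f w := mul_nonneg (Real.rpow_nonneg (wordProd_pos hq w).le _)
    (Real.rpow_nonneg (h.wordProd_ratio_pos w).le _)
  have hsum : Summable f :=
    summable_of_partitionSum_lt_one (fun i => (h.ratio_pos i).le) (fun i => (hq i).le) hlt
  have htsum : 0 ≤ ∑' w, f w := tsum_nonneg hf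
  refine ⟨M * (∑' w, f w) / κ + 1, by positivity, fun δ hδ => ?_⟩
  have hδs : 0 < δ ^ (-(t + |θ| * ε)) := Real.rpow_pos_of_pos hδ.1 _
  refine (Nat.le_floor_iff (by positivity)).1 (csSup_le' ?_)
  rintro n ⟨x, hsupp, hdisj, hdim⟩
  refine Nat.le_floor ?_
  choose v hdist hfv using fun j => hword (x j) (hsupp j) δ hδ (hdim j).1 (hdim j).2
  have hsep i j (hij : i ≠ j) : δ ≤ dist (x i) (x j) := by
    by_contra! hlt
    exact Set.disjoint_left.1 (hdisj i j hij) (mem_closedBall_self hδ.1.le)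
      (mem_closedBall.2 hlt.le)
  have hcard := hM (wordMap S · h.base) hf hsum hδ.1 hsep hdist hfv
    (mul_nonneg hκ.le (Real.rpow_nonneg hδ.1.le _))
  have hn : (n : ℝ) ≤ M * (∑' w, f w) / κ * δ ^ (-(t + |θ| * ε)) := by
    rwa [Real.rpow_neg hδ.1.le, ← div_eq_mul_inv, div_div,
      le_div_iff₀ (mul_pos hκ (Real.rpow_pos_of_pos hδ.1 _))]
  exact hn.trans (by gcongr; linarith)

lemma fCoarse_le (hq : ∀ i, 0 < q i) {α θ t : ℝ} (hlt : partitionSum r q α θ t < 1) :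
    fCoarse (h.selfSimilarMeasure q) α ≤ t := by
  have hlim : Tendsto (fun ε : ℝ => ((t + |θ| * ε : ℝ) : EReal)) (𝓝[>] 0) (𝓝 t) := by
    refine tendsto_nhdsWithin_of_tendsto_nhds ?_
    exact (continuous_coe_real_ereal.comp (by fun_prop)).tendsto' _ _ (by simp)
  refine ge_of_tendsto hlim ?_
  filter_upwards [self_mem_nhdsWithin] with ε hε
  obtain ⟨K, hK, hpack⟩ := h.exists_packCount_le hq hlt ε
  exact (iInf₂_le ε hε).trans (liminf_ratioE_le hK hpack)

end SeparatedIFS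

section BoxDimension

variable {X : Type*} [MetricSpace X]

lemma sum_ediam_rpow_le {n : ℕ} (x : Fin n → X) {s s' C δ : ℝ} (hs' : 0 ≤ s') (hC : 0 < C)
    (hδ : 0 < δ) (hn : (n : ℝ) ≤ δ ^ (-s)) :
    ∑ j, ediam (closedBall (x j) (C * δ)) ^ s' ≤
      ENNReal.ofReal ((2 * C) ^ s' * δ ^ (s' - s)) := by
  have hdiam j : ediam (closedBall (x j) (C * δ)) ^ s' ≤ ENNReal.ofReal ((2 * C * δ) ^ s') := by
    rw [← ENNReal.ofReal_rpow_of_pos (by positivity)]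
    gcongr
    refine ediam_le_of_forall_dist_le fun y hy z hz => ?_
    linarith [dist_triangle_right y z (x j), mem_closedBall.1 hy, mem_closedBall.1 hz]
  calc ∑ j, ediam (closedBall (x j) (C * δ)) ^ s'
      ≤ n • ENNReal.ofReal ((2 * C * δ) ^ s') := by
        simpa using Finset.sum_le_sum fun j (_ : j ∈ Finset.univ) => hdiam j
    _ = ENNReal.ofReal (n * (2 * C * δ) ^ s') := by
        rw [nsmul_eq_mul, ENNReal.ofReal_mul (by positivity), ENNReal.ofReal_natCast]
    _ ≤ ENNReal.ofReal (δ ^ (-s) * (2 * C * δ) ^ s') := by gcongr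
    _ = ENNReal.ofReal ((2 * C) ^ s' * δ ^ (s' - s)) := by
        rw [Real.mul_rpow (by positivity) hδ.le, mul_left_comm, ← Real.rpow_add hδ,
          neg_add_eq_sub]

lemma hausdorffMeasure_eq_zero_of_frequently_cover [MeasurableSpace X] [BorelSpace X] {A : Set X}
    {s s' C : ℝ} (hs' : 0 ≤ s') (hss : s < s') (hC : 0 < C)
    (h : ∃ᶠ δ : ℝ in 𝓝[>] 0, ∃ (n : ℕ) (x : Fin n → X), (n : ℝ) ≤ δ ^ (-s) ∧
      A ⊆ ⋃ j, closedBall (x j) (C * δ)) : Measure.hausdorffMeasure s' A = 0 := by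
  have hpos : ∀ᶠ δ : ℝ in 𝓝[>] 0, 0 < δ := self_mem_nhdsWithin
  obtain ⟨δ, hlim, hδ⟩ := exists_seq_forall_of_frequently (h.and_eventually hpos)
  choose n x hn hcover using fun k => (hδ k).1
  have hδ0 : Tendsto δ atTop (𝓝 0) := hlim.mono_right nhdsWithin_le_nhds
  have hle := Measure.hausdorffMeasure_le_liminf_sum s' A
    (fun k => ENNReal.ofReal (2 * C * δ k))
    (by simpa using ENNReal.tendsto_ofReal (hδ0.const_mul (2 * C)))
    (fun k j => closedBall (x k j) (C * δ k))
    (Eventually.of_forall fun k j => ediam_le_of_forall_dist_le fun y hy z hz => by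
      linarith [dist_triangle_right y z (x k j), mem_closedBall.1 hy, mem_closedBall.1 hz])
    (Eventually.of_forall hcover)
  have hzero : Tendsto (fun k => ENNReal.ofReal ((2 * C) ^ s' * δ k ^ (s' - s))) atTop (𝓝 0) := by
    have := (hδ0.rpow_const (Or.inr (sub_pos.2 hss).le)).const_mul ((2 * C) ^ s')
    rw [Real.zero_rpow (sub_pos.2 hss).ne', mul_zero] at this
    simpa using ENNReal.tendsto_ofReal this
  refine le_antisymm (hle.trans ?_) zero_le
  rw [← hzero.liminf_eq]
  exact liminf_le_liminf (Eventually.of_forall fun k =>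
    sum_ediam_rpow_le (x k) hs' hC (hδ k).2 (hn k))

lemma dimH_le_of_frequently_cover {A : Set X} {s : ℝ≥0} {C : ℝ} (hC : 0 < C)
    (h : ∃ᶠ δ : ℝ in 𝓝[>] 0, ∃ (n : ℕ) (x : Fin n → X), (n : ℝ) ≤ δ ^ (-(s : ℝ)) ∧
      A ⊆ ⋃ j, closedBall (x j) (C * δ)) : dimH A ≤ s := by
  borelize X
  refine ENNReal.le_of_forall_pos_le_add fun ε hε _ => ?_
  rw [← ENNReal.coe_add]
  refine dimH_le_of_hausdorffMeasure_ne_top ?_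
  have hzero := hausdorffMeasure_eq_zero_of_frequently_cover (s + ε).2
    (NNReal.coe_lt_coe.2 (lt_add_of_pos_right s hε)) hC h
  exact ne_of_eq_of_ne hzero ENNReal.zero_ne_top

end BoxDimension

section Packing

variable {d : ℕ} {μ : ProbabilityMeasure (Euc d)} {α ε δ : ℝ}

/-- The points of the support at which the ball of radius `δ` has local dimension within `ε` of
`α`: the admissible centres in the definition of `packCount`. -/
def coarseLevelSet (μ : ProbabilityMeasure (Euc d)) (α ε δ : ℝ) : Set (Euc d) :=
  {x | x ∈ suppSet μ ∧ α - ε ≤ localDimAt μ x δ ∧ localDimAt μ x δ ≤ α + ε}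

lemma card_le_rpow_of_disjoint (hδ : δ ∈ Ioo (0 : ℝ) 1) {n : ℕ} {x : Fin n → Euc d}
    (hx : ∀ j, x j ∈ coarseLevelSet μ α ε δ)
    (hdisj : Pairwise fun j k => Disjoint (closedBall (x j) δ) (closedBall (x k) δ)) :
    (n : ℝ) ≤ δ ^ (-(α + ε)) := by
  have hsum : ∑ j, (μ (closedBall (x j) δ) : ℝ) ≤ 1 := by
    have hunion := measure_iUnion (μ := μ.toMeasure) hdisj fun j => measurableSet_closedBall
    rw [tsum_fintype] at hunion
    simp only [← ProbabilityMeasure.ennreal_coeFn_eq_coeFn_toMeasure] at hunion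
    exact_mod_cast hunion.symm.trans_le (ENNReal.coe_le_coe.2 (μ.apply_le_one _))
  have hle := Finset.card_nsmul_le_sum Finset.univ (fun j => (μ (closedBall (x j) δ) : ℝ)) _
    fun j _ => rpow_le_measure_of_localDimAt_le (hx j).1 hδ (hx j).2.2
  rw [Finset.card_fin, nsmul_eq_mul] at hle
  rw [Real.rpow_neg hδ.1.le, ← one_div, le_div_iff₀ (Real.rpow_pos_of_pos hδ.1 _)]
  exact hle.trans hsum

lemma bddAbove_packCount (hδ : δ ∈ Ioo (0 : ℝ) 1) : BddAbove {n : ℕ | ∃ x : Fin n → Euc d,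
    (∀ j, x j ∈ suppSet μ) ∧
    (∀ j k, j ≠ k → Disjoint (closedBall (x j) δ) (closedBall (x k) δ)) ∧
    ∀ j, α - ε ≤ localDimAt μ (x j) δ ∧ localDimAt μ (x j) δ ≤ α + ε} := by
  refine ⟨⌊δ ^ (-(α + ε))⌋₊, ?_⟩
  rintro n ⟨x, hsupp, hdisj, hdim⟩
  exact Nat.le_floor (card_le_rpow_of_disjoint hδ (fun j => ⟨hsupp j, hdim j⟩) hdisj)

lemma le_packCount (hδ : δ ∈ Ioo (0 : ℝ) 1) {n : ℕ} {x : Fin n → Euc d}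
    (hx : ∀ j, x j ∈ coarseLevelSet μ α ε δ)
    (hdisj : Pairwise fun j k => Disjoint (closedBall (x j) δ) (closedBall (x k) δ)) :
    n ≤ packCount μ α ε δ :=
  le_csSup (bddAbove_packCount hδ) ⟨x, fun j => (hx j).1, hdisj, fun j => (hx j).2⟩

lemma exists_packing_packCount (hδ : δ ∈ Ioo (0 : ℝ) 1) :
    ∃ x : Fin (packCount μ α ε δ) → Euc d, (∀ j, x j ∈ coarseLevelSet μ α ε δ) ∧
      Pairwise fun j k => Disjoint (closedBall (x j) δ) (closedBall (x k) δ) := by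
  refine Exists.imp (fun x hx => ⟨fun j => ⟨hx.1 j, hx.2.2 j⟩, hx.2.1⟩)
    (Nat.sSup_mem ?_ (bddAbove_packCount (μ := μ) (α := α) (ε := ε) hδ))
  exact ⟨0, Fin.elim0, fun j => j.elim0, fun j => j.elim0, fun j => j.elim0⟩

-- A maximal packing turns into a cover on doubling its balls.
lemma exists_coarseLevelSet_subset_iUnion (hδ : δ ∈ Ioo (0 : ℝ) 1) :
    ∃ x : Fin (packCount μ α ε δ) → Euc d,
      coarseLevelSet μ α ε δ ⊆ ⋃ j, closedBall (x j) (2 * δ) := by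
  obtain ⟨x, hx, hdisj⟩ := exists_packing_packCount (μ := μ) (α := α) (ε := ε) hδ
  refine ⟨x, fun y hy => ?_⟩
  by_contra hfar
  simp only [mem_iUnion, mem_closedBall, not_exists, not_le] at hfar
  have hy' j : Disjoint (closedBall y δ) (closedBall (x j) δ) :=
    closedBall_disjoint_closedBall (by linarith [hfar j])
  have hle : packCount μ α ε δ + 1 ≤ packCount μ α ε δ := by
    refine le_packCount (x := Fin.cons y x) hδ (Fin.cases hy hx) fun j k => ?_
    refine Fin.cases (Fin.cases ?_ fun k _ => ?_) (fun j => Fin.cases ?_ fun k hjk => ?_) j k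
    · exact fun h => absurd rfl h
    · exact hy' k
    · exact fun _ => (hy' j).symm
    · exact hdisj fun h => hjk (congrArg Fin.succ h)
  omega

lemma dimH_le_of_frequently_packCount_le {A : Set (Euc d)} {s : ℝ≥0}
    (hA : ∀ x ∈ A, ∀ᶠ δ in 𝓝[>] 0, x ∈ coarseLevelSet μ α ε δ)
    (hpack : ∃ᶠ δ in 𝓝[>] 0, (packCount μ α ε δ : ℝ) ≤ δ ^ (-(s : ℝ))) : dimH A ≤ s := by
  have hA_subset : A ⊆ ⋃ m : ℕ, {x | ∀ δ ∈ Ioo (0 : ℝ) (1 / (m + 1)),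
      x ∈ coarseLevelSet μ α ε δ} := by
    intro x hx
    obtain ⟨η, hη, hsub⟩ := mem_nhdsGT_iff_exists_Ioo_subset.1 (hA x hx)
    obtain ⟨m, hm⟩ := exists_nat_one_div_lt (mem_Ioi.1 hη)
    exact mem_iUnion.2 ⟨m, fun δ hδ => hsub ⟨hδ.1, hδ.2.trans hm⟩⟩
  refine (dimH_mono hA_subset).trans ?_
  rw [dimH_iUnion]
  refine iSup_le fun m => dimH_le_of_frequently_cover two_pos ?_
  have hsmall : ∀ᶠ δ : ℝ in 𝓝[>] 0, δ ∈ Ioo (0 : ℝ) (1 / (m + 1)) ∧ δ ∈ Ioo (0 : ℝ) 1 := by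
    filter_upwards [Ioo_mem_nhdsGT (show (0 : ℝ) < 1 / (m + 1) by positivity),
      Ioo_mem_nhdsGT (one_pos (α := ℝ))] with δ hm h1 using ⟨hm, h1⟩
  refine (hpack.and_eventually hsmall).mono fun δ hδ => ?_
  obtain ⟨x, hcover⟩ := exists_coarseLevelSet_subset_iUnion (μ := μ) (α := α) (ε := ε) hδ.2.2
  exact ⟨_, x, hδ.1, fun y hy => hcover (hy δ hδ.2.1)⟩

lemma natCast_le_rpow_of_ratioE_lt {m : ℕ} {s : ℝ} (hδ : δ ∈ Ioo (0 : ℝ) 1)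
    (h : ratioE m δ < s) : (m : ℝ) ≤ δ ^ (-s) := by
  have hpow : 0 < δ ^ (-s) := Real.rpow_pos_of_pos hδ.1 _
  have hlog := Real.log_neg hδ.1 hδ.2
  rw [ratioE] at h
  split_ifs at h with h0
  · simpa [h0] using hpow.le
  · have hm : (0 : ℝ) < m := by exact_mod_cast Nat.pos_of_ne_zero h0
    rw [EReal.coe_lt_coe_iff, div_lt_iff₀ (neg_pos.2 hlog)] at h
    rw [← Real.log_le_log_iff hm hpow, Real.log_rpow hδ.1]
    linarith

lemma ratioE_nonneg {m : ℕ} (hm : m ≠ 0) (hδ : δ ∈ Ioo (0 : ℝ) 1) : 0 ≤ ratioE m δ := by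
  rw [ratioE, if_neg hm]
  exact EReal.coe_nonneg.2 (div_nonneg (Real.log_natCast_nonneg m)
    (neg_nonneg.2 (Real.log_nonpos hδ.1.le hδ.2.le)))

lemma eventually_mem_coarseLevelSet (hε : 0 < ε) {x : Euc d} (hx : x ∈ suppSet μ)
    (hlim : Tendsto (localDimAt μ x) (𝓝[>] 0) (𝓝 α)) :
    ∀ᶠ δ in 𝓝[>] 0, x ∈ coarseLevelSet μ α ε δ := by
  filter_upwards [hlim (Icc_mem_nhds (sub_lt_self α hε) (lt_add_of_pos_right α hε))]
    with δ hδ using ⟨hx, hδ⟩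

theorem fHaus_le_fCoarse (μ : ProbabilityMeasure (Euc d)) (α : ℝ) : fHaus μ α ≤ fCoarse μ α := by
  rw [fHaus, dimHE]
  split_ifs with hne
  · exact bot_le
  obtain ⟨x, hx, hlim⟩ := nonempty_iff_ne_empty.2 hne
  refine le_iInf₂ fun ε hε => EReal.le_of_forall_lt_iff_le.1 fun s hs => ?_
  have hsmall : ∀ᶠ δ : ℝ in 𝓝[>] 0, δ ∈ Ioo (0 : ℝ) 1 := Ioo_mem_nhdsGT one_pos
  have hfreq := (frequently_lt_of_liminf_lt (by isBoundedDefault) hs).and_eventually hsmall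
  have hs0 : 0 ≤ s := by
    obtain ⟨δ, ⟨hlt, hδ⟩, hxδ⟩ :=
      (hfreq.and_eventually (eventually_mem_coarseLevelSet hε hx hlim)).exists
    have hcount : 1 ≤ packCount μ α ε δ :=
      le_packCount (x := fun _ => x) hδ (fun _ => hxδ) (Subsingleton.pairwise)
    exact_mod_cast (ratioE_nonneg (by omega) hδ).trans hlt.le
  lift s to ℝ≥0 using hs0
  rw [← EReal.coe_nnreal_eq_coe_real]
  refine EReal.coe_ennreal_le_coe_ennreal_iff.2 (dimH_le_of_frequently_packCount_le (ε := ε)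
    (fun y hy => eventually_mem_coarseLevelSet hε hy.1 hy.2) ?_)
  exact hfreq.mono fun δ hδ => natCast_le_rpow_of_ratioE_lt hδ.2 hδ.1

end Packing

section TypicalWords

variable {ι : Type*}

lemma neg_log_wordProd_prefixWord {b : ι → ℝ} {j : ℕ → ι} (hb : ∀ k, b (j k) ≠ 0) (n : ℕ) :
    -Real.log (wordProd b (prefixWord j n)) = ∑ k ∈ Finset.range n, -Real.log (b (j k)) := by
  rw [log_wordProd (by simp [prefixWord, hb]), prefixWord, List.map_map, Finset.sum_neg_distrib]
  rfl

lemma eventually_wordProd_lt_rpow {q r : ι → ℝ} {j : ℕ → ι} {s a b : ℝ}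
    (hq : ∀ n, 0 < wordProd q (prefixWord j n)) (hr : ∀ n, 0 < wordProd r (prefixWord j n))
    (hqlim : Tendsto (fun n : ℕ => -Real.log (wordProd q (prefixWord j n)) / n) atTop (𝓝 a))
    (hrlim : Tendsto (fun n : ℕ => -Real.log (wordProd r (prefixWord j n)) / n) atTop (𝓝 b))
    (hab : s * b < a) :
    ∀ᶠ n in atTop, wordProd q (prefixWord j n) < wordProd r (prefixWord j n) ^ s := by
  filter_upwards [(hrlim.const_mul s).eventually_lt hqlim hab, eventually_gt_atTop 0] with n hn hn0
  rw [← mul_div_assoc, div_lt_div_iff_of_pos_right (by exact_mod_cast hn0)] at hn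
  rw [← Real.log_lt_log_iff (hq n) (Real.rpow_pos_of_pos (hr n) _), Real.log_rpow (hr n)]
  linarith

variable [Fintype ι]

lemma SeparatedIFS.crossEntropy_ratio_pos {X : Type*} [MetricSpace X] {S : ι → X → X} {r : ι → ℝ}
    (h : SeparatedIFS S r) (q : stdSimplex ℝ ι) : 0 < crossEntropy q r := by
  have hlog i : 0 < -Real.log (r i) := neg_pos.2 (Real.log_neg (h.ratio_pos i) (h.ratio_lt_one i))
  obtain ⟨i, -, hi⟩ := Finset.exists_ne_zero_of_sum_ne_zero
    (ne_of_eq_of_ne (stdSimplex.sum_eq_one q) one_ne_zero)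
  exact Finset.sum_pos' (fun k _ => mul_nonneg (stdSimplex.zero_le q k) (hlog k).le)
    ⟨i, Finset.mem_univ i, mul_pos ((stdSimplex.zero_le q i).lt_of_ne' hi) (hlog i)⟩

variable [MeasurableSpace ι] [MeasurableSingletonClass ι]

lemma ae_tendsto_neg_log_wordProd_div (q : stdSimplex ℝ ι) {b : ι → ℝ}
    (hb : ∀ i, 0 < q i → b i ≠ 0) :
    ∀ᵐ j ∂bernoulliMeasure q, Tendsto (fun n : ℕ => -Real.log (wordProd b (prefixWord j n)) / n)
      atTop (𝓝 (crossEntropy q b)) := by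
  filter_upwards [ae_forall_pos q, ae_tendsto_average q fun i => -Real.log (b i)] with j hj hlim
  simpa only [neg_log_wordProd_prefixWord fun k => hb _ (hj k), crossEntropy] using hlim

lemma ae_eventually_lt_wordProd (q : stdSimplex ℝ ι) {A : List ι → ℝ} {W : Set (List ι)}
    (hA : Summable fun w : W => A w) :
    ∀ᵐ j ∂bernoulliMeasure q, ∀ᶠ n in atTop, prefixWord j n ∈ W →
      A (prefixWord j n) < wordProd q (prefixWord j n) := by
  let E (w : List ι) : Set (ℕ → ι) := {j | prefixWord j w.length = w ∧ w ∈ W ∧ wordProd q w ≤ A w}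
  have hE_le (w : List ι) : bernoulliMeasure q (E w) ≤ ENNReal.ofReal (W.indicator A w) := by
    by_cases hw : w ∈ W ∧ wordProd q w ≤ A w
    · rw [indicator_of_mem hw.1]
      refine (measure_mono fun j hj => hj.1).trans ((bernoulliMeasure_word q w).trans_le ?_)
      exact ENNReal.ofReal_le_ofReal hw.2
    · simp [E, hw]
  have hE : ∑' w, bernoulliMeasure q (E w) ≠ ∞ := ne_top_of_le_ne_top
    (summable_subtype_iff_indicator.1 hA).tsum_ofReal_ne_top (ENNReal.tsum_le_tsum hE_le)
  filter_upwards [ae_finite_setOfPred_mem hE] with j hj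
  have hinj : Function.Injective (prefixWord j) := fun m n hmn => by
    simpa using congrArg List.length hmn
  refine (Nat.cofinite_eq_atTop ▸ hinj.tendsto_cofinite).eventually
    (hj.eventually_cofinite_notMem) |>.mono fun n hn hnW => ?_
  by_contra! hle
  exact hn ⟨by simp, hnW, hle⟩

end TypicalWords

theorem SeparatedIFS.le_zetaAbscissa {N : ℕ} {X : Type*} [MetricSpace X] {S : Fin N → X → X}
    {r p : Fin N → ℝ} (h : SeparatedIFS S r) (hp : ∀ i, p i ≠ 0) (q : stdSimplex ℝ (Fin N))
    {α t ε : ℝ} (hα : crossEntropy q p = α * crossEntropy q r)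
    (ht : t * crossEntropy q r ≤ crossEntropy q q) (hε : 0 < ε) : t ≤ zetaAbscissa r p α ε := by
  refine le_sInf ?_
  rintro _ ⟨s, hs, rfl⟩
  by_contra! hst
  obtain ⟨j, hpos, hBC, hplim, hrlim, hqlim⟩ := ((ae_forall_pos q).and
    ((ae_eventually_lt_wordProd q (A := fun w => wordProd r w ^ s) hs).and
    ((ae_tendsto_neg_log_wordProd_div q fun i _ => hp i).and
    ((ae_tendsto_neg_log_wordProd_div q fun i _ => (h.ratio_pos i).ne').and
    (ae_tendsto_neg_log_wordProd_div q fun i hi => hi.ne'))))).exists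
  have hratio : ∀ᶠ n : ℕ in atTop, |Real.log (wordProd p (prefixWord j n)) /
      Real.log (wordProd r (prefixWord j n)) - α| ≤ ε := by
    have hlim := hplim.div hrlim (h.crossEntropy_ratio_pos q).ne'
    rw [hα, mul_div_cancel_right₀ _ (h.crossEntropy_ratio_pos q).ne'] at hlim
    filter_upwards [hlim (closedBall_mem_nhds α hε), eventually_ne_atTop 0] with n hn hn0
    rwa [mem_preimage, Pi.div_apply, div_div_div_cancel_right₀ (Nat.cast_ne_zero.2 hn0),
      neg_div_neg_eq] at hn
  have hst' := mul_lt_mul_of_pos_right (EReal.coe_lt_coe_iff.1 hst) (h.crossEntropy_ratio_pos q)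
  have hsmall := eventually_wordProd_lt_rpow (s := s)
    (fun n => List.prod_pos (by simpa [prefixWord] using fun k _ => hpos k))
    (fun n => h.wordProd_ratio_pos _) hqlim hrlim
    (hst'.trans_le ht)
  obtain ⟨n, hn, hratio, hsmall, hn0⟩ :=
    (hBC.and (hratio.and (hsmall.and (eventually_ne_atTop 0)))).exists
  have hne : prefixWord j n ≠ [] := fun h0 => hn0 (by simpa using congrArg List.length h0)
  exact hsmall.not_gt (hn ⟨hne, hratio⟩)

section MassDistribution

variable {Ω X : Type*} [MeasurableSpace Ω] {ν : Measure Ω} [MetricSpace X] {g : Ω → X}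

lemma measure_preimage_le_ediam_rpow {x : X} {A : Set X} {s ε : ℝ} (hs : 0 ≤ s) (hx : x ∈ A)
    (hA : ediam A < ENNReal.ofReal ε)
    (hb : ∀ ρ ∈ Ioo 0 ε, ν (g ⁻¹' closedBall x ρ) ≤ ENNReal.ofReal (ρ ^ s)) :
    ν (g ⁻¹' A) ≤ ediam A ^ s := by
  have hdiam : ENNReal.ofReal (diam A) = ediam A := ENNReal.ofReal_toReal hA.ne_top
  have hlim : Tendsto (fun ρ : ℝ => ENNReal.ofReal (ρ ^ s)) (𝓝[>] diam A) (𝓝 (ediam A ^ s)) := by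
    rw [← hdiam, ENNReal.ofReal_rpow_of_nonneg diam_nonneg hs]
    exact (ENNReal.continuous_ofReal.comp (Real.continuous_rpow_const hs)).continuousWithinAt
  refine ge_of_tendsto hlim ?_
  filter_upwards [Ioo_mem_nhdsGT (ENNReal.ofReal_lt_ofReal_iff'.1 (hdiam.trans_lt hA)).1] with ρ hρ
  refine (measure_mono (preimage_mono fun y hy => ?_)).trans
    (hb ρ ⟨diam_nonneg.trans_lt hρ.1, hρ.2⟩)
  exact (dist_le_diam_of_mem (isBounded_iff_ediam_ne_top.2 hA.ne_top) hy hx).trans hρ.1.le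

variable [MeasurableSpace X] [BorelSpace X]

theorem measure_le_hausdorffMeasure_of_forall_closedBall {G : Set Ω} {A : Set X} {s ε : ℝ}
    (hs : 0 ≤ s) (hε : 0 < ε) (hGA : MapsTo g G A) (hb : ∀ ω ∈ G, ∀ ρ ∈ Ioo 0 ε,
      ν (g ⁻¹' closedBall (g ω) ρ) ≤ ENNReal.ofReal (ρ ^ s)) :
    ν G ≤ Measure.hausdorffMeasure s A := by
  let m : OuterMeasure X := OuterMeasure.map g (OuterMeasure.restrict G ν.toOuterMeasure)
  have hm (B : Set X) : m B = ν (g ⁻¹' B ∩ G) := by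
    rw [OuterMeasure.map_apply, OuterMeasure.restrict_apply]
    rfl
  have hle : m ≤ OuterMeasure.mkMetric fun r => r ^ s := by
    refine OuterMeasure.le_mkMetric _ _ (ENNReal.ofReal (ε / 2)) (by simpa using hε) fun B hB => ?_
    rw [hm]
    rcases (g ⁻¹' B ∩ G).eq_empty_or_nonempty with hempty | ⟨ω, hωB, hωG⟩
    · simp [hempty]
    · refine (measure_mono inter_subset_left).trans
        (measure_preimage_le_ediam_rpow hs hωB (hB.trans_lt ?_) (hb ω hωG))
      exact (ENNReal.ofReal_lt_ofReal_iff hε).2 (half_lt_self hε)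
  calc ν G ≤ m A := (hm A).symm ▸ measure_mono fun ω hω => ⟨hGA hω, hω⟩
    _ ≤ OuterMeasure.mkMetric (fun r => r ^ s) A := hle A
    _ = Measure.hausdorffMeasure s A := by
      rw [Measure.hausdorffMeasure, ← OuterMeasure.coe_mkMetric]

omit [MeasurableSpace X] [BorelSpace X] in
theorem le_dimH_of_ae_eventually_closedBall [NeZero ν] {A : Set X} {s : ℝ≥0}
    (hb : ∀ᵐ ω ∂ν, g ω ∈ A ∧ ∀ᶠ ρ in 𝓝[>] (0 : ℝ),
      ν (g ⁻¹' closedBall (g ω) ρ) ≤ ENNReal.ofReal (ρ ^ (s : ℝ))) : s ≤ dimH A := by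
  borelize X
  let G (m : ℕ) : Set Ω := {ω | g ω ∈ A ∧ ∀ ρ ∈ Ioo (0 : ℝ) (1 / (m + 1)),
    ν (g ⁻¹' closedBall (g ω) ρ) ≤ ENNReal.ofReal (ρ ^ (s : ℝ))}
  have hG : ∀ᵐ ω ∂ν, ω ∈ ⋃ m, G m := hb.mono fun ω hω => by
    obtain ⟨ε, hε, hsub⟩ := mem_nhdsGT_iff_exists_Ioo_subset.1 hω.2
    obtain ⟨m, hm⟩ := exists_nat_one_div_lt (mem_Ioi.1 hε)
    exact mem_iUnion.2 ⟨m, hω.1, fun ρ hρ => hsub ⟨hρ.1, hρ.2.trans hm⟩⟩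
  obtain ⟨m, hm⟩ : ∃ m, ν (G m) ≠ 0 := by
    by_contra! hnull
    obtain ⟨ω, hω, hω'⟩ := (hG.and (measure_eq_zero_iff_ae_notMem.1
      (measure_iUnion_null hnull))).exists
    exact hω' hω
  exact le_dimH_of_hausdorffMeasure_ne_zero ((pos_iff_ne_zero.2 hm).trans_le
    (measure_le_hausdorffMeasure_of_forall_closedBall s.2 (by positivity) (fun ω hω => hω.1)
      fun ω hω => hω.2)).ne'

end MassDistribution

section Scales

/-- A null sequence of radii decaying slowly enough that power laws along it are power laws at all
small radii. -/
structure IsScaleSequence (ρ : ℕ → ℝ) : Prop where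
  pos : ∀ k, 0 < ρ k
  tendsto_zero : Tendsto ρ atTop (𝓝 0)
  tendsto_log_succ_div : Tendsto (fun k => Real.log (ρ (k + 1)) / Real.log (ρ k)) atTop (𝓝 1)

namespace IsScaleSequence

variable {ρ M : ℕ → ℝ} {F : ℝ → ℝ} {b b' c D : ℝ}

lemma of_tendsto_neg_log_div {a : ℕ → ℝ} {l : ℝ} (hpos : ∀ k, 0 < ρ k) (hl : 0 < l)
    (ha : Tendsto a atTop atTop) (hsucc : Tendsto (fun k => a (k + 1) / a k) atTop (𝓝 1))
    (hlim : Tendsto (fun k => -Real.log (ρ k) / a k) atTop (𝓝 l)) : IsScaleSequence ρ where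
  pos := hpos
  tendsto_zero := by
    have hlog : Tendsto (fun k => -Real.log (ρ k)) atTop atTop :=
      (hlim.pos_mul_atTop hl ha).congr' <| by
        filter_upwards [ha.eventually_ne_atTop 0] with k hk using div_mul_cancel₀ _ hk
    refine (Real.tendsto_exp_neg_atTop_nhds_zero.comp hlog).congr fun k => ?_
    simp [Real.exp_log (hpos k)]
  tendsto_log_succ_div := by
    have hdiv := ((hlim.comp (tendsto_add_atTop_nat 1)).div hlim hl.ne').mul hsucc
    rw [div_self hl.ne', mul_one] at hdiv
    refine hdiv.congr' ?_
    filter_upwards [ha.eventually_ne_atTop 0,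
      (tendsto_add_atTop_nat 1).eventually (ha.eventually_ne_atTop 0)] with k hk hk'
    simp only [Pi.div_apply, Function.comp_apply]
    rw [div_mul_div_comm, mul_comm, neg_div, neg_div]
    field_simp

lemma tendsto_log_atBot (h : IsScaleSequence ρ) :
    Tendsto (fun k => Real.log (ρ k)) atTop atBot :=
  Real.tendsto_log_nhdsGT_zero.comp
    (tendsto_nhdsWithin_iff.2 ⟨h.tendsto_zero, Eventually.of_forall h.pos⟩)

lemma tendsto_log_mul_const_div (h : IsScaleSequence ρ) (hb : 0 < b) :
    Tendsto (fun k => Real.log (ρ k * b) / Real.log (ρ k)) atTop (𝓝 1) := by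
  have hlim := (h.tendsto_log_atBot.const_div_atBot (r := Real.log b)).const_add 1
  rw [add_zero] at hlim
  refine hlim.congr' ?_
  filter_upwards [h.tendsto_log_atBot.eventually_ne_atBot 0] with k hk
  rw [Real.log_mul (h.pos k).ne' hb.ne', add_div, div_self hk]

lemma mul_const (h : IsScaleSequence ρ) (hb : 0 < b) : IsScaleSequence fun k => ρ k * b where
  pos k := mul_pos (h.pos k) hb
  tendsto_zero := by simpa using h.tendsto_zero.mul_const b
  tendsto_log_succ_div := by
    have hlim := (((h.tendsto_log_mul_const_div hb).comp (tendsto_add_atTop_nat 1)).mul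
      h.tendsto_log_succ_div).div (h.tendsto_log_mul_const_div hb) one_ne_zero
    rw [mul_one, div_one] at hlim
    refine hlim.congr' ?_
    filter_upwards [h.tendsto_log_atBot.eventually_ne_atBot 0,
      (tendsto_add_atTop_nat 1).eventually (h.tendsto_log_atBot.eventually_ne_atBot 0)]
      with k hk hk'
    simp only [Pi.div_apply, Function.comp_apply]
    rw [div_mul_div_cancel₀ hk', div_div_div_cancel_right₀ hk]

lemma tendsto_log_div_log_mul_const (h : IsScaleSequence ρ) (hb : 0 < b)
    (hM : Tendsto (fun k => Real.log (M k) / Real.log (ρ k)) atTop (𝓝 D)) :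
    Tendsto (fun k => Real.log (M k) / Real.log (ρ k * b)) atTop (𝓝 D) := by
  have hlim := hM.div (h.tendsto_log_mul_const_div hb) one_ne_zero
  rw [div_one] at hlim
  refine hlim.congr' ?_
  filter_upwards [h.tendsto_log_atBot.eventually_ne_atBot 0] with k hk
  exact div_div_div_cancel_right₀ hk _ _

lemma eventually_exists_mem_Ioc (h : IsScaleSequence ρ) {Q : ℕ → Prop} (hQ : ∀ᶠ k in atTop, Q k) :
    ∀ᶠ x : ℝ in 𝓝[>] 0, ∃ k, Q k ∧ x ∈ Ioc (ρ (k + 1)) (ρ k) := by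
  obtain ⟨K, hK⟩ := eventually_atTop.1 hQ
  filter_upwards [Ioo_mem_nhdsGT (h.pos K)] with x hx
  have hex : ∃ n, ρ (K + n) < x := by
    obtain ⟨k, hk, hKk⟩ := ((h.tendsto_zero.eventually_lt_const hx.1).and
      (eventually_ge_atTop K)).exists
    exact ⟨k - K, by rwa [Nat.add_sub_cancel' hKk]⟩
  obtain ⟨n, hn⟩ : ∃ n, Nat.find hex = n + 1 :=
    Nat.exists_eq_succ_of_ne_zero fun h0 => hx.2.not_gt (by simpa [h0] using Nat.find_spec hex)
  exact ⟨K + n, hK _ (by omega), by simpa [hn, add_assoc] using Nat.find_spec hex,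
    not_lt.1 (Nat.find_min hex (by omega))⟩

lemma eventually_log_neg (h : IsScaleSequence ρ) : ∀ᶠ k in atTop, Real.log (ρ k) < 0 :=
  h.tendsto_log_atBot.eventually_lt_atBot 0

lemma eventually_le_rpow (h : IsScaleSequence ρ) (hF : Monotone F) (hMpos : ∀ k, 0 < M k)
    (hM : Tendsto (fun k => Real.log (M k) / Real.log (ρ k)) atTop (𝓝 D))
    (hFM : ∀ᶠ k in atTop, F (ρ k) ≤ M k) (hc : c < D) : ∀ᶠ x in 𝓝[>] 0, F x ≤ x ^ c := by
  have hsucc := h.tendsto_log_succ_div.const_mul c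
  rw [mul_one] at hsucc
  have hev : ∀ᶠ k in atTop, F (ρ k) ≤ M k ∧ Real.log (M k) ≤ c * Real.log (ρ k) ∧
      Real.log (M k) ≤ c * Real.log (ρ (k + 1)) := by
    filter_upwards [hFM, hM.eventually_const_le hc,
      (hsucc.eventually_lt hM hc).mono fun _ => le_of_lt, h.eventually_log_neg]
      with k hk hk₀ hk₁ hneg
    rw [← mul_div_assoc] at hk₁
    exact ⟨hk, (le_div_iff_of_neg hneg).1 hk₀, (div_le_div_right_of_neg hneg).1 hk₁⟩
  filter_upwards [h.eventually_exists_mem_Ioc hev, self_mem_nhdsWithin]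
    with x ⟨k, ⟨hFk, hk₀, hk₁⟩, hlt, hle⟩ (hx : 0 < x)
  refine (hF hle).trans (hFk.trans ?_)
  rw [← Real.log_le_log_iff (hMpos k) (Real.rpow_pos_of_pos hx _), Real.log_rpow hx]
  have hlt' := Real.log_le_log (h.pos _) hlt.le
  have hle' := Real.log_le_log hx hle
  rcases le_total 0 c with hc0 | hc0 <;> nlinarith

lemma eventually_rpow_le (h : IsScaleSequence ρ) (hF : Monotone F) (hMpos : ∀ k, 0 < M k)
    (hM : Tendsto (fun k => Real.log (M k) / Real.log (ρ k)) atTop (𝓝 D))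
    (hFM : ∀ᶠ k in atTop, M k ≤ F (ρ k)) (hc : D < c) : ∀ᶠ x in 𝓝[>] 0, x ^ c ≤ F x := by
  have hsucc := h.tendsto_log_succ_div.const_mul c
  rw [mul_one] at hsucc
  have hMsucc : Tendsto (fun k => Real.log (M (k + 1)) / Real.log (ρ k)) atTop (𝓝 D) := by
    have hlim := (hM.comp (tendsto_add_atTop_nat 1)).mul h.tendsto_log_succ_div
    rw [mul_one] at hlim
    refine hlim.congr' ?_
    filter_upwards [(tendsto_add_atTop_nat 1).eventually h.eventually_log_neg] with k hk
    exact div_mul_div_cancel₀ hk.ne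
  have hev : ∀ᶠ k in atTop, M (k + 1) ≤ F (ρ (k + 1)) ∧
      c * Real.log (ρ k) ≤ Real.log (M (k + 1)) ∧
      c * Real.log (ρ (k + 1)) ≤ Real.log (M (k + 1)) := by
    filter_upwards [(tendsto_add_atTop_nat 1).eventually hFM, hMsucc.eventually_le_const hc,
      hMsucc.eventually_lt hsucc hc, h.eventually_log_neg] with k hk hk₀ hk₁ hneg
    rw [← mul_div_assoc] at hk₁
    exact ⟨hk, (div_le_iff_of_neg hneg).1 hk₀, (div_le_div_right_of_neg hneg).1 hk₁.le⟩
  filter_upwards [h.eventually_exists_mem_Ioc hev, self_mem_nhdsWithin]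
    with x ⟨k, ⟨hFk, hk₀, hk₁⟩, hlt, hle⟩ (hx : 0 < x)
  refine le_trans ?_ (hFk.trans (hF hlt.le))
  rw [← Real.log_le_log_iff (Real.rpow_pos_of_pos hx _) (hMpos _), Real.log_rpow hx]
  have hlt' := Real.log_le_log (h.pos _) hlt.le
  have hle' := Real.log_le_log hx hle
  rcases le_total 0 c with hc0 | hc0 <;> nlinarith

lemma tendsto_log_div_log (h : IsScaleSequence ρ) (hF : Monotone F) (hFpos : ∀ x, 0 < x → 0 < F x)
    (hMpos : ∀ k, 0 < M k) (hM : Tendsto (fun k => Real.log (M k) / Real.log (ρ k)) atTop (𝓝 D))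
    (hb : 0 < b) (hle : ∀ᶠ k in atTop, F (ρ k * b) ≤ M k)
    (hb' : 0 < b') (hge : ∀ᶠ k in atTop, M k ≤ F (ρ k * b')) :
    Tendsto (fun x => Real.log (F x) / Real.log x) (𝓝[>] 0) (𝓝 D) := by
  refine tendsto_order.2 ⟨fun c hc => ?_, fun c hc => ?_⟩
  · obtain ⟨c', hcc', hc'⟩ := exists_between hc
    filter_upwards [(h.mul_const hb).eventually_le_rpow hF hMpos
      (h.tendsto_log_div_log_mul_const hb hM) hle hc', Ioo_mem_nhdsGT one_pos] with x hx hx01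
    refine hcc'.trans_le ?_
    rw [le_div_iff_of_neg (Real.log_neg hx01.1 hx01.2), ← Real.log_rpow hx01.1]
    exact Real.log_le_log (hFpos x hx01.1) hx
  · obtain ⟨c', hc', hcc'⟩ := exists_between hc
    filter_upwards [(h.mul_const hb').eventually_rpow_le hF hMpos
      (h.tendsto_log_div_log_mul_const hb' hM) hge hc', Ioo_mem_nhdsGT one_pos] with x hx hx01
    refine lt_of_le_of_lt ?_ hcc'
    rw [div_le_iff_of_neg (Real.log_neg hx01.1 hx01.2), ← Real.log_rpow hx01.1]
    exact Real.log_le_log (Real.rpow_pos_of_pos hx01.1 _) hx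

end IsScaleSequence

end Scales

section InsertMarker

variable {ι : Type*}

/-- The sequence `j` with the word `u` written over it from every position `k ^ 2`, `k ≥ |u|`, on.
The marked positions have density zero. -/
def insertMarker (u : List ι) (j : ℕ → ι) (n : ℕ) : ι :=
  if u.length ≤ n.sqrt then u.getD (n - n.sqrt ^ 2) (j n) else j n

/-- The positions below `k ^ 2` at distance at least `L` from the preceding square, where no word of
length `L` is written by `insertMarker`. -/
def unmarkedPositions (L k : ℕ) : Finset ℕ := {n ∈ Finset.range (k ^ 2) | L ≤ n - n.sqrt ^ 2}

lemma insertMarker_of_le {u : List ι} {j : ℕ → ι} {n : ℕ} (hn : u.length ≤ n - n.sqrt ^ 2) :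
    insertMarker u j n = j n := by
  rw [insertMarker, List.getD_eq_default _ _ hn, ite_self]

lemma prefixWord_insertMarker {u : List ι} (j : ℕ → ι) {k : ℕ} (hk : u.length ≤ k) :
    prefixWord (insertMarker u j) (k ^ 2 + u.length) =
      prefixWord (insertMarker u j) (k ^ 2) ++ u := by
  rw [prefixWord_add]
  congr 1
  conv_rhs => rw [← List.ofFn_get u]
  rw [prefixWord_eq_ofFn]
  congr 1
  funext m
  have hm := m.2
  have hsqrt : (k ^ 2 + m).sqrt = k := by
    rw [sq]
    exact Nat.sqrt_add_eq k (by omega)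
  simp [insertMarker, hsqrt, hk]

lemma card_range_sq_sdiff_unmarkedPositions_le (L k : ℕ) :
    (Finset.range (k ^ 2) \ unmarkedPositions L k).card ≤ k * L := by
  suffices h : (Finset.range (k ^ 2) \ unmarkedPositions L k).card ≤
      (Finset.range k ×ˢ Finset.range L).card by simpa using h
  refine Finset.card_le_card_of_injOn (fun n => (n.sqrt, n - n.sqrt ^ 2)) (fun n hn => ?_)
    fun n _ m _ hnm => ?_
  · simp only [unmarkedPositions, Finset.coe_sdiff, Finset.coe_range, Finset.coe_filter,
      Set.mem_sdiff, Set.mem_Iio, Finset.mem_range, Set.mem_ofPred_eq, not_and, not_le] at hn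
    simpa using ⟨Nat.sqrt_lt'.2 hn.1, hn.2 hn.1⟩
  · simp only [Prod.mk.injEq] at hnm
    have hn := Nat.sqrt_le' n
    have hm := Nat.sqrt_le' m
    rw [hnm.1] at hn hnm
    omega

lemma tendsto_sum_range_sq_div_sub_sum_unmarkedPositions_div (L : ℕ) {C : ℝ} {g : ℕ → ℝ}
    (hg : ∀ n, |g n| ≤ C) :
    Tendsto (fun k : ℕ => (∑ n ∈ Finset.range (k ^ 2), g n) / (k : ℝ) ^ 2 -
      (∑ n ∈ unmarkedPositions L k, g n) / (k : ℝ) ^ 2) atTop (𝓝 0) := by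
  refine squeeze_zero_norm' ?_ (tendsto_const_div_atTop_nhds_zero_nat (L * C))
  filter_upwards [eventually_gt_atTop 0] with k hk
  have hk' : (0 : ℝ) < k := by exact_mod_cast hk
  have hC : 0 ≤ C := (abs_nonneg _).trans (hg 0)
  have hsum : |∑ n ∈ Finset.range (k ^ 2) \ unmarkedPositions L k, g n| ≤ k * L * C := by
    refine (Finset.abs_sum_le_sum_abs _ _).trans
      ((Finset.sum_le_card_nsmul _ _ C fun n _ => hg n).trans ?_)
    rw [nsmul_eq_mul]
    gcongr
    exact_mod_cast card_range_sq_sdiff_unmarkedPositions_le L k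
  have hsub : ∑ n ∈ Finset.range (k ^ 2), g n - ∑ n ∈ unmarkedPositions L k, g n =
      ∑ n ∈ Finset.range (k ^ 2) \ unmarkedPositions L k, g n :=
    (Finset.sum_sdiff_eq_sub (Finset.filter_subset _ _)).symm
  calc ‖(∑ n ∈ Finset.range (k ^ 2), g n) / (k : ℝ) ^ 2 -
        (∑ n ∈ unmarkedPositions L k, g n) / (k : ℝ) ^ 2‖
      = |∑ n ∈ Finset.range (k ^ 2) \ unmarkedPositions L k, g n| / (k : ℝ) ^ 2 := by
        rw [← sub_div, hsub, Real.norm_eq_abs, abs_div, abs_of_pos (pow_pos hk' 2)]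
    _ ≤ k * L * C / (k : ℝ) ^ 2 := by gcongr
    _ = L * C / k := by field_simp

variable [Fintype ι] [MeasurableSpace ι] [MeasurableSingletonClass ι]

lemma ae_tendsto_average_unmarkedPositions (q : stdSimplex ℝ ι) (L : ℕ) (f : ι → ℝ) :
    ∀ᵐ j ∂bernoulliMeasure q, Tendsto (fun k : ℕ =>
      (∑ n ∈ unmarkedPositions L k, f (j n)) / (k : ℝ) ^ 2) atTop (𝓝 (∑ i, q i * f i)) := by
  filter_upwards [ae_tendsto_average q f] with j hj
  have hsq := hj.comp (tendsto_pow_atTop (α := ℕ) two_ne_zero)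
  have hdiff := tendsto_sum_range_sq_div_sub_sum_unmarkedPositions_div L (C := ∑ i, |f i|)
    (g := fun n => f (j n)) fun n =>
      Finset.single_le_sum (f := fun i => |f i|) (fun _ _ => abs_nonneg _) (Finset.mem_univ (j n))
  simpa [Function.comp_def] using hsq.sub hdiff

lemma ae_tendsto_average_insertMarker (q : stdSimplex ℝ ι) (u : List ι) (f : ι → ℝ) :
    ∀ᵐ j ∂bernoulliMeasure q, Tendsto (fun k : ℕ =>
      (∑ n ∈ Finset.range (k ^ 2), f (insertMarker u j n)) / (k : ℝ) ^ 2) atTop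
        (𝓝 (∑ i, q i * f i)) := by
  filter_upwards [ae_tendsto_average_unmarkedPositions q u.length f] with j hj
  have hdiff := tendsto_sum_range_sq_div_sub_sum_unmarkedPositions_div u.length (C := ∑ i, |f i|)
    (g := fun n => f (insertMarker u j n)) fun n =>
      Finset.single_le_sum (f := fun i => |f i|) (fun _ _ => abs_nonneg _) (Finset.mem_univ _)
  have hunmarked k : ∑ n ∈ unmarkedPositions u.length k, f (insertMarker u j n) =
      ∑ n ∈ unmarkedPositions u.length k, f (j n) :=
    Finset.sum_congr rfl fun n hn => by rw [insertMarker_of_le (Finset.mem_filter.1 hn).2]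
  simpa [hunmarked] using hdiff.add hj

lemma ae_tendsto_neg_log_wordProd_insertMarker (q : stdSimplex ℝ ι) (u : List ι) {b : ι → ℝ}
    (hb : ∀ i, b i ≠ 0) :
    ∀ᵐ j ∂bernoulliMeasure q, Tendsto (fun k : ℕ =>
      -Real.log (wordProd b (prefixWord (insertMarker u j) (k ^ 2))) / (k : ℝ) ^ 2)
        atTop (𝓝 (crossEntropy q b)) := by
  filter_upwards [ae_tendsto_average_insertMarker q u fun i => -Real.log (b i)] with j hj
  simpa only [neg_log_wordProd_prefixWord fun _ => hb _, crossEntropy] using hj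

lemma ae_tendsto_neg_log_prod_unmarkedPositions (q : stdSimplex ℝ ι) (L : ℕ) :
    ∀ᵐ j ∂bernoulliMeasure q, Tendsto (fun k : ℕ =>
      -Real.log (∏ n ∈ unmarkedPositions L k, q (j n)) / (k : ℝ) ^ 2)
        atTop (𝓝 (crossEntropy q q)) := by
  filter_upwards [ae_forall_pos q,
    ae_tendsto_average_unmarkedPositions q L fun i => -Real.log (q i)] with j hpos hj
  simpa only [Real.log_prod fun n _ => (hpos n).ne', ← Finset.sum_neg_distrib, crossEntropy]
    using hj

end InsertMarker

section Scales

lemma tendsto_natCast_sq_atTop : Tendsto (fun k : ℕ => (k : ℝ) ^ 2) atTop atTop :=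
  (tendsto_pow_atTop two_ne_zero).comp tendsto_natCast_atTop_atTop

lemma tendsto_natCast_succ_sq_div_sq :
    Tendsto (fun k : ℕ => ((k + 1 : ℕ) : ℝ) ^ 2 / (k : ℝ) ^ 2) atTop (𝓝 1) := by
  have hlim := (tendsto_const_nhds.add tendsto_one_div_atTop_nhds_zero_nat :
    Tendsto (fun k : ℕ => (1 : ℝ) + 1 / k) atTop _).pow 2
  rw [add_zero, one_pow] at hlim
  refine hlim.congr' ?_
  filter_upwards [eventually_ne_atTop 0] with k hk
  have hk' : (k : ℝ) ≠ 0 := Nat.cast_ne_zero.2 hk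
  push_cast
  field_simp

lemma tendsto_log_div_log_of_neg_log_div {M ρ a : ℕ → ℝ} {m l : ℝ} (hl : l ≠ 0)
    (ha : Tendsto a atTop atTop) (hM : Tendsto (fun k => -Real.log (M k) / a k) atTop (𝓝 m))
    (hρ : Tendsto (fun k => -Real.log (ρ k) / a k) atTop (𝓝 l)) :
    Tendsto (fun k => Real.log (M k) / Real.log (ρ k)) atTop (𝓝 (m / l)) := by
  refine (hM.div hρ hl).congr' ?_
  filter_upwards [ha.eventually_ne_atTop 0] with k hk
  rw [Pi.div_apply, div_div_div_cancel_right₀ hk, neg_div_neg_eq]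

end Scales

namespace SeparatedIFS

section Marker

variable {ι X : Type*} [MetricSpace X] {S : ι → X → X} {r : ι → ℝ} {h : SeparatedIFS S r}
  {u : List ι}

lemma IsMarker.prefixWord_eq (hu : h.IsMarker u) {j z : ℕ → ι} {k : ℕ} (hk : u.length ≤ k)
    (hz : dist (h.code z) (h.code (insertMarker u j)) ≤
      wordProd r (prefixWord (insertMarker u j) (k ^ 2)) * wordProd r u) :
    prefixWord z (k ^ 2) = prefixWord (insertMarker u j) (k ^ 2) :=
  hu _ z _ (prefixWord_insertMarker j hk) hz

variable [Fintype ι] [MeasurableSpace ι] [MeasurableSingletonClass ι]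

lemma IsMarker.selfSimilarMeasure_closedBall_le [MeasurableSpace X] [BorelSpace X] [CompleteSpace X]
    (hu : h.IsMarker u) (p : stdSimplex ℝ ι) {y : ℕ → ι} {n : ℕ}
    (hy : prefixWord y (n + u.length) = prefixWord y n ++ u) :
    h.selfSimilarMeasure p (closedBall (h.code y) (wordProd r (prefixWord y n) * wordProd r u)) ≤
      wordProd p (prefixWord y n) := by
  rw [← ENNReal.ofReal_le_ofReal_iff (wordProd_nonneg (stdSimplex.zero_le p) _),
    ENNReal.ofReal_coe_nnreal, ProbabilityMeasure.ennreal_coeFn_eq_coeFn_toMeasure,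
    h.selfSimilarMeasure_apply p measurableSet_closedBall, ← bernoulliMeasure_word,
    length_prefixWord]
  exact measure_mono fun z hz => hu y z n hy hz

lemma IsMarker.bernoulliMeasure_closedBall_le (hu : h.IsMarker u) (q : stdSimplex ℝ ι) {j : ℕ → ι}
    {k : ℕ} (hk : u.length ≤ k) :
    bernoulliMeasure q ((fun i => h.code (insertMarker u i)) ⁻¹'
        closedBall (h.code (insertMarker u j))
          (wordProd r (prefixWord (insertMarker u j) (k ^ 2)) * wordProd r u)) ≤
      ENNReal.ofReal (∏ n ∈ unmarkedPositions u.length k, q (j n)) := by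
  rw [ENNReal.ofReal_prod_of_nonneg fun n _ => stdSimplex.zero_le q (j n), ← bernoulliMeasure_box]
  refine measure_mono fun i hi n hn => ?_
  obtain ⟨hnk, hnu⟩ := Finset.mem_filter.1 hn
  have hij := prefixWord_eq_iff.1 (hu.prefixWord_eq hk hi) n (Finset.mem_range.1 hnk)
  rwa [insertMarker_of_le hnu, insertMarker_of_le hnu] at hij

lemma ae_isScaleSequence_insertMarker (h : SeparatedIFS S r) (q : stdSimplex ℝ ι) (u : List ι) :
    ∀ᵐ j ∂bernoulliMeasure q,
      IsScaleSequence fun k => wordProd r (prefixWord (insertMarker u j) (k ^ 2)) := by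
  filter_upwards [ae_tendsto_neg_log_wordProd_insertMarker q u fun i => (h.ratio_pos i).ne']
    with j hj
  exact .of_tendsto_neg_log_div (fun k => h.wordProd_ratio_pos _) (h.crossEntropy_ratio_pos q)
    tendsto_natCast_sq_atTop tendsto_natCast_succ_sq_div_sq hj

-- The ball sees only one cylinder, whose `q`-mass is, up to the marked positions, `exp (-k ^ 2 H)`
-- with `H` the entropy of `q`, while its radius is `exp (-k ^ 2 l)` with `l` the Lyapunov exponent.
lemma IsMarker.ae_eventually_measure_closedBall_le (hu : h.IsMarker u) (q : stdSimplex ℝ ι) {s : ℝ}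
    (hs : s * crossEntropy q r < crossEntropy q q) :
    ∀ᵐ j ∂bernoulliMeasure q, ∀ᶠ ρ in 𝓝[>] (0 : ℝ),
      bernoulliMeasure q ((fun i => h.code (insertMarker u i)) ⁻¹'
        closedBall (h.code (insertMarker u j)) ρ) ≤ ENNReal.ofReal (ρ ^ s) := by
  have hl := h.crossEntropy_ratio_pos q
  have hupos := h.wordProd_ratio_pos u
  filter_upwards [ae_forall_pos q, h.ae_isScaleSequence_insertMarker q u,
    ae_tendsto_neg_log_wordProd_insertMarker q u fun i => (h.ratio_pos i).ne',
    ae_tendsto_neg_log_prod_unmarkedPositions q u.length] with j hpos hscale hr hq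
  have hlim := hscale.tendsto_log_div_log_mul_const hupos
    (tendsto_log_div_log_of_neg_log_div hl.ne' tendsto_natCast_sq_atTop hq hr)
  set F : ℝ → ℝ := fun ρ => (bernoulliMeasure q).real ((fun i => h.code (insertMarker u i)) ⁻¹'
    closedBall (h.code (insertMarker u j)) ρ)
  have hF : Monotone F := fun ρ σ hρσ =>
    measureReal_mono (preimage_mono (closedBall_subset_closedBall hρσ))
  have hle : ∀ᶠ k in atTop, F (wordProd r (prefixWord (insertMarker u j) (k ^ 2)) * wordProd r u) ≤
      ∏ n ∈ unmarkedPositions u.length k, q (j n) := by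
    filter_upwards [eventually_ge_atTop u.length] with k hk
    exact ENNReal.toReal_le_of_le_ofReal (Finset.prod_nonneg fun n _ => (hpos n).le)
      (hu.bernoulliMeasure_closedBall_le q hk)
  filter_upwards [(hscale.mul_const hupos).eventually_le_rpow hF
    (fun k => Finset.prod_pos fun n _ => hpos n) hlim hle ((lt_div_iff₀ hl).2 hs)] with ρ hρ
  rw [← ofReal_measureReal]
  exact ENNReal.ofReal_le_ofReal hρ

end Marker

section LocalDimension

variable {ι : Type*} [Fintype ι] [MeasurableSpace ι] [MeasurableSingletonClass ι] {d : ℕ}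
  {S : ι → Euc d → Euc d} {r : ι → ℝ} (h : SeparatedIFS S r) {p : stdSimplex ℝ ι}

lemma wordProd_prefixWord_le_selfSimilarMeasure (p : stdSimplex ℝ ι) (y : ℕ → ι) (n : ℕ) :
    wordProd p (prefixWord y n) ≤ h.selfSimilarMeasure p
      (closedBall (h.code y) (wordProd r (prefixWord y n) * (2 * h.radius))) :=
  h.wordProd_le_selfSimilarMeasure p _ (by linarith [h.dist_code_le y n])

lemma code_mem_suppSet (hp : ∀ i, 0 < p i) (y : ℕ → ι) :
    h.code y ∈ suppSet (h.selfSimilarMeasure p) := by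
  intro ε hε
  have : Nonempty ι := ⟨y 0⟩
  have hlim : Tendsto (fun n => h.maxRatio ^ n * (2 * h.radius)) atTop (𝓝 0) := by
    simpa using h.tendsto_maxRatio_pow.mul_const (2 * h.radius)
  obtain ⟨n, hn⟩ := (hlim.eventually_lt_const hε).exists
  have hle := h.wordProd_ratio_le_pow (prefixWord y n)
  rw [length_prefixWord] at hle
  have hball : closedBall (h.code y) (wordProd r (prefixWord y n) * (2 * h.radius)) ⊆
      ball (h.code y) ε := by
    refine closedBall_subset_ball (lt_of_le_of_lt ?_ hn)
    have := h.radius_pos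
    gcongr
  have hpos := (wordProd_pos hp (prefixWord y n)).trans_le
    (h.wordProd_prefixWord_le_selfSimilarMeasure p y n)
  exact (NNReal.coe_pos.1 hpos).trans_le ((h.selfSimilarMeasure p).apply_mono hball)

variable {h}

lemma IsMarker.tendsto_localDimAt_code {u : List ι} (hu : h.IsMarker u) (hp : ∀ i, 0 < p i)
    {y : ℕ → ι} {n : ℕ → ℕ} {α : ℝ}
    (hy : ∀ᶠ k in atTop, prefixWord y (n k + u.length) = prefixWord y (n k) ++ u)
    (hscale : IsScaleSequence fun k => wordProd r (prefixWord y (n k)))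
    (hlim : Tendsto (fun k => Real.log (wordProd p (prefixWord y (n k))) /
      Real.log (wordProd r (prefixWord y (n k)))) atTop (𝓝 α)) :
    Tendsto (localDimAt (h.selfSimilarMeasure p) (h.code y)) (𝓝[>] 0) (𝓝 α) :=
  hscale.tendsto_log_div_log (F := fun ρ => h.selfSimilarMeasure p (closedBall (h.code y) ρ))
    (fun _ _ hρσ => NNReal.coe_le_coe.2
      ((h.selfSimilarMeasure p).apply_mono (closedBall_subset_closedBall hρσ)))
    (fun _ hρ => NNReal.coe_pos.2 (measure_closedBall_pos (h.code_mem_suppSet hp y) hρ))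
    (fun _ => wordProd_pos hp _) hlim
    (h.wordProd_ratio_pos u) (hy.mono fun _ hk => hu.selfSimilarMeasure_closedBall_le p hk)
    (mul_pos two_pos h.radius_pos)
    (Eventually.of_forall fun k => h.wordProd_prefixWord_le_selfSimilarMeasure p y (n k))

lemma IsMarker.ae_tendsto_localDimAt_code {u : List ι} (hu : h.IsMarker u) (hp : ∀ i, 0 < p i)
    (q : stdSimplex ℝ ι) {α : ℝ} (hα : crossEntropy q p = α * crossEntropy q r) :
    ∀ᵐ j ∂bernoulliMeasure q,
      Tendsto (localDimAt (h.selfSimilarMeasure p) (h.code (insertMarker u j)))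
        (𝓝[>] 0) (𝓝 α) := by
  filter_upwards [h.ae_isScaleSequence_insertMarker q u,
    ae_tendsto_neg_log_wordProd_insertMarker q u fun i => (hp i).ne',
    ae_tendsto_neg_log_wordProd_insertMarker q u fun i => (h.ratio_pos i).ne'] with j hscale hP hR
  have hl := (h.crossEntropy_ratio_pos q).ne'
  have hlim := tendsto_log_div_log_of_neg_log_div hl tendsto_natCast_sq_atTop hP hR
  rw [hα, mul_div_cancel_right₀ α hl] at hlim
  exact hu.tendsto_localDimAt_code hp
    (eventually_atTop.2 ⟨u.length, fun k hk => prefixWord_insertMarker j hk⟩) hscale hlim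

variable (h)

theorem le_fHaus (hp : ∀ i, 0 < p i) (q : stdSimplex ℝ ι) {α t : ℝ}
    (hα : crossEntropy q p = α * crossEntropy q r)
    (ht : t * crossEntropy q r ≤ crossEntropy q q) : t ≤ fHaus (h.selfSimilarMeasure p) α := by
  have := nonempty_of_stdSimplex q
  obtain ⟨u, hu⟩ := h.exists_isMarker
  have hlevel : ∀ᵐ j ∂bernoulliMeasure q, h.code (insertMarker u j) ∈
      {x | x ∈ suppSet (h.selfSimilarMeasure p) ∧
        Tendsto (localDimAt (h.selfSimilarMeasure p) x) (𝓝[>] 0) (𝓝 α)} :=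
    (hu.ae_tendsto_localDimAt_code hp q hα).mono fun j hj => ⟨h.code_mem_suppSet hp _, hj⟩
  obtain ⟨j, hj⟩ := hlevel.exists
  rw [fHaus, dimHE, if_neg (nonempty_of_mem hj).ne_empty]
  refine EReal.ge_of_forall_gt_iff_ge.1 fun s hst => ?_
  rcases le_or_gt s 0 with hs | hs
  · exact (EReal.coe_nonpos.2 hs).trans (EReal.coe_ennreal_nonneg _)
  lift s to ℝ≥0 using hs.le
  rw [← EReal.coe_nnreal_eq_coe_real, EReal.coe_ennreal_le_coe_ennreal_iff]
  have hst' := mul_lt_mul_of_pos_right (EReal.coe_lt_coe_iff.1 hst) (h.crossEntropy_ratio_pos q)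
  have hball := hu.ae_eventually_measure_closedBall_le q (hst'.trans_le ht)
  exact le_dimH_of_ae_eventually_closedBall (hlevel.and hball)

end LocalDimension

end SeparatedIFS

lemma tendsto_and_eq_of_forall_real {β : Type*} {l : Filter β} {σ : β → EReal} {a b : EReal}
    (hab : a ≤ b)
    (h : ∀ t : ℝ, ((∀ᶠ x in l, σ x ≤ t) ∧ b ≤ t) ∨ ((∀ᶠ x in l, t ≤ σ x) ∧ t ≤ a)) :
    Tendsto σ l (𝓝 a) ∧ a = b := by
  have hge {t : ℝ} (ht : t < b) : (∀ᶠ x in l, t ≤ σ x) ∧ t ≤ a :=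
    (h t).resolve_left fun hle => hle.2.not_gt ht
  have hle {t : ℝ} (ht : a < t) : (∀ᶠ x in l, σ x ≤ t) ∧ b ≤ t :=
    (h t).resolve_right fun hge => hge.2.not_gt ht
  refine ⟨tendsto_order.2 ⟨fun c hc => ?_, fun c hc => ?_⟩,
    hab.antisymm (EReal.le_of_forall_lt_iff_le.1 fun t ht => (hle ht).2)⟩
  · obtain ⟨t, hct, hta⟩ := EReal.lt_iff_exists_real_btwn.1 hc
    exact (hge (hta.trans_le hab)).1.mono fun _ => hct.trans_le
  · obtain ⟨t, hat, htc⟩ := EReal.lt_iff_exists_real_btwn.1 hc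
    exact (hle hat).1.mono fun _ hx => hx.trans_lt htc

/-- **Theorem 1.1** (shrinking targets, self-similar measures).
For a self-similar measure `μ` satisfying the OSC and the zeta-function
`ζ_α^{sim}(s;r) = ∑_{|log p_w/log r_w - α| ≤ r} r_w^s`, the abscissa of convergence of
`ζ_α^{sim}(·;r)` converges, as `r ↘ 0`, to `f_μ(α) = f_μ^c(α)`. -/
theorem self_similar_shrinking_targets
    {d N : ℕ} (hN : 0 < N)
    (S : Fin N → Euc d → Euc d) (rr : Fin N → ℝ) (p : Fin N → ℝ)
    (hr : ∀ i, rr i ∈ Set.Ioo (0 : ℝ) 1)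
    (hsim : ∀ i x y, dist (S i x) (S i y) = rr i * dist x y)
    (hOSC : ∃ O : Set (Euc d), IsOpen O ∧ O.Nonempty ∧ Bornology.IsBounded O ∧
      (∀ i, S i '' O ⊆ O) ∧ ∀ i j, i ≠ j → Disjoint (S i '' O) (S j '' O))
    (hp : ∀ i, 0 < p i) (hp1 : ∑ i, p i = 1)
    (μ : ProbabilityMeasure (Euc d))
    (hμ : μ.toMeasure = ∑ i, ENNReal.ofReal (p i) • μ.toMeasure.map (S i))
    (α : ℝ) :
    Filter.Tendsto
      (fun r : ℝ => sigmaAbs (fun w : Word N => (w.map rr).prod)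
        (fun w => |Real.log ((w.map p).prod) / Real.log ((w.map rr).prod) - α| ≤ r))
      (nhdsWithin 0 (Set.Ioi 0)) (nhds (fHaus μ α)) ∧
    fHaus μ α = fCoarse μ α := by
  have : Nonempty (Fin N) := ⟨⟨0, hN⟩⟩
  obtain ⟨O, hopen, hne, -, hsub, hdisj⟩ := hOSC
  obtain ⟨h⟩ := nonempty_separatedIFS hr hsim hopen hne hsub hdisj
  let P : stdSimplex ℝ (Fin N) := ⟨p, fun i => (hp i).le, hp1⟩
  obtain rfl := h.eq_selfSimilarMeasure (q := P) hμ
  change Tendsto (zetaAbscissa rr p α) _ _ ∧ _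
  refine tendsto_and_eq_of_forall_real (fHaus_le_fCoarse _ α) fun t => ?_
  rcases exists_partitionSum_lt_one_or_exists_stdSimplex h.ratio_pos hp α t with
    ⟨θ, hθ⟩ | ⟨q, hα, ht⟩
  · exact .inl ⟨h.eventually_zetaAbscissa_le hp hθ, h.fCoarse_le (q := P) hp hθ⟩
  · refine .inr ⟨?_, h.le_fHaus (p := P) hp q hα ht⟩
    filter_upwards [self_mem_nhdsWithin] with ε hε
    exact h.le_zetaAbscissa (fun i => (hp i).ne') q hα ht hε

end Multifractal
end

section
/- Let C ⊆ X be closed. Then the limit as r ↘ 0 of the abscissa of convergence σ_abs(ζ_C^{U,Λ}(·;r)) exists and equals the lower coarse multifractal spectrum: lim_{r↘0} σ_abs(ζ_C^{U,Λ}(·;r)) = f̲^{U,Λ}(C). -/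
open MeasureTheory Filter Topology Metric Set
open scoped ENNReal NNReal Classical

namespace Multifractal

/-! Comparing `N_δ · δ ^ t` with the `t`-sum over the words with `s_w ≈ δ` shows that the counting
exponent is at most the abscissa of convergence. The converse inequality is obtained in the limit
`r ↘ 0`.

Suppose that the `t`-sum diverges for every `r`, and let `t' < t`. By compactness of the space of
probability measures there is a measure `μ` with `U μ` within distance `0` of `C` such that the
`t`-sum already diverges over the words whose empirical measures lie in any prescribed
neighbourhood of `μ`. Such a neighbourhood is given by finitely many integrals, so these words may
be taken from a set `S` closed under concatenation, and concatenating them does not leave the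
neighbourhood. As `s` decays exponentially in the length, some finite set `W ⊆ S` of words of
equal length has so large a `t'`-sum that the distortion constant is absorbed:
`s_u ^ t' ≤ ∑ s_{uv} ^ t'` over `v ∈ W`, for every `u`. Hence the `t'`-sum does not decrease along
the tree of concatenations of words in `W`. Stopping this tree when `s` drops to `δ` yields at
least a constant times `δ ^ (-t')` words with `s_w ≈ δ`.
-/

open scoped BoundedContinuousFunction

lemma rpow_le_rpow_abs_mul_rpow {a b K : ℝ} (ha : 0 < a) (hb : 0 < b) (hab : a ≤ K * b)
    (hba : b ≤ K * a) (t : ℝ) : b ^ t ≤ K ^ |t| * a ^ t := by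
  have hK : 0 < K := pos_of_mul_pos_left (ha.trans_le hab) hb.le
  rcases le_total 0 t with ht | ht
  · rw [abs_of_nonneg ht, ← Real.mul_rpow hK.le ha.le]
    exact Real.rpow_le_rpow hb.le hba ht
  · rw [abs_of_nonpos ht, Real.rpow_neg hK.le, ← Real.inv_rpow hK.le,
      ← Real.mul_rpow (inv_nonneg.2 hK.le) ha.le]
    exact Real.rpow_le_rpow_of_nonpos (by positivity) ((inv_mul_le_iff₀ hK).2 hab) ht

section Summable

lemma summable_of_sum_fiber_le {ι κ : Type*} {f : ι → ℝ} (hf : ∀ i, 0 ≤ f i) (g : ι → κ)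
    {b : κ → ℝ} (hb : Summable b)
    (h : ∀ (k : κ) (u : Finset ι), (∀ i ∈ u, g i = k) → ∑ i ∈ u, f i ≤ b k) : Summable f := by
  have hb0 : ∀ k, 0 ≤ b k := fun k => by simpa using h k ∅
  refine summable_of_sum_le (c := ∑' k, b k) hf fun u => ?_
  calc ∑ i ∈ u, f i = ∑ k ∈ u.image g, ∑ i ∈ u with g i = k, f i :=
        (Finset.sum_fiberwise_of_maps_to (fun i hi => Finset.mem_image_of_mem g hi) f).symm
    _ ≤ ∑ k ∈ u.image g, b k :=
        Finset.sum_le_sum fun k _ => h k _ fun i hi => (Finset.mem_filter.1 hi).2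
    _ ≤ ∑' k, b k := hb.sum_le_tsum _ fun k _ => hb0 k

variable {ι E : Type*} [AddCommGroup E] [UniformSpace E] [IsUniformAddGroup E] [CompleteSpace E]

lemma summable_subtype_mono {f : ι → E} {A B : Set ι} (hB : Summable fun i : B => f i)
    (hAB : A ⊆ B) : Summable fun i : A => f i :=
  hB.comp_injective (inclusion_injective hAB)

lemma summable_subtype_union {f : ι → E} {A B : Set ι} (hA : Summable fun i : A => f i)
    (hB : Summable fun i : B => f i) : Summable fun i : (A ∪ B : Set ι) => f i := by
  rw [← union_sdiff_self]
  exact (HasSum.add_disjoint disjoint_sdiff_right hA.hasSum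
    (summable_subtype_mono hB sdiff_subset).hasSum).summable

/-- The filter of sets of indices off which `f` is summable. A series diverges over `A` exactly
when `A` is visited frequently along this filter, see `frequently_divergenceFilter`. -/
def divergenceFilter (f : ι → E) : Filter ι :=
  comk (fun A => Summable fun i : A => f i) summable_empty
    (fun _ hB _ hAB => summable_subtype_mono hB hAB) (fun _ hA _ hB => summable_subtype_union hA hB)

lemma frequently_divergenceFilter {f : ι → E} {p : ι → Prop} :
    (∃ᶠ i in divergenceFilter f, p i) ↔ ¬ Summable fun i : {i // p i} => f i :=
  not_congr compl_mem_comk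

lemma divergenceFilter_le_cofinite (f : ι → E) : divergenceFilter f ≤ cofinite := by
  intro A hA
  have : Finite (Aᶜ : Set ι) := hA
  exact mem_comk.2 Summable.of_finite

end Summable

lemma exists_mapClusterPt_nonpos_of_frequently {ι Y : Type*} [TopologicalSpace Y] [CompactSpace Y]
    {F : Filter ι} {e : ι → Y} {f : Y → ℝ} (hf : Continuous f)
    (h : ∀ r > 0, ∃ᶠ i in F, f (e i) ≤ r) : ∃ y, f y ≤ 0 ∧ MapClusterPt y F e := by
  have hcluster : ∀ r > 0, ∃ y, f y ≤ r ∧ MapClusterPt y F e := fun r hr =>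
    (isClosed_le hf continuous_const).isCompact.exists_mapClusterPt_of_frequently (h r hr)
  have hcompact : IsCompact {y | MapClusterPt y F e} := isClosed_setOfPred_clusterPt.isCompact
  obtain ⟨y₁, -, hy₁⟩ := hcluster 1 one_pos
  obtain ⟨y, hy, hmin⟩ := hcompact.exists_isMinOn ⟨y₁, hy₁⟩ hf.continuousOn
  refine ⟨y, le_of_forall_pos_le_add fun r hr => ?_, hy⟩
  obtain ⟨z, hzr, hz⟩ := hcluster r hr
  rw [zero_add]
  exact (hmin hz).trans hzr

section WeakTopology

variable {Ω : Type*} [MeasurableSpace Ω] [TopologicalSpace Ω] [OpensMeasurableSpace Ω]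
  {μ : ProbabilityMeasure Ω}

lemma eventually_abs_integral_lt {g : Ω →ᵇ ℝ} (hg : ∫ y, g y ∂μ.toMeasure = 0) {ε : ℝ}
    (hε : 0 < ε) : ∀ᶠ ν in 𝓝 μ, |∫ y, g y ∂ν.toMeasure| < ε :=
  (ProbabilityMeasure.continuous_integral_boundedContinuousFunction g).abs.continuousAt
    |>.eventually_lt_const (by simpa [hg] using hε)

/-- The test functions are centred at `μ` and the tolerance is absorbed into them by rescaling. -/
lemma hasBasis_nhds_probabilityMeasure (μ : ProbabilityMeasure Ω) :
    (𝓝 μ).HasBasis (fun G : Set {g : Ω →ᵇ ℝ // ∫ y, g y ∂μ.toMeasure = 0} => G.Finite)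
      fun G => {ν | ∀ g ∈ G, |∫ y, g.1 y ∂ν.toMeasure| < 1} := by
  let T : {g : Ω →ᵇ ℝ // ∫ y, g y ∂μ.toMeasure = 0} → Set (ProbabilityMeasure Ω) :=
    fun g => {ν | |∫ y, g.1 y ∂ν.toMeasure| < 1}
  have hle : 𝓝 μ ≤ ⨅ g, 𝓟 (T g) :=
    le_iInf fun g => le_principal_iff.2 (eventually_abs_integral_lt g.2 one_pos)
  have hge : ⨅ g, 𝓟 (T g) ≤ 𝓝 μ := by
    refine ProbabilityMeasure.tendsto_iff_forall_integral_tendsto.2 fun g => ?_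
    rw [Metric.tendsto_nhds]
    intro ε hε
    let m := ∫ y, g y ∂μ.toMeasure
    let g' : Ω →ᵇ ℝ := ε⁻¹ • (g - BoundedContinuousFunction.const Ω m)
    have hg' (ν : ProbabilityMeasure Ω) :
        ∫ y, g' y ∂ν.toMeasure = ε⁻¹ * (∫ y, g y ∂ν.toMeasure - m) := by
      simp [g', integral_const_mul, integral_sub (g.integrable _) (integrable_const m)]
    refine mem_iInf_of_mem ⟨g', by simp [hg', m]⟩ (mem_principal.2 fun ν hν => ?_)
    change |∫ y, g' y ∂ν.toMeasure| < 1 at hν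
    rwa [hg', abs_mul, abs_of_pos (inv_pos.2 hε), inv_mul_lt_one₀ hε] at hν
  rw [le_antisymm hle hge]
  simpa only [T, mem_ofPred_eq, ← ofPred_forall] using hasBasis_iInf_principal_finite T

end WeakTopology

section Ratio

lemma ratioE_le {m : ℕ} {δ t M : ℝ} (hδ : δ ∈ Ioo 0 1) (h : m ≤ M * δ ^ (-t)) :
    ratioE m δ ≤ ((Real.log M / -Real.log δ + t : ℝ) : EReal) := by
  have hlog : 0 < -Real.log δ := neg_pos.2 (Real.log_neg hδ.1 hδ.2)
  have hpow : 0 < δ ^ (-t) := Real.rpow_pos_of_pos hδ.1 _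
  rw [ratioE]
  split_ifs with hm
  · exact bot_le
  have hm' : (0 : ℝ) < m := by exact_mod_cast Nat.pos_of_ne_zero hm
  have hM : 0 < M := pos_of_mul_pos_left (hm'.trans_le h) hpow.le
  have hlogm := Real.log_le_log hm' h
  rw [Real.log_mul hM.ne' hpow.ne', Real.log_rpow hδ.1] at hlogm
  rw [EReal.coe_le_coe_iff, div_add' _ _ _ hlog.ne', div_le_div_iff_of_pos_right hlog]
  linarith

lemma le_ratioE {m : ℕ} {δ t B : ℝ} (hδ : δ ∈ Ioo 0 1) (hB : 0 < B) (h : B * δ ^ (-t) ≤ m) :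
    ((Real.log B / -Real.log δ + t : ℝ) : EReal) ≤ ratioE m δ := by
  have hlog : 0 < -Real.log δ := neg_pos.2 (Real.log_neg hδ.1 hδ.2)
  have hpow : 0 < δ ^ (-t) := Real.rpow_pos_of_pos hδ.1 _
  have hpos : 0 < B * δ ^ (-t) := mul_pos hB hpow
  have hm : m ≠ 0 := by exact_mod_cast (hpos.trans_le h).ne'
  have hlogm := Real.log_le_log hpos h
  rw [Real.log_mul hB.ne' hpow.ne', Real.log_rpow hδ.1] at hlogm
  rw [ratioE, if_neg hm, EReal.coe_le_coe_iff, div_add' _ _ _ hlog.ne',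
    div_le_div_iff_of_pos_right hlog]
  linarith

lemma tendsto_div_neg_log_add (b t : ℝ) :
    Tendsto (fun δ : ℝ => ((b / -Real.log δ + t : ℝ) : EReal)) (𝓝[>] 0) (𝓝 t) := by
  have hlog := tendsto_neg_atBot_atTop.comp Real.tendsto_log_nhdsGT_zero
  simpa only [zero_add, Function.comp_def] using (continuous_coe_real_ereal.tendsto _).comp
    ((hlog.const_div_atTop b).add_const t)

lemma liminf_ratioE_le_s2 {m : ℝ → ℕ} {t M : ℝ} (h : ∀ᶠ δ in 𝓝[>] 0, m δ ≤ M * δ ^ (-t)) :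
    liminf (fun δ => ratioE (m δ) δ) (𝓝[>] 0) ≤ t := by
  rw [← (tendsto_div_neg_log_add (Real.log M) t).liminf_eq]
  refine liminf_le_liminf ?_
  filter_upwards [h, Ioo_mem_nhdsGT one_pos] with δ hm hδ using ratioE_le hδ hm

lemma le_liminf_ratioE {m : ℝ → ℕ} {t B : ℝ} (hB : 0 < B)
    (h : ∀ᶠ δ in 𝓝[>] 0, B * δ ^ (-t) ≤ m δ) :
    t ≤ liminf (fun δ => ratioE (m δ) δ) (𝓝[>] 0) := by
  rw [← (tendsto_div_neg_log_add (Real.log B) t).liminf_eq]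
  refine liminf_le_liminf ?_
  filter_upwards [h, Ioo_mem_nhdsGT one_pos] with δ hm hδ using le_ratioE hδ hB hm

end Ratio

section Weight

variable {α : Type*} {s : List α → ℝ} {c ρ δ t t' : ℝ} {S A : Set (List α)} {W : Finset (List α)}
  {n : ℕ}

/-- A positive weight on finite strings that is multiplicative up to the factor `c` and at most
`ρ ^ length`, where `ρ < 1`. It abstracts the properties of `w ↦ s_w` needed to
compare zeta-functions with counting functions. -/
structure IsContractiveWeight (s : List α → ℝ) (c ρ : ℝ) : Prop where
  pos : ∀ w, 0 < s w
  append_le : ∀ u v, s (u ++ v) ≤ c * (s u * s v)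
  mul_le : ∀ u v, s u * s v ≤ c * s (u ++ v)
  le_pow : ∀ w, s w ≤ ρ ^ w.length
  rate_mem : ρ ∈ Ico 0 1

/-- The strings `w` with `s_w ≈ δ`, that is, those at which `s` drops to `δ` or below. -/
def cutSet (s : List α → ℝ) (δ : ℝ) : Set (List α) :=
  {w | w ≠ [] ∧ s w ≤ δ ∧ δ < s w.dropLast}

/-- The lower exponential growth rate, as `δ ↘ 0`, of the number of `w ∈ A` with `s_w ≈ δ`. -/
noncomputable def lowerCutRate (s : List α → ℝ) (A : Set (List α)) : EReal :=
  liminf (fun δ => ratioE (cutSet s δ ∩ A).ncard δ) (𝓝[>] 0)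

/-- The strings obtained from a string in `S` by appending at most `n` letters. -/
def shortExtensions (S : Set (List α)) (n : ℕ) : Set (List α) :=
  {w | ∃ p ∈ S, ∃ v : List α, v.length ≤ n ∧ w = p ++ v}

lemma tendsto_length_cofinite [Finite α] :
    Tendsto (List.length : List α → ℕ) cofinite atTop :=
  tendsto_atTop.2 fun n => by simpa [eventually_cofinite] using List.finite_length_lt α n

lemma eventually_le_mul_length [Finite α] {ε : ℝ} (hε : 0 < ε) (b : ℝ) :
    ∀ᶠ w : List α in cofinite, b ≤ ε * w.length :=
  (tendsto_natCast_atTop_atTop.comp tendsto_length_cofinite).const_mul_atTop hε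
    |>.eventually_ge_atTop b

lemma shortExtensions_mono {S' : Set (List α)} (h : S ⊆ S') :
    shortExtensions S n ⊆ shortExtensions S' n := by
  rintro _ ⟨p, hp, v, hv, rfl⟩
  exact ⟨p, h hp, v, hv, rfl⟩

lemma exists_prefix_mem_cutSet {u v : List α} (hu : δ < s u) (huv : s (u ++ v) ≤ δ) :
    ∃ v₁ v₂, v = v₁ ++ v₂ ∧ u ++ v₁ ∈ cutSet s δ := by
  induction v using List.reverseRecOn with
  | nil => exact absurd hu (by simpa using huv)
  | append_singleton v a ih =>
    by_cases h : s (u ++ v) ≤ δ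
    · obtain ⟨v₁, v₂, rfl, hv⟩ := ih h
      exact ⟨v₁, v₂ ++ [a], by simp, hv⟩
    · refine ⟨v ++ [a], [], by simp, by simp, huv, ?_⟩
      rw [← List.append_assoc, List.dropLast_concat]
      exact not_le.1 h

namespace IsContractiveWeight

lemma const_pos (hs : IsContractiveWeight s c ρ) : 0 < c :=
  pos_of_mul_pos_left ((mul_pos (hs.pos []) (hs.pos [])).trans_le (hs.mul_le [] [])) (hs.pos _).le

lemma tendsto_zero [Finite α] (hs : IsContractiveWeight s c ρ) : Tendsto s cofinite (𝓝 0) :=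
  squeeze_zero (fun w => (hs.pos w).le) hs.le_pow
    ((tendsto_pow_atTop_nhds_zero_of_lt_one hs.rate_mem.1 hs.rate_mem.2).comp
      tendsto_length_cofinite)

lemma cutSet_finite [Finite α] (hs : IsContractiveWeight s c ρ) (hδ : 0 < δ) :
    (cutSet s δ).Finite := by
  have hlt : {w | δ < s w}.Finite := by
    simpa [eventually_cofinite] using hs.tendsto_zero.eventually_le_const hδ
  refine (hlt.image2 (fun w a => w ++ [a]) finite_univ).subset ?_
  rintro w ⟨hne, -, hw⟩
  exact ⟨w.dropLast, hw, w.getLast hne, mem_univ _, List.dropLast_append_getLast hne⟩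

lemma eventually_forall_le (hs : IsContractiveWeight s c ρ) {p : List α → Prop}
    (hp : ∀ᶠ w in cofinite, p w) : ∀ᶠ δ in 𝓝[>] 0, ∀ w, s w ≤ δ → p w := by
  filter_upwards [(eventually_all_finite (eventually_cofinite.1 hp)).2 fun w _ =>
    Ioo_mem_nhdsGT (hs.pos w)] with δ hδ w hw
  by_contra h
  exact (hδ w h).2.not_ge hw

lemma exists_le_mul_append [Finite α] (hs : IsContractiveWeight s c ρ) (n : ℕ) :
    ∃ K ≥ 1, ∀ u v : List α, v.length ≤ n → s u ≤ K * s (u ++ v) := by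
  obtain ⟨K, hK⟩ := ((List.finite_length_le α n).image fun v => c / s v).bddAbove
  refine ⟨max 1 K, le_max_left _ _, fun u v hv => ?_⟩
  calc s u ≤ c / s v * s (u ++ v) := by
        rw [div_mul_eq_mul_div, le_div_iff₀ (hs.pos v)]
        exact hs.mul_le u v
    _ ≤ max 1 K * s (u ++ v) := by
        gcongr
        · exact (hs.pos _).le
        · exact le_max_of_le_right (hK ⟨v, hv, rfl⟩)

lemma exists_ncard_le [Finite α] (hs : IsContractiveWeight s c ρ)
    (hA : Summable fun w : A => s w ^ t) :
    ∃ M, ∀ δ > 0, (cutSet s δ ∩ A).ncard ≤ M * δ ^ (-t) := by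
  obtain ⟨K, hK, happ⟩ := hs.exists_le_mul_append 1
  refine ⟨K ^ |t| * ∑' w : A, s w ^ t, fun δ hδ => ?_⟩
  have hD := (hs.cutSet_finite hδ).inter_of_left A
  have hδw : ∀ w ∈ hD.toFinset, δ ^ t ≤ K ^ |t| * s w ^ t := by
    intro w hw
    obtain ⟨⟨hne, hle, hlt⟩, -⟩ := hD.mem_toFinset.1 hw
    have h := happ w.dropLast [w.getLast hne] le_rfl
    rw [List.dropLast_append_getLast] at h
    exact rpow_le_rpow_abs_mul_rpow (hs.pos w) hδ (hle.trans (le_mul_of_one_le_left hδ.le hK))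
      (hlt.le.trans h) t
  rw [Real.rpow_neg hδ.le, ← div_eq_mul_inv, le_div_iff₀ (by positivity)]
  calc (cutSet s δ ∩ A).ncard * δ ^ t = ∑ _w ∈ hD.toFinset, δ ^ t := by
        rw [ncard_eq_toFinset_card _ hD, Finset.sum_const, nsmul_eq_mul]
    _ ≤ ∑ w ∈ hD.toFinset, K ^ |t| * s w ^ t := Finset.sum_le_sum hδw
    _ = K ^ |t| * ∑ w ∈ hD.toFinset.subtype (· ∈ A), s w ^ t := by
        rw [← Finset.mul_sum, Finset.sum_subtype_of_mem (fun w => s w ^ t)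
          fun w hw => (hD.mem_toFinset.1 hw).2]
    _ ≤ K ^ |t| * ∑' w : A, s w ^ t := by
        gcongr
        exact hA.sum_le_tsum _ fun w _ => Real.rpow_nonneg (hs.pos w).le t

lemma lowerCutRate_le [Finite α] (hs : IsContractiveWeight s c ρ)
    (hA : Summable fun w : A => s w ^ t) : lowerCutRate s A ≤ t := by
  obtain ⟨M, hM⟩ := hs.exists_ncard_le hA
  exact liminf_ratioE_le_s2 (by filter_upwards [self_mem_nhdsWithin] with δ hδ using hM δ hδ)

lemma summable_rpow_of_forall_length (hs : IsContractiveWeight s c ρ) (htt : t' < t) {b : ℝ}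
    (h : ∀ (n : ℕ) (W : Finset (List α)), (∀ w ∈ W, w ∈ S ∧ w.length = n) →
      ∑ w ∈ W, s w ^ t' ≤ b) :
    Summable fun w : S => s w ^ t := by
  have hgeo : Summable fun n : ℕ => b * (ρ ^ (t - t')) ^ n :=
    (summable_geometric_of_lt_one (Real.rpow_nonneg hs.rate_mem.1 _)
      (Real.rpow_lt_one hs.rate_mem.1 hs.rate_mem.2 (sub_pos.2 htt))).mul_left b
  have hterm (w : List α) : s w ^ t ≤ s w ^ t' * (ρ ^ (t - t')) ^ w.length := by
    rw [Real.rpow_pow_comm hs.rate_mem.1, ← add_sub_cancel t' t, Real.rpow_add (hs.pos w),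
      add_sub_cancel]
    gcongr
    exacts [Real.rpow_nonneg (hs.pos w).le _, (hs.pos w).le, hs.le_pow w]
  refine summable_of_sum_fiber_le (fun w => Real.rpow_nonneg (hs.pos w).le t)
    (fun w : S => w.1.length) hgeo fun n u hu => ?_
  calc ∑ w ∈ u, s w ^ t ≤ ∑ w ∈ u, s w ^ t' * (ρ ^ (t - t')) ^ n :=
        Finset.sum_le_sum fun w hw => hu w hw ▸ hterm w
    _ = (∑ w ∈ u.map (.subtype _), s w ^ t') * (ρ ^ (t - t')) ^ n := by
        rw [← Finset.sum_mul, Finset.sum_map]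
        rfl
    _ ≤ b * (ρ ^ (t - t')) ^ n := by
        refine mul_le_mul_of_nonneg_right (h n _ fun w hw => ?_)
          (pow_nonneg (Real.rpow_nonneg hs.rate_mem.1 _) n)
        obtain ⟨w, hwu, rfl⟩ := Finset.mem_map.1 hw
        exact ⟨w.2, hu w hwu⟩

lemma exists_length_lt_sum_rpow (hs : IsContractiveWeight s c ρ) (htt : t' < t)
    (hS : ¬ Summable fun w : S => s w ^ t) (b : ℝ) :
    ∃ n ≠ 0, ∃ W : Finset (List α), (∀ w ∈ W, w ∈ S ∧ w.length = n) ∧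
      b < ∑ w ∈ W, s w ^ t' := by
  by_contra! h
  refine hS (hs.summable_rpow_of_forall_length htt (b := max b (s [] ^ t')) fun n W hW => ?_)
  obtain rfl | hn := eq_or_ne n 0
  · have hWnil : W ⊆ {[]} := fun w hw => by simpa using (hW w hw).2
    refine le_max_of_le_right ?_
    simpa using Finset.sum_le_sum_of_subset_of_nonneg hWnil
      fun w _ _ => Real.rpow_nonneg (hs.pos w).le t'
  · exact le_max_of_le_left (h n hn W hW)

lemma rpow_le_sum_append (hs : IsContractiveWeight s c ρ) (hW : c ^ |t| ≤ ∑ v ∈ W, s v ^ t)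
    (u : List α) : s u ^ t ≤ ∑ v ∈ W, s (u ++ v) ^ t := by
  have hu : 0 ≤ s u ^ t := Real.rpow_nonneg (hs.pos u).le t
  have hmul (v : List α) : s u ^ t * s v ^ t ≤ c ^ |t| * s (u ++ v) ^ t := by
    rw [← Real.mul_rpow (hs.pos u).le (hs.pos v).le]
    exact rpow_le_rpow_abs_mul_rpow (hs.pos _) (mul_pos (hs.pos u) (hs.pos v))
      (hs.append_le u v) (hs.mul_le u v) t
  refine le_of_mul_le_mul_left ?_ (Real.rpow_pos_of_pos hs.const_pos |t|)
  calc c ^ |t| * s u ^ t ≤ (∑ v ∈ W, s v ^ t) * s u ^ t := mul_le_mul_of_nonneg_right hW hu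
    _ = ∑ v ∈ W, s u ^ t * s v ^ t := by rw [mul_comm, Finset.mul_sum]
    _ ≤ ∑ v ∈ W, c ^ |t| * s (u ++ v) ^ t := Finset.sum_le_sum fun v _ => hmul v
    _ = c ^ |t| * ∑ v ∈ W, s (u ++ v) ^ t := by rw [Finset.mul_sum]

/-- The set `T` consists of the concatenations `u v₁ ⋯ v_j` with `v_i ∈ W`, stopped as soon as
`s` is at most `δ`. Strings of equal length generate disjoint subtrees, so the assumed inequality
`hW` propagates from the root `u` to `T`. -/
lemma exists_stopped_rpow_le_sum (hs : IsContractiveWeight s c ρ) (hδ : 0 < δ) (hn : n ≠ 0)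
    (hlen : ∀ v ∈ W, v.length = n) (hW : ∀ u, s u ^ t ≤ ∑ v ∈ W, s (u ++ v) ^ t)
    (hS : ∀ u ∈ S, ∀ v ∈ W, u ++ v ∈ S) {u : List α} (hu : u ∈ S) :
    ∃ T : Finset (List α), (∀ w ∈ T, u <+: w) ∧
      (∀ w ∈ T, s w ≤ δ ∧ (w = u ∨ ∃ p ∈ S, ∃ v ∈ W, δ < s p ∧ w = p ++ v)) ∧
      s u ^ t ≤ ∑ w ∈ T, s w ^ t := by
  obtain ⟨m, hm⟩ := exists_pow_lt_of_lt_one hδ hs.rate_mem.2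
  induction hk : m - u.length using Nat.strong_induction_on generalizing u with
  | _ k ih =>
  subst hk
  by_cases hδu : s u ≤ δ
  · exact ⟨{u}, by simp, by simp [hδu], by simp⟩
  have hum : u.length < m := by
    by_contra! h
    exact hδu ((hs.le_pow u).trans
      ((pow_le_pow_of_le_one hs.rate_mem.1 hs.rate_mem.2.le h).trans hm.le))
  have hsub : ∀ v ∈ W, m - (u ++ v).length < m - u.length := fun v hv => by
    rw [List.length_append, hlen v hv]
    omega
  choose! T hroot hT hsum using fun v (hv : v ∈ W) => ih _ (hsub v hv) (hS u hu v hv) rfl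
  have hdisj : (W : Set (List α)).PairwiseDisjoint T := fun v hv v' hv' hne => by
    refine Finset.disjoint_left.2 fun w hw hw' => hne (List.append_cancel_left (as := u) ?_)
    have hll : (u ++ v).length = (u ++ v').length := by simp [hlen v hv, hlen v' hv']
    exact (List.prefix_of_prefix_length_le (hroot v hv w hw) (hroot v' hv' w hw')
      hll.le).eq_of_length hll
  refine ⟨W.biUnion T, fun w hw => ?_, fun w hw => ?_, ?_⟩
  · obtain ⟨v, hv, hwv⟩ := Finset.mem_biUnion.1 hw
    exact (List.prefix_append u v).trans (hroot v hv w hwv)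
  · obtain ⟨v, hv, hwv⟩ := Finset.mem_biUnion.1 hw
    obtain ⟨hle, rfl | h⟩ := hT v hv w hwv
    exacts [⟨hle, Or.inr ⟨u, hu, v, hv, not_le.1 hδu, rfl⟩⟩, ⟨hle, Or.inr h⟩]
  · rw [Finset.sum_biUnion hdisj]
    exact (hW u).trans (Finset.sum_le_sum hsum)

lemma card_le_ncard_mul_card [Finite α] (hs : IsContractiveWeight s c ρ) (hδ : 0 < δ)
    (hlen : ∀ v ∈ W, v.length = n) {T : Finset (List α)}
    (hT : ∀ w ∈ T, s w ≤ δ ∧ ∃ p ∈ S, ∃ v ∈ W, δ < s p ∧ w = p ++ v) :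
    T.card ≤ (cutSet s δ ∩ shortExtensions S n).ncard *
      (List.finite_length_le α n).toFinset.card := by
  have hD := (hs.cutSet_finite hδ).inter_of_left (shortExtensions S n)
  rw [ncard_eq_toFinset_card _ hD]
  refine (Finset.card_le_card fun w hw => ?_).trans (Finset.card_image₂_le (· ++ ·) _ _)
  obtain ⟨hle, p, hp, v, hv, hpδ, rfl⟩ := hT w hw
  obtain ⟨v₁, v₂, rfl, hcut⟩ := exists_prefix_mem_cutSet hpδ hle
  have hl := hlen _ hv
  rw [List.length_append] at hl
  refine Finset.mem_image₂.2 ⟨p ++ v₁, ?_, v₂, ?_, by simp⟩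
  · exact hD.mem_toFinset.2 ⟨hcut, p, hp, v₁, by omega, rfl⟩
  · exact (Finite.mem_toFinset _).2 (by simp only [mem_ofPred_eq]; omega)

lemma exists_mul_rpow_le_ncard [Finite α] (hs : IsContractiveWeight s c ρ) (hn : n ≠ 0)
    (hlen : ∀ v ∈ W, v.length = n) (hW : ∀ u, s u ^ t ≤ ∑ v ∈ W, s (u ++ v) ^ t)
    (hS₀ : [] ∈ S) (hS : ∀ u ∈ S, ∀ v ∈ W, u ++ v ∈ S) :
    ∃ B > 0, ∀ δ ∈ Ioo 0 (s []),
      B * δ ^ (-t) ≤ (cutSet s δ ∩ shortExtensions S n).ncard := by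
  obtain ⟨K, hK, happ⟩ := hs.exists_le_mul_append n
  let Z := (List.finite_length_le α n).toFinset
  have hZ : 0 < (Z.card : ℝ) := Nat.cast_pos.2 (Finset.card_pos.2 ⟨[], by simp [Z]⟩)
  refine ⟨s [] ^ t / (Z.card * K ^ |t|), div_pos (Real.rpow_pos_of_pos (hs.pos _) t)
    (by positivity), fun δ ⟨hδ, hδnil⟩ => ?_⟩
  obtain ⟨T, -, hT, hsum⟩ := hs.exists_stopped_rpow_le_sum hδ hn hlen hW hS hS₀
  have hT' : ∀ w ∈ T, s w ≤ δ ∧ ∃ p ∈ S, ∃ v ∈ W, δ < s p ∧ w = p ++ v := fun w hw =>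
    ⟨(hT w hw).1, (hT w hw).2.resolve_left fun h => hδnil.not_ge (h ▸ (hT w hw).1)⟩
  have hterm : ∀ w ∈ T, s w ^ t ≤ K ^ |t| * δ ^ t := fun w hw => by
    obtain ⟨hle, p, -, v, hv, hpδ, rfl⟩ := hT' w hw
    exact rpow_le_rpow_abs_mul_rpow hδ (hs.pos _) (hpδ.le.trans (happ p v (hlen v hv).le))
      (hle.trans (le_mul_of_one_le_left hδ.le hK)) t
  rw [Real.rpow_neg hδ.le, ← div_eq_mul_inv, div_div, div_le_iff₀ (by positivity)]
  calc s [] ^ t ≤ T.card * (K ^ |t| * δ ^ t) :=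
        (hsum.trans (Finset.sum_le_card_nsmul _ _ _ hterm)).trans_eq (nsmul_eq_mul _ _)
    _ ≤ ((cutSet s δ ∩ shortExtensions S n).ncard * Z.card : ℝ) * (K ^ |t| * δ ^ t) := by
        gcongr
        exact_mod_cast hs.card_le_ncard_mul_card hδ hlen hT'
    _ = (cutSet s δ ∩ shortExtensions S n).ncard * (Z.card * K ^ |t| * δ ^ t) := by ring

lemma le_lowerCutRate [Finite α] (hs : IsContractiveWeight s c ρ) (htt : t' < t)
    (hS₀ : [] ∈ S) (hS : ∀ u ∈ S, ∀ v ∈ S, u ++ v ∈ S)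
    (hdiv : ¬ Summable fun w : S => s w ^ t)
    (hA : ∀ n, ∀ᶠ w in cofinite, w ∈ shortExtensions S n → w ∈ A) :
    t' ≤ lowerCutRate s A := by
  obtain ⟨n, hn, W, hW, hsum⟩ := hs.exists_length_lt_sum_rpow htt hdiv (c ^ |t'|)
  obtain ⟨B, hB, hcount⟩ := hs.exists_mul_rpow_le_ncard hn (fun v hv => (hW v hv).2)
    (hs.rpow_le_sum_append hsum.le) hS₀ fun u hu v hv => hS u hu v (hW v hv).1
  refine le_liminf_ratioE hB ?_
  filter_upwards [Ioo_mem_nhdsGT (hs.pos []), hs.eventually_forall_le (hA n)] with δ hδ hδA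
  refine (hcount δ hδ).trans (Nat.cast_le.2 (ncard_le_ncard ?_ ?_))
  · exact fun w hw => ⟨hw.1, hδA w hw.1.2.1 hw.2⟩
  · exact (hs.cutSet_finite hδ.1).inter_of_left A

end IsContractiveWeight

end Weight

section Symbolic

variable {N : ℕ} {φ Λ : Seq N → ℝ} {b c cmax : ℝ} {u v w : Word N} {x y : Seq N}

lemma shift_iterate_apply (n k : ℕ) (x : Seq N) : shift^[n] x k = x (k + n) := by
  induction n generalizing x with
  | zero => rfl
  | succ n ih => rw [Function.iterate_succ_apply, ih, shift, add_assoc]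

lemma birkhoff_add (φ : Seq N → ℝ) (m n : ℕ) (x : Seq N) :
    birkhoff φ (m + n) x = birkhoff φ m x + birkhoff φ n (shift^[m] x) :=
  birkhoffSum_add shift φ m n x

lemma birkhoff_le (h : ∀ x, φ x ≤ b) (n : ℕ) (x : Seq N) : birkhoff φ n x ≤ n * b := by
  simpa [birkhoff] using
    Finset.sum_le_card_nsmul (Finset.range n) _ b fun k _ => h (shift^[k] x)

lemma abs_birkhoff_le (h : ∀ x, |φ x| ≤ b) (n : ℕ) (x : Seq N) : |birkhoff φ n x| ≤ n * b :=
  (Finset.abs_sum_le_sum_abs _ _).trans (birkhoff_le (φ := fun x => |φ x|) h n x)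

lemma abs_birkhoff_sub_le {n : ℕ}
    (h : ∀ k < n, |φ (shift^[k] x) - φ (shift^[k] y)| ≤ b) :
    |birkhoff φ n x - birkhoff φ n y| ≤ n * b := by
  refine (dist_birkhoffSum_birkhoffSum_le shift φ n x y).trans ?_
  simpa [Real.dist_eq] using
    Finset.sum_le_card_nsmul (Finset.range n) _ b fun k hk => h k (Finset.mem_range.1 hk)

lemma mem_cylinder_append :
    x ∈ cylinder (u ++ v) ↔ x ∈ cylinder u ∧ shift^[u.length] x ∈ cylinder v := by
  simp only [cylinder, mem_ofPred_eq, shift_iterate_apply, List.get_eq_getElem]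
  refine ⟨fun h => ⟨fun k hk => ?_, fun k hk => ?_⟩, fun ⟨hu, hv⟩ k hk => ?_⟩
  · rw [h k (by simp; omega), List.getElem_append_left hk]
  · rw [h (k + u.length) (by simp; omega), List.getElem_append_right (by omega)]
    simp
  · rw [List.length_append] at hk
    obtain hku | hku := lt_or_ge k u.length
    · rw [hu k hku, List.getElem_append_left hku]
    · rw [List.getElem_append_right hku, ← hv (k - u.length) (by omega), Nat.sub_add_cancel hku]

lemma eq_of_mem_cylinder (hx : x ∈ cylinder w) (hy : y ∈ cylinder w) {k : ℕ}
    (hk : k < w.length) : x k = y k :=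
  (hx k hk).trans (hy k hk).symm

/-- The infinite string `w x`, that is, the finite string `w` followed by `x`. -/
def prepend (w : Word N) (x : Seq N) : Seq N :=
  fun k => w.getD k (x (k - w.length))

lemma prepend_mem_cylinder (w : Word N) (x : Seq N) : prepend w x ∈ cylinder w :=
  fun k hk => by simp [prepend, hk]

lemma shift_iterate_prepend (w : Word N) (x : Seq N) : shift^[w.length] (prepend w x) = x := by
  ext k
  simp [shift_iterate_apply, prepend]

lemma cylinder_nonempty [NeZero N] (w : Word N) : (cylinder w).Nonempty :=
  ⟨prepend w 0, prepend_mem_cylinder _ _⟩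

lemma exp_birkhoff_le_sWord (hΛ : ∀ x, Λ x ≤ cmax) (hx : x ∈ cylinder w) :
    Real.exp (birkhoff Λ w.length x) ≤ sWord Λ w := by
  refine le_csSup ⟨Real.exp (w.length * cmax), ?_⟩ ⟨x, hx, rfl⟩
  rintro _ ⟨y, -, rfl⟩
  exact Real.exp_le_exp.2 (birkhoff_le hΛ _ _)

lemma sWord_le [NeZero N] (h : ∀ x ∈ cylinder w, Real.exp (birkhoff Λ w.length x) ≤ b) :
    sWord Λ w ≤ b := by
  refine csSup_le ((cylinder_nonempty w).image _) ?_
  rintro _ ⟨x, hx, rfl⟩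
  exact h x hx

lemma sWord_pos [NeZero N] (hΛ : ∀ x, Λ x ≤ cmax) (w : Word N) : 0 < sWord Λ w :=
  let ⟨_, hx⟩ := cylinder_nonempty w
  (Real.exp_pos _).trans_le (exp_birkhoff_le_sWord hΛ hx)

lemma sWord_append_le [NeZero N] (hΛ : ∀ x, Λ x ≤ cmax) (u v : Word N) :
    sWord Λ (u ++ v) ≤ sWord Λ u * sWord Λ v := by
  refine sWord_le fun x hx => ?_
  obtain ⟨hu, hv⟩ := mem_cylinder_append.1 hx
  rw [List.length_append, birkhoff_add, Real.exp_add]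
  exact mul_le_mul (exp_birkhoff_le_sWord hΛ hu) (exp_birkhoff_le_sWord hΛ hv)
    (Real.exp_pos _).le (sWord_pos hΛ u).le

lemma BddDistortion.one_le [NeZero N] (h : BddDistortion Λ c) : 1 ≤ c := by
  simpa [birkhoff] using h 0 0 0

lemma BddDistortion.sWord_mul_le [NeZero N] (hdist : BddDistortion Λ c) (hΛ : ∀ x, Λ x ≤ cmax)
    (u v : Word N) : sWord Λ u * sWord Λ v ≤ c * sWord Λ (u ++ v) := by
  have hc : 0 ≤ c := zero_le_one.trans hdist.one_le
  rw [← le_div_iff₀ (sWord_pos hΛ v)]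
  refine sWord_le fun y hy => ?_
  rw [le_div_iff₀ (sWord_pos hΛ v), ← le_div_iff₀' (Real.exp_pos _)]
  refine sWord_le fun x hx => ?_
  rw [le_div_iff₀' (Real.exp_pos _)]
  have hz : prepend u x ∈ cylinder (u ++ v) :=
    mem_cylinder_append.2 ⟨prepend_mem_cylinder u x, by rwa [shift_iterate_prepend]⟩
  calc Real.exp (birkhoff Λ u.length y) * Real.exp (birkhoff Λ v.length x)
      ≤ c * Real.exp (birkhoff Λ u.length (prepend u x)) * Real.exp (birkhoff Λ v.length x) := by
        gcongr
        exact hdist _ _ _ fun k hk => eq_of_mem_cylinder hy (prepend_mem_cylinder u x) hk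
    _ = c * Real.exp (birkhoff Λ (u ++ v).length (prepend u x)) := by
        rw [List.length_append, birkhoff_add, shift_iterate_prepend, Real.exp_add, mul_assoc]
    _ ≤ c * sWord Λ (u ++ v) := by
        gcongr
        exact exp_birkhoff_le_sWord hΛ hz

lemma BddDistortion.isContractiveWeight_sWord [NeZero N] (hdist : BddDistortion Λ c)
    (hΛ : ∀ x, Λ x ≤ cmax) (hcmax : cmax < 0) :
    IsContractiveWeight (sWord Λ) c (Real.exp cmax) where
  pos := sWord_pos hΛ
  append_le u v := (sWord_append_le hΛ u v).trans
    (le_mul_of_one_le_left (mul_pos (sWord_pos hΛ u) (sWord_pos hΛ v)).le hdist.one_le)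
  mul_le := hdist.sWord_mul_le hΛ
  le_pow w := sWord_le fun x _ => by
    rw [← Real.exp_nat_mul]
    exact Real.exp_le_exp.2 (birkhoff_le hΛ _ x)
  rate_mem := ⟨(Real.exp_pos _).le, Real.exp_lt_one_iff.2 hcmax⟩

end Symbolic

section EmpiricalAverages

variable {N : ℕ} {ε ε' : ℝ}

lemma exists_forall_abs_sub_lt {g : Seq N → ℝ} (hg : Continuous g) (hε : 0 < ε) :
    ∃ m : ℕ, ∀ x y : Seq N, (∀ k < m, x k = y k) → |g x - g y| < ε := by
  let _ : MetricSpace (Seq N) := PiNat.metricSpace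
  obtain ⟨η, hη, h⟩ := Metric.uniformContinuous_iff.1
    (CompactSpace.uniformContinuous_of_continuous hg) ε hε
  obtain ⟨m, hm⟩ := exists_pow_lt_of_lt_one hη (one_half_lt_one (α := ℝ))
  refine ⟨m, fun x y hxy => h ?_⟩
  exact (PiNat.mem_cylinder_iff_dist_le.1 (PiNat.mem_cylinder_iff.2 hxy)).trans_lt hm

lemma exists_forall_abs_birkhoff_sub_le (g : Seq N →ᵇ ℝ) (hε : 0 < ε) :
    ∃ b : ℝ, ∀ (n : ℕ) (x y : Seq N), (∀ k < n, x k = y k) →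
      |birkhoff g n x - birkhoff g n y| ≤ ε * n + b := by
  obtain ⟨m, hm⟩ := exists_forall_abs_sub_lt g.continuous hε
  refine ⟨m * (2 * ‖g‖), fun n x y hxy => ?_⟩
  obtain ⟨l, j, rfl, hj, hl⟩ : ∃ l j, n = l + j ∧ j ≤ m ∧ (0 < l → j = m) :=
    ⟨n - m, n - (n - m), by omega⟩
  have hhead : |birkhoff g l x - birkhoff g l y| ≤ l * ε := abs_birkhoff_sub_le fun k hk =>
    (hm _ _ fun i hi => by
      simp only [shift_iterate_apply]
      exact hxy _ (by omega)).le
  have htail : |birkhoff g j (shift^[l] x) - birkhoff g j (shift^[l] y)| ≤ j * (2 * ‖g‖) :=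
    abs_birkhoff_sub_le fun k _ => g.dist_le_two_norm _ _
  calc |birkhoff g (l + j) x - birkhoff g (l + j) y|
      ≤ |birkhoff g l x - birkhoff g l y|
        + |birkhoff g j (shift^[l] x) - birkhoff g j (shift^[l] y)| := by
        rw [birkhoff_add, birkhoff_add, add_sub_add_comm]
        exact abs_add_le _ _
    _ ≤ l * ε + j * (2 * ‖g‖) := add_le_add hhead htail
    _ ≤ (l + j : ℕ) * ε + m * (2 * ‖g‖) := by gcongr; omega
    _ = ε * (l + j : ℕ) + m * (2 * ‖g‖) := by rw [mul_comm ε]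

lemma integral_emp (g : Seq N →ᵇ ℝ) {n : ℕ} (hn : n ≠ 0) (x : Seq N) :
    ∫ y, g y ∂(emp n x).toMeasure = birkhoff g n x / n := by
  have h : (emp n x).toMeasure =
      (n : ℝ≥0∞)⁻¹ • ∑ k ∈ Finset.range n, Measure.dirac (shift^[k] x) :=
    congrArg Subtype.val (dif_neg hn)
  rw [h, integral_smul_measure, integral_finsetSum_measure fun k _ => g.integrable _]
  simp [birkhoff, div_eq_inv_mul]

lemma abs_integral_emp (g : Seq N →ᵇ ℝ) {n : ℕ} (hn : n ≠ 0) (x : Seq N) :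
    |∫ y, g y ∂(emp n x).toMeasure| = |birkhoff g n x| / n := by
  rw [integral_emp g hn, abs_div, Nat.abs_cast]

/-- All Birkhoff averages of `g` along `w` are at most `ε` in absolute value. -/
def HasSmallAverage (g : Seq N → ℝ) (ε : ℝ) (w : Word N) : Prop :=
  ∀ x ∈ cylinder w, |birkhoff g w.length x| ≤ ε * w.length

lemma hasSmallAverage_nil (g : Seq N → ℝ) (ε : ℝ) : HasSmallAverage g ε [] := by
  simp [HasSmallAverage, birkhoff]

lemma HasSmallAverage.append {g : Seq N → ℝ} {u v : Word N} (hu : HasSmallAverage g ε u)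
    (hv : HasSmallAverage g ε v) : HasSmallAverage g ε (u ++ v) := by
  intro x hx
  obtain ⟨hxu, hxv⟩ := mem_cylinder_append.1 hx
  rw [List.length_append, birkhoff_add, Nat.cast_add, mul_add]
  exact (abs_add_le _ _).trans (add_le_add (hu x hxu) (hv _ hxv))

lemma eventually_hasSmallAverage_of_mem_cylinder (g : Seq N →ᵇ ℝ) (hε : ε < ε') :
    ∀ᶠ w in cofinite, ∀ x ∈ cylinder w, |birkhoff g w.length x| ≤ ε * w.length →
      HasSmallAverage g ε' w := by
  obtain ⟨b, hb⟩ := exists_forall_abs_birkhoff_sub_le g (half_pos (sub_pos.2 hε))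
  filter_upwards [eventually_le_mul_length (half_pos (sub_pos.2 hε)) b] with w hw x hx hxε y hy
  have hyx := hb w.length y x fun k hk => eq_of_mem_cylinder hy hx hk
  linarith [abs_sub_abs_le_abs_sub (birkhoff g w.length y) (birkhoff g w.length x)]

lemma eventually_hasSmallAverage_of_mem_shortExtensions (g : Seq N →ᵇ ℝ) (hε₀ : 0 ≤ ε)
    (hε : ε < ε') (n : ℕ) :
    ∀ᶠ w in cofinite, w ∈ shortExtensions {p | HasSmallAverage g ε p} n →
      HasSmallAverage g ε' w := by
  filter_upwards [eventually_le_mul_length (sub_pos.2 hε) (n * ‖g‖)]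
  rintro _ hw ⟨p, hp, v, hv, rfl⟩ x hx
  have hpx := hp x (mem_cylinder_append.1 hx).1
  have hpw : ε * p.length ≤ ε * (p ++ v).length := by
    gcongr
    simp
  have htail : |birkhoff g v.length (shift^[p.length] x)| ≤ n * ‖g‖ :=
    (abs_birkhoff_le g.norm_coe_le_norm _ _).trans (by gcongr)
  have hadd := abs_add_le (birkhoff g p.length x) (birkhoff g v.length (shift^[p.length] x))
  rw [← birkhoff_add, ← List.length_append] at hadd
  linarith

lemma exists_append_closed_of_mapClusterPt {F : Filter (Word N)} (hF : F ≤ cofinite)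
    {μ : ProbabilityMeasure (Seq N)} {x : Word N → Seq N} (hx : ∀ w, x w ∈ cylinder w)
    (hμ : MapClusterPt μ F fun w => emp w.length (x w)) {V : Set (ProbabilityMeasure (Seq N))}
    (hV : V ∈ 𝓝 μ) :
    ∃ S : Set (Word N), [] ∈ S ∧ (∀ u ∈ S, ∀ v ∈ S, u ++ v ∈ S) ∧ (∃ᶠ w in F, w ∈ S) ∧
      ∀ n, ∀ᶠ w in cofinite, w ∈ shortExtensions S n → ∀ y ∈ cylinder w, emp w.length y ∈ V := by
  obtain ⟨G, hG, hGV⟩ := (hasBasis_nhds_probabilityMeasure μ).mem_iff.1 hV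
  have hlength {w : Word N} (hw : w ≠ []) : (0 : ℝ) < w.length :=
    Nat.cast_pos.2 (List.length_pos_iff.2 hw)
  refine ⟨{w | ∀ g ∈ G, HasSmallAverage g.1 (1 / 2) w}, fun g _ => hasSmallAverage_nil _ _,
    fun u hu v hv g hg => (hu g hg).append (hv g hg), ?_, fun n => ?_⟩
  · have hnear : ∀ᶠ ν in 𝓝 μ, ∀ g ∈ G, |∫ y, g.1 y ∂ν.toMeasure| < 1 / 4 :=
      (eventually_all_finite hG).2 fun g _ => eventually_abs_integral_lt g.2 (by norm_num)
    have hspread := (eventually_all_finite hG).2 fun g _ =>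
      eventually_hasSmallAverage_of_mem_cylinder g.1 (show (1 / 4 : ℝ) < 1 / 2 by norm_num)
    refine ((mapClusterPt_iff_frequently.1 hμ _ hnear).and_eventually
      (hF (hspread.and (eventually_cofinite_ne [])))).mono fun w ⟨hw, hs, hne⟩ g hg => ?_
    refine hs g hg (x w) (hx w) ?_
    have := (hw g hg).le
    rwa [abs_integral_emp _ (by simpa using hne), div_le_iff₀ (hlength hne)] at this
  · have hext := (eventually_all_finite hG).2 fun g _ =>
      eventually_hasSmallAverage_of_mem_shortExtensions g.1 (by norm_num)
        (show (1 / 2 : ℝ) < 3 / 4 by norm_num) n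
    filter_upwards [hext, eventually_cofinite_ne []] with w hw hne hwS y hy
    refine hGV fun g hg => ?_
    have hsub : {p | ∀ g ∈ G, HasSmallAverage g.1 (1 / 2) p} ⊆
        {p | HasSmallAverage g.1 (1 / 2) p} := fun p hp => hp g hg
    have := hw g hg (shortExtensions_mono hsub hwS) y hy
    rw [abs_integral_emp _ (by simpa using hne), div_lt_one (hlength hne)]
    linarith [hlength hne]

end EmpiricalAverages

section Target

variable {N : ℕ} {X : Type*} {Λ : Seq N → ℝ} {U : ProbabilityMeasure (Seq N) → X}
  {C : Set X} {cmax c r t t' : ℝ}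

/-- The nonempty strings `w` with `U(L_{|w|}[w]) ⊆ B`, over which the zeta-function of `B` is
summed. -/
def targetWords (U : ProbabilityMeasure (Seq N) → X) (B : Set X) : Set (Word N) :=
  {w | w ≠ [] ∧ inTarget U B w}

lemma targetWords_mono (U : ProbabilityMeasure (Seq N) → X) : Monotone (targetWords U) :=
  fun _ _ h _ hw => ⟨hw.1, fun x hx => h (hw.2 x hx)⟩

lemma sigmaAbs_le (h : Summable fun w : targetWords U C => sWord Λ w ^ t) :
    sigmaAbs (sWord Λ) (inTarget U C) ≤ t :=
  sInf_le (mem_image_of_mem _ h)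

lemma monotone_sigmaAbs (Λ : Seq N → ℝ) (U : ProbabilityMeasure (Seq N) → X) :
    Monotone fun B => sigmaAbs (sWord Λ) (inTarget U B) := by
  refine fun B B' h => sInf_le_sInf (image_mono fun t ht => ?_)
  exact summable_subtype_mono (f := fun w => sWord Λ w ^ t) (B := targetWords U B') ht
    (targetWords_mono U h)

variable [MetricSpace X]

lemma monotone_cball (C : Set X) : Monotone (cball C) :=
  fun _ _ h _ hx => le_trans hx h

lemma coarseLowerR_eq_lowerCutRate (Λ : Seq N → ℝ) (U : ProbabilityMeasure (Seq N) → X)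
    (C : Set X) (r : ℝ) :
    coarseLowerR Λ U C r = lowerCutRate (sWord Λ) (targetWords U (cball C r)) := by
  simp only [coarseLowerR, lowerCutRate, Ncount, cutSet, targetWords]
  congr! 5 with δ
  ext w
  simp only [mem_ofPred_eq, mem_inter_iff]
  tauto

lemma coarseLowerR_le_sigmaAbs [NeZero N] (hcmax : cmax < 0) (hΛ : ∀ x, Λ x ≤ cmax)
    (hdist : BddDistortion Λ c) (U : ProbabilityMeasure (Seq N) → X) (C : Set X) (r : ℝ) :
    coarseLowerR Λ U C r ≤ sigmaAbs (sWord Λ) (inTarget U (cball C r)) := by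
  refine le_sInf ?_
  rintro _ ⟨t, ht, rfl⟩
  rw [coarseLowerR_eq_lowerCutRate]
  exact (hdist.isContractiveWeight_sWord hΛ hcmax).lowerCutRate_le ht

lemma le_coarseLowerR [NeZero N] (hcmax : cmax < 0) (hΛ : ∀ x, Λ x ≤ cmax)
    (hdist : BddDistortion Λ c) (hU : Continuous U) (htt : t' < t)
    (hdiv : ∀ r > 0, ¬ Summable fun w : targetWords U (cball C r) => sWord Λ w ^ t)
    (hr : 0 < r) : t' ≤ coarseLowerR Λ U C r := by
  choose x hx using cylinder_nonempty (N := N)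
  have hcont : Continuous fun ν => infDist (U ν) C := (continuous_infDist_pt C).comp hU
  obtain ⟨μ, hμC, hμ⟩ := exists_mapClusterPt_nonpos_of_frequently
    (F := divergenceFilter fun w => sWord Λ w ^ t) (e := fun w => emp w.length (x w)) hcont
    fun r hr => (frequently_divergenceFilter.2 (hdiv r hr)).mono fun w hw => hw.2 _ (hx w)
  obtain ⟨S, hnil, happ, hfreq, hext⟩ := exists_append_closed_of_mapClusterPt
    (divergenceFilter_le_cofinite _) hx hμ
    (hcont.continuousAt.eventually_lt_const (hμC.trans_lt hr))
  rw [coarseLowerR_eq_lowerCutRate]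
  refine (hdist.isContractiveWeight_sWord hΛ hcmax).le_lowerCutRate htt hnil happ
    (frequently_divergenceFilter.1 hfreq) fun n => ?_
  filter_upwards [hext n, eventually_cofinite_ne []] with w hw hne hwS
  exact ⟨hne, fun y hy => (hw hwS y hy).le⟩

end Target

theorem shrinking_targets_coarse_general
    {N : ℕ} [NeZero N] {X : Type*} [MetricSpace X] {Λ : Seq N → ℝ} {cmax c : ℝ} (hcmax : cmax < 0)
    (hΛ : ∀ x, Λ x ≤ cmax) (hdist : BddDistortion Λ c) {U : ProbabilityMeasure (Seq N) → X}
    (hU : Continuous U) (C : Set X) :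
    Tendsto (fun r : ℝ => sigmaAbs (sWord Λ) (inTarget U (cball C r))) (𝓝[>] 0)
      (𝓝 (coarseLower Λ U C)) := by
  have hmono : Monotone fun r : ℝ => sigmaAbs (sWord Λ) (inTarget U (cball C r)) :=
    (monotone_sigmaAbs Λ U).comp (monotone_cball C)
  convert hmono.tendsto_nhdsGT 0 using 2
  refine le_antisymm (le_sInf ?_) (le_iInf₂ fun r hr => ?_)
  · rintro _ ⟨r, hr, rfl⟩
    exact (iInf₂_le r hr).trans (coarseLowerR_le_sigmaAbs hcmax hΛ hdist U C r)
  · refine EReal.ge_of_forall_gt_iff_ge.1 fun t' ht' => ?_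
    obtain ⟨t, htt, ht⟩ := EReal.lt_iff_exists_real_btwn.1 ht'
    refine le_coarseLowerR hcmax hΛ hdist hU (EReal.coe_lt_coe_iff.1 htt) (fun r' hr' hsum => ?_) hr
    exact ht.not_ge ((sInf_le (mem_image_of_mem _ hr')).trans (sigmaAbs_le hsum))

/-- **Theorem 2.1(1)** (shrinking targets, coarse-spectrum form).
The abscissa of convergence of `ζ_C^{U,Λ}(·;r)` converges, as `r ↘ 0`, to the lower coarse
multifractal spectrum `f̲^{U,Λ}(C)`. -/
theorem shrinking_targets_coarse
    {N : ℕ} (hN : 0 < N) {X : Type*} [MetricSpace X]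
    (Λ : Seq N → ℝ) (hΛcont : Continuous Λ)
    (cmin cmax : ℝ) (hcmax : cmax < 0) (hccmin : cmin ≤ cmax)
    (hΛbdd : ∀ x, Λ x ∈ Set.Icc cmin cmax)
    (c : ℝ) (hc : 1 ≤ c) (hdist : BddDistortion Λ c)
    (U : ProbabilityMeasure (Seq N) → X) (hU : Continuous U)
    (C : Set X) (hC : IsClosed C) :
    Filter.Tendsto (fun r : ℝ => sigmaAbs (sWord Λ) (inTarget U (cball C r)))
      (nhdsWithin 0 (Set.Ioi 0)) (nhds (coarseLower Λ U C)) := by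
  have : NeZero N := ⟨hN.ne'⟩
  exact shrinking_targets_coarse_general hcmax (fun x => (hΛbdd x).2) hdist hU C

end Multifractal
end
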